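/- arXiv:2605.22553 — 3 statements merged into one kernel-verified Lean document; each statement's English description precedes it below -/
import Mathlib

section
/- (Kühn–Osthus–Treglown.) For every graph H containing at least one edge and every η > 0, there exists an integer n₀ = n₀(H, η) such that if G is a graph on n ≥ n₀ vertices and d(x) + d(y) ≥ 2(1 − 1/χ_cr(H))·n for all distinct nonadjacent x, y ∈ V(G), then G has an H-tiling covering all but at most ηn vertices. -/
/-- `𝒯` is an `H`-tiling in `G`: a collection of pairwise vertex-disjoint
subgraphs of `G`, each isomorphic to `H`. -/
def IsTiling {W V : Type*} (H : SimpleGraph W) (G : SimpleGraph V)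
    (𝒯 : Finset (W → V)) : Prop :=
  (∀ f ∈ 𝒯, Function.Injective f ∧ ∀ a b : W, H.Adj a b → G.Adj (f a) (f b)) ∧
  ((𝒯 : Set (W → V)).Pairwise fun f g => Disjoint (Set.range f) (Set.range g))

/-- The set of vertices of `G` not covered by the tiling `𝒯`. -/
def untiled {W V : Type*} (𝒯 : Finset (W → V)) : Set V :=
  {v : V | ∀ f ∈ 𝒯, v ∉ Set.range f}

/-- `σ` is the minimum possible size of a colour class in a proper colouring
of `H` with `k` colours. -/
def IsMinColorClassSize {W : Type*} [Fintype W] (H : SimpleGraph W) (k σ : ℕ) : Prop :=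
  (∃ (c : H.Coloring (Fin k)) (i : Fin k),
      (Finset.univ.filter fun v => c v = i).card = σ) ∧
  ∀ (c : H.Coloring (Fin k)) (i : Fin k),
      σ ≤ (Finset.univ.filter fun v => c v = i).card

/-- Greedy clique. -/
lemma kot_greedy {ι : Type*} [DecidableEq ι] (R : SimpleGraph ι) [DecidableRel R.Adj] (E : ℝ)
    (hE : 0 ≤ E) (q : ℕ) : ∀ X : Finset ι, (∀ x ∈ X, ((X.filter fun z => ¬ R.Adj x z).card : ℝ) ≤ E) →
      (q : ℝ) * E < X.card → ∃ K ⊆ X, K.card = q + 1 ∧ R.IsClique (K : Set ι) := by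
  induction q with
  | zero =>
    intro X _ hc
    have : 0 < X.card := by
      have : (0:ℝ) < X.card := by simpa using hc
      exact_mod_cast this
    obtain ⟨x, hx⟩ := Finset.card_pos.mp this
    exact ⟨{x}, by simpa using hx, by simp, by simp⟩
  | succ q ih =>
    intro X hX hc
    have hpos : 0 < X.card := by
      have h0 : 0 ≤ ((q + 1 : ℕ) : ℝ) * E := by positivity
      have : (0:ℝ) < X.card := by linarith
      exact_mod_cast this
    obtain ⟨x, hx⟩ := Finset.card_pos.mp hpos
    have hs : (X.filter fun z => R.Adj x z).card + (X.filter fun z => ¬ R.Adj x z).card = X.card :=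
      Finset.card_filter_add_card_filter_not _
    have hsR : ((X.filter fun z => R.Adj x z).card : ℝ) + ((X.filter fun z => ¬ R.Adj x z).card : ℝ) = X.card := by
      exact_mod_cast hs
    obtain ⟨K, hK, hKc, hKq⟩ := ih (X.filter fun z => R.Adj x z) (by
      intro z hz
      refine le_trans ?_ (hX z (Finset.mem_filter.mp hz).1)
      exact_mod_cast Finset.card_le_card (Finset.filter_subset_filter _ (Finset.filter_subset _ _)))
      (by have := hX x hx; push_cast at hc; linarith)
    have hxK : x ∉ K := fun h => by simpa using (Finset.mem_filter.mp (hK h)).2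
    refine ⟨insert x K, ?_, by rw [Finset.card_insert_of_notMem hxK, hKc], ?_⟩
    · intro z hz
      rcases Finset.mem_insert.mp hz with rfl | hz
      · exact hx
      · exact (Finset.mem_filter.mp (hK hz)).1
    · rw [Finset.coe_insert]
      exact hKq.insert fun z hz _ => (Finset.mem_filter.mp (hK hz)).2

lemma kot_dual (α : ℝ) (h0 : 0 < α) (r : ℕ) : ∃ A : ℝ, 0 ≤ A ∧
    ∀ {ι : Type} [DecidableEq ι] (R : SimpleGraph ι) [DecidableRel R.Adj] (L : Finset ι)
      (y : ι → ℝ) (_ : ∀ i, 0 ≤ y i) (D : ℕ) (E : ℝ) (_ : 0 ≤ E)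
      (S : Finset ι) (e c : ℝ) (_ : 0 ≤ e) (_ : 0 ≤ c)
      (_ : ∀ x ∈ S, x ∉ L → (S.filter fun z => ¬ R.Adj x z).card ≤ D)
      (_ : ∀ x ∈ S, x ∈ L → ((S.filter fun z => z ∈ L ∧ ¬ R.Adj x z).card : ℝ) ≤ E)
      (_ : ((r : ℝ) + α) * D - e ≤ S.card)
      (_ : ∀ K ⊆ S, ∀ u ∈ S, R.IsClique (K : Set ι) → K.card = r → (∀ z ∈ K, R.Adj u z) →
        c ≤ ∑ z ∈ K, y z + α * y u),
      c * (D - A * (e + E)) ≤ ∑ z ∈ S, y z := by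
  induction r with
  | zero =>
    refine ⟨1 / α, by positivity, ?_⟩
    intro ι _ R _ L y hy D E hE S e c he hc h1 h2 hS hK
    have h3 : ∀ u ∈ S, c ≤ α * y u := by
      intro u hu
      simpa using hK ∅ (by simp) u hu (by simp) (by simp) (by simp)
    have h4 : (S.card : ℝ) * (c / α) ≤ ∑ z ∈ S, y z := by
      rw [← nsmul_eq_mul]
      refine Finset.card_nsmul_le_sum _ _ _ fun u hu => ?_
      rw [div_le_iff₀ h0]
      linarith [h3 u hu]
    have h5 : (α * D - e) * (c / α) ≤ S.card * (c / α) := by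
      apply mul_le_mul_of_nonneg_right _ (by positivity)
      simpa using hS
    have h6 : (α * D - e) * (c / α) = c * (D - 1 / α * e) := by field_simp
    have h7 : c * (D - 1 / α * (e + E)) ≤ c * (D - 1 / α * e) := by
      apply mul_le_mul_of_nonneg_left _ hc
      have : 0 ≤ 1 / α * E := by positivity
      linarith
    linarith
  | succ r ih =>
    obtain ⟨A, hA, ih⟩ := ih
    refine ⟨(1 + A) * (r + 2), by positivity, ?_⟩
    intro ι _ R _ L y hy D E hE S e c he hc h1 h2 hS hK
    push_cast at hS
    set χ : ℝ := (r : ℝ) + 1 + α with hχ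
    have hr0 : (0:ℝ) ≤ r := Nat.cast_nonneg r
    have hχ1 : 1 ≤ χ := by linarith
    have hχ0 : 0 < χ := by linarith
    rcases hc.eq_or_lt with hc0 | hcpos
    · rw [← hc0, zero_mul]
      exact Finset.sum_nonneg fun i _ => hy i
    set X := S.filter fun z => z ∈ L ∧ y z < c / χ with hX
    have hXc : (X.card : ℝ) ≤ ((r : ℝ) + 1) * E := by
      by_contra hcon
      push Not at hcon
      obtain ⟨K', hK', hKc, hKq⟩ := kot_greedy R E hE (r + 1) X (by
        intro x hx
        obtain ⟨hxS, hxL, -⟩ := Finset.mem_filter.mp hx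
        refine le_trans ?_ (h2 x hxS hxL)
        have : (X.filter fun z => ¬ R.Adj x z) ⊆ (S.filter fun z => z ∈ L ∧ ¬ R.Adj x z) := by
          intro z hz
          simp only [hX, Finset.mem_filter] at hz ⊢
          tauto
        exact_mod_cast Finset.card_le_card this) (by push_cast; exact hcon)
      obtain ⟨u, hu⟩ := Finset.card_pos.mp (by omega : 0 < K'.card)
      have hlt : ∀ z ∈ K', y z < c / χ := fun z hz => (Finset.mem_filter.mp (hK' hz)).2.2
      have hS' : ∀ z ∈ K', z ∈ S := fun z hz => (Finset.mem_filter.mp (hK' hz)).1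
      have hcard : (K'.erase u).card = r + 1 := by rw [Finset.card_erase_of_mem hu]; omega
      have := hK (K'.erase u) (fun z hz => hS' z (Finset.mem_of_mem_erase hz)) u (hS' u hu)
        (hKq.subset (by simp))
        hcard
        (fun z hz => hKq hu (Finset.mem_of_mem_erase hz) (Finset.ne_of_mem_erase hz).symm)
      have h5 : ∑ z ∈ K'.erase u, y z < (r + 1 : ℕ) * (c / χ) := by
        rw [← hcard, ← nsmul_eq_mul, ← Finset.sum_const]
        exact Finset.sum_lt_sum_of_nonempty (Finset.card_pos.mp (by omega))
          fun z hz => hlt z (Finset.mem_of_mem_erase hz)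
      have h6 : α * y u ≤ α * (c / χ) := mul_le_mul_of_nonneg_left (hlt u hu).le h0.le
      have h7 : ((r + 1 : ℕ) : ℝ) * (c / χ) + α * (c / χ) = c := by
        push_cast
        rw [← add_mul, ← hχ]
        field_simp
      linarith
    set S' := S \ X with hS'
    have hS'S : S' ⊆ S := Finset.sdiff_subset
    have hS'c : χ * D - (e + (r + 1) * E) ≤ S'.card := by
      have : S'.card + X.card = S.card := Finset.card_sdiff_add_card_eq_card (Finset.filter_subset _ _)
      have : (S'.card : ℝ) + X.card = S.card := by exact_mod_cast this
      linarith
    have hsum : ∑ z ∈ S', y z ≤ ∑ z ∈ S, y z :=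
      Finset.sum_le_sum_of_subset_of_nonneg hS'S fun i _ _ => hy i
    refine le_trans ?_ hsum
    set e1 : ℝ := e + (r + 1) * E with he1
    have he10 : 0 ≤ e1 := by positivity
    have he1E : e1 + E ≤ (r + 2) * (e + E) := by
      rw [he1]
      nlinarith [mul_nonneg hr0 he]
    have he1E' : (1 + A) * (e1 + E) ≤ (1 + A) * (r + 2) * (e + E) := by
      rw [mul_assoc]
      exact mul_le_mul_of_nonneg_left he1E (by linarith)
    by_cases hall : ∀ x ∈ S', c / χ ≤ y x
    · have h4 : (S'.card : ℝ) * (c / χ) ≤ ∑ z ∈ S', y z := by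
        rw [← nsmul_eq_mul]
        exact Finset.card_nsmul_le_sum _ _ _ hall
      have h5 : (χ * D - e1) * (c / χ) ≤ S'.card * (c / χ) :=
        mul_le_mul_of_nonneg_right hS'c (by positivity)
      have h6 : (χ * D - e1) * (c / χ) = c * (D - e1 / χ) := by field_simp
      have h7 : e1 / χ ≤ e1 := div_le_self he10 hχ1
      have h8 : c * (D - (1 + A) * (r + 2) * (e + E)) ≤ c * (D - e1 / χ) := by
        apply mul_le_mul_of_nonneg_left _ hc
        nlinarith [mul_nonneg hA (add_nonneg he10 hE)]
      linarith
    · push Not at hall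
      obtain ⟨x0, hx0, hx0y⟩ := hall
      obtain ⟨v, hv, hmin⟩ := Finset.exists_min_image S' y ⟨x0, hx0⟩
      have hvy : y v < c / χ := (hmin x0 hx0).trans_lt hx0y
      have hvS : v ∈ S := hS'S hv
      have hvL : v ∉ L := by
        intro hL
        exact (Finset.mem_sdiff.mp hv).2 (Finset.mem_filter.mpr ⟨hvS, hL, hvy⟩)
      have hvc : y v ≤ c := hvy.le.trans (div_le_self hc hχ1)
      have hNc : S'.card - D ≤ (S'.filter fun z => R.Adj v z).card := by
        have a1 : (S'.filter fun z => R.Adj v z).card + (S'.filter fun z => ¬ R.Adj v z).card = S'.card :=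
          Finset.card_filter_add_card_filter_not _
        have a2 := h1 v hvS hvL
        have a3 : (S'.filter fun z => ¬ R.Adj v z).card ≤ (S.filter fun z => ¬ R.Adj v z).card :=
          Finset.card_le_card (Finset.filter_subset_filter _ hS'S)
        omega
      obtain ⟨N, hN, hNcard⟩ := Finset.exists_subset_card_eq hNc
      have hNS' : N ⊆ S' := hN.trans (Finset.filter_subset _ _)
      have hNS : N ⊆ S := hNS'.trans hS'S
      have hadj : ∀ z ∈ N, R.Adj v z := fun z hz => (Finset.mem_filter.mp (hN hz)).2
      have key := ih R L y hy D E hE N e1 (c - y v) he10 (by linarith)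
        (by
          intro x hx hxL
          exact (Finset.card_le_card (Finset.filter_subset_filter _ hNS)).trans (h1 x (hNS hx) hxL))
        (by
          intro x hx hxL
          refine le_trans ?_ (h2 x (hNS hx) hxL)
          exact_mod_cast Finset.card_le_card (Finset.filter_subset_filter _ hNS))
        (by
          have : (S'.card : ℝ) ≤ N.card + D := by
            rw [hNcard]; norm_cast; omega
          have : χ * D = (r + α) * D + D := by rw [hχ]; ring
          linarith)
        (by
          intro K hKN u hu hKq hKc hKa
          have hvK : v ∉ K := fun h => by simpa using hadj v (hKN h)
          have := hK (insert v K) (Finset.insert_subset hvS (hKN.trans hNS)) u (hNS hu)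
            (by
              rw [Finset.coe_insert]
              exact hKq.insert fun z hz _ => hadj z (hKN hz))
            (by rw [Finset.card_insert_of_notMem hvK, hKc])
            (by
              intro z hz
              rcases Finset.mem_insert.mp hz with rfl | hz
              · exact (hadj u hu).symm
              · exact hKa z hz)
          rw [Finset.sum_insert hvK] at this
          linarith)
      have hrest : ((D : ℝ) - e1) * y v ≤ ∑ z ∈ S' \ N, y z := by
        have b1 : ((S' \ N).card : ℝ) * y v ≤ ∑ z ∈ S' \ N, y z := by
          rw [← nsmul_eq_mul]
          exact Finset.card_nsmul_le_sum _ _ _ fun z hz => hmin z (Finset.mem_sdiff.mp hz).1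
        have b2 : (S' \ N).card + N.card = S'.card := Finset.card_sdiff_add_card_eq_card hNS'
        have b3 : (D : ℝ) - e1 ≤ (S' \ N).card := by
          rcases le_total D S'.card with hD | hD
          · have : (S' \ N).card = D := by omega
            rw [this]; linarith
          · have : (S' \ N).card = S'.card := by omega
            rw [this]
            have : (1:ℝ) * D ≤ χ * D := mul_le_mul_of_nonneg_right hχ1 (Nat.cast_nonneg D)
            linarith
        exact (mul_le_mul_of_nonneg_right b3 (hy v)).trans b1
      have hsplit : ∑ z ∈ S' \ N, y z + ∑ z ∈ N, y z = ∑ z ∈ S', y z := Finset.sum_sdiff hNS'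
      have hfin : c * (D - (1 + A) * (r + 2) * (e + E)) ≤
          ((D : ℝ) - e1) * y v + (c - y v) * (D - A * (e1 + E)) := by
        have c1 : c * ((1 + A) * (e1 + E)) ≤ c * ((1 + A) * (r + 2) * (e + E)) :=
          mul_le_mul_of_nonneg_left he1E' hc
        have c2 : e1 * y v ≤ e1 * c := mul_le_mul_of_nonneg_left hvc he10
        have c3 : 0 ≤ c * E := by positivity
        have c4 : 0 ≤ y v * (A * (e1 + E)) :=
          mul_nonneg (hy v) (mul_nonneg hA (add_nonneg he10 hE))
        nlinarith
      linarith

/-- Finite LP duality, from the separation theorem. -/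
lemma kot_lp {ι Ψ : Type*} [Fintype ι] [Fintype Ψ] (T : Ψ → ι → ℝ) (t : ℝ) (ht : 0 ≤ t)
    (hdual : ∀ (y : ι → ℝ) (c : ℝ), (∀ i, 0 ≤ y i) → 0 ≤ c →
      (∀ ψ, c ≤ ∑ i, y i * T ψ i) → c ≤ t * ∑ i, y i) :
    ∃ lam : Ψ → ℝ, (∀ ψ, 0 ≤ lam ψ) ∧ ∑ ψ, lam ψ = 1 ∧ ∀ i, ∑ ψ, lam ψ * T ψ i ≤ t := by
  classical
  by_contra hcon
  push Not at hcon
  let F : (Ψ → ℝ) →ₗ[ℝ] (ι → ℝ) := Fintype.linearCombination ℝ T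
  have hF : ∀ l i, F l i = ∑ ψ, l ψ * T ψ i := by
    intro l i
    simp [F, Fintype.linearCombination_apply]
  have hFc : Continuous F := LinearMap.continuous_on_pi F
  have hdisj : Disjoint (F '' stdSimplex ℝ Ψ) {q : ι → ℝ | ∀ i, q i ≤ t} := by
    rw [Set.disjoint_left]
    rintro _ ⟨l, hl, rfl⟩ hq
    obtain ⟨i, hi⟩ := hcon l hl.1 hl.2
    have := hq i
    rw [hF] at this
    linarith
  have hcl : IsClosed {q : ι → ℝ | ∀ i, q i ≤ t} := by
    rw [Set.ofPred_forall]
    exact isClosed_iInter fun i => isClosed_le (continuous_apply i) continuous_const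
  have hcv : Convex ℝ {q : ι → ℝ | ∀ i, q i ≤ t} := by
    have : {q : ι → ℝ | ∀ i, q i ≤ t} = Set.Iic (fun _ => t) := by
      ext q; simp [Pi.le_def]
    rw [this]; exact convex_Iic _
  obtain ⟨f, u, v, h1, h2, h3⟩ := geometric_hahn_banach_compact_closed
    ((convex_stdSimplex ℝ Ψ).linear_image F) ((isCompact_stdSimplex ℝ Ψ).image hFc) hcv hcl hdisj
  let y : ι → ℝ := fun i => - f (Pi.single i 1)
  have hf : ∀ q : ι → ℝ, f q = - ∑ i, y i * q i := by
    intro q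
    have : q = ∑ i, q i • (Pi.single i (1:ℝ) : ι → ℝ) := by
      ext j
      simp [Finset.sum_apply, Pi.single_apply]
    conv_lhs => rw [this]
    rw [map_sum, ← Finset.sum_neg_distrib]
    refine Finset.sum_congr rfl fun i _ => ?_
    rw [map_smul, smul_eq_mul]
    simp only [y]; ring
  have hy : ∀ i, 0 ≤ y i := by
    intro i
    by_contra hneg
    push Not at hneg
    -- q = s * e_i with s very negative
    set s : ℝ := min 0 (v / (- y i)) with hs
    have hs0 : s ≤ 0 := min_le_left _ _
    have := h3 (Pi.single i s) (by
      intro j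
      by_cases hj : j = i
      · subst hj; simp; linarith
      · simp [hj, ht])
    rw [hf] at this
    have h4 : ∑ j, y j * (Pi.single i s : ι → ℝ) j = y i * s := by
      rw [Finset.sum_eq_single i]
      · simp
      · intro j _ hj; simp [hj]
      · simp
    rw [h4] at this
    have h5 : s ≤ v / (- y i) := min_le_right _ _
    rw [le_div_iff₀ (by linarith)] at h5
    linarith
  have h4 := h3 (fun _ => t) (fun _ => le_rfl)
  rw [hf, ← Finset.sum_mul] at h4
  have h5 : 0 ≤ (∑ i, y i) * t := mul_nonneg (Finset.sum_nonneg fun i _ => hy i) ht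
  have h6 := hdual y (-u) hy (by linarith) (by
    intro ψ
    have := h1 (F (Pi.single ψ 1)) ⟨_, single_mem_stdSimplex ℝ ψ, rfl⟩
    rw [hf] at this
    have h7 : ∀ i, F (Pi.single ψ 1) i = T ψ i := by
      intro i; rw [hF, Finset.sum_eq_single ψ]
      · simp
      · intro j _ hj; simp [hj]
      · simp
    simp only [h7] at this
    linarith)
  linarith

/-- Averaging over cyclic shifts of the colour classes. -/
lemma kot_shift {W ι : Type*} [Fintype W] (H : SimpleGraph W) (R : SimpleGraph ι) (r : ℕ)
    (hr : 0 < r) (g : W → Option (Fin r)) (hg : ∀ a b, H.Adj a b → g a ≠ g b) (σ : ℕ)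
    (hσ : (Finset.univ.filter fun w => g w = none).card = σ) (y : ι → ℝ) (c : ℝ)
    (hc : ∀ ψ : H →g R, c ≤ ∑ w, y (ψ w)) (K : Finset ι) (u : ι)
    (hK : R.IsClique (K : Set ι)) (hKr : K.card = r) (hu : ∀ z ∈ K, R.Adj u z) :
    r * c ≤ ((Fintype.card W : ℝ) - σ) * ∑ z ∈ K, y z + r * σ * y u := by
  classical
  have : NeZero r := ⟨hr.ne'⟩
  let κ : Fin r ≃ K := (Fintype.equivFinOfCardEq (by simpa using hKr)).symm
  let p : Fin r → W → ι := fun s w => (g w).elim u fun j => (κ (j + s) : ι)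
  have hp : ∀ s a b, H.Adj a b → R.Adj (p s a) (p s b) := by
    intro s a b hab
    have hne := hg a b hab
    simp only [p]
    rcases ha : g a with _ | i <;> rcases hb : g b with _ | j
    · exact absurd (ha.trans hb.symm) hne
    · exact hu _ (κ _).2
    · exact (hu _ (κ _).2).symm
    · refine hK (κ _).2 (κ _).2 ?_
      intro heq
      have := κ.injective (Subtype.ext heq)
      have hij : i = j := add_right_cancel this
      exact hne (by rw [ha, hb, hij])
  have h1 : ∀ s, c ≤ ∑ w, y (p s w) := fun s => hc ⟨p s, fun {a b} h => hp s a b h⟩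
  have h2 : (r : ℝ) * c ≤ ∑ s : Fin r, ∑ w, y (p s w) := by
    have := Finset.card_nsmul_le_sum Finset.univ (fun s : Fin r => ∑ w, y (p s w)) c
      fun s _ => h1 s
    simpa using this
  refine h2.trans (le_of_eq ?_)
  rw [Finset.sum_comm]
  have h3 : ∀ w, ∑ s : Fin r, y (p s w) = if g w = none then r * y u else ∑ z ∈ K, y z := by
    intro w
    simp only [p]
    rcases hw : g w with _ | j
    · simp
    · simp only [Option.elim_some, reduceCtorEq, if_false]
      rw [← Finset.sum_coe_sort K y, ← Equiv.sum_comp κ]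
      exact Equiv.sum_comp (Equiv.addLeft j) (fun i => y (κ i))
  rw [Finset.sum_congr rfl fun w _ => h3 w, Finset.sum_ite, Finset.sum_const, Finset.sum_const, hσ]
  have h4 : (Finset.univ.filter fun w => g w = none).card +
      (Finset.univ.filter fun w => ¬ g w = none).card = Fintype.card W := by
    rw [Finset.card_filter_add_card_filter_not]; rfl
  have h5 : ((Finset.univ.filter fun w => ¬ g w = none).card : ℝ) = Fintype.card W - σ := by
    rw [← h4, hσ]; push_cast; ring
  rw [nsmul_eq_mul, nsmul_eq_mul, h5]
  ring

/-- Few vertices have few neighbours in a large subset of the other side of a regular pair. -/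
lemma kot_bad {V : Type*} [DecidableEq V] (G : SimpleGraph V) [DecidableRel G.Adj]
    (ε d τ : ℝ) (hτ : τ + ε ≤ d) (A B : Finset V) (hU : G.IsUniform ε A B)
    (hd : d ≤ G.edgeDensity A B) (C C' : Finset V) (hC : C ⊆ A) (hC' : C' ⊆ B)
    (hB0 : 0 < C'.card) (hA0 : 0 < A.card)
    (hcard : (B.card : ℝ) * ε ≤ C'.card) :
    ((C.filter fun x => ((C'.filter fun z => G.Adj x z).card : ℝ) < τ * C'.card).card : ℝ)
      < A.card * ε := by
  by_contra hcon
  push Not at hcon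
  set X := C.filter fun x => ((C'.filter fun z => G.Adj x z).card : ℝ) < τ * C'.card with hX
  have hXA : X ⊆ A := (Finset.filter_subset _ _).trans hC
  have hε := hU.pos
  have hX0 : (0 : ℝ) < X.card := lt_of_lt_of_le (by positivity) hcon
  have h1 := hU hXA hC' hcon hcard
  have h2 : ((G.interedges X C').card : ℝ) ≤ X.card * (τ * C'.card) := by
    have h3 : (G.interedges X C').card = ∑ x ∈ X, (C'.filter fun z => G.Adj x z).card := by
      rw [SimpleGraph.interedges_def, Finset.card_filter, Finset.sum_product]
      exact Finset.sum_congr rfl fun x _ => (Finset.card_filter _ _).symm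
    rw [h3]
    push_cast
    rw [← nsmul_eq_mul]
    exact Finset.sum_le_card_nsmul _ _ _ fun x hx => (Finset.mem_filter.mp hx).2.le
  have h4 : (G.edgeDensity X C' : ℝ) ≤ τ := by
    rw [SimpleGraph.edgeDensity_def]
    push_cast
    have : (0:ℝ) < C'.card := by exact_mod_cast hB0
    rw [div_le_iff₀ (by positivity)]
    linarith
  have := (abs_lt.mp h1).1
  linarith

/-- Greedy embedding of `H` into regular clusters. -/
lemma kot_embed_aux {V W : Type*} [DecidableEq V] [Fintype W] [DecidableEq W]
    (G : SimpleGraph V) [DecidableRel G.Adj] (H : SimpleGraph W) [DecidableRel H.Adj]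
    (P : W → Finset V)
    (ε d τ μ : ℝ) (hτ0 : 0 < τ) (hτ1 : τ ≤ 1 / 2) (hτ : τ + ε ≤ d)
    (hμ : (Fintype.card W : ℝ) * ε ≤ μ) (hW : ε ≤ μ)
    (hbig : ∀ w, 2 ≤ μ * (P w).card)
    (hreg : ∀ a b, H.Adj a b → G.IsUniform ε (P a) (P b) ∧ d ≤ G.edgeDensity (P a) (P b)) :
    ∀ (n : ℕ) (A : Finset W) (C : W → Finset V), A.card = n → (∀ w, C w ⊆ P w) →
      (∀ w ∈ A, μ * (P w).card ≤ (C w).card * τ ^ n) →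
      ∃ f : W → V, (∀ w ∈ A, f w ∈ C w) ∧ Set.InjOn f A ∧
        ∀ a ∈ A, ∀ b ∈ A, H.Adj a b → G.Adj (f a) (f b) := by
  intro n
  induction n with
  | zero =>
    intro A C hA hC hs
    have hA0 : A = ∅ := Finset.card_eq_zero.mp hA
    subst hA0
    by_cases hV : Nonempty V
    · exact ⟨fun _ => hV.some, by simp, by simp, by simp⟩
    · by_cases hWn : Nonempty W
      · exfalso
        have := hbig hWn.some
        have h0 : P hWn.some = ∅ := by
          ext x; exact (hV ⟨x⟩).elim
        rw [h0] at this
        norm_num at this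
      · exact ⟨fun w => (hWn ⟨w⟩).elim, by simp, by simp, by simp⟩
  | succ n ih =>
    intro A C hA hC hs
    obtain ⟨w, hw⟩ := Finset.card_pos.mp (by omega : 0 < A.card)
    have hτn : τ ^ (n + 1) ≤ 1 := pow_le_one₀ hτ0.le (by linarith)
    have hCbig : ∀ a ∈ A, μ * (P a).card ≤ (C a).card := by
      intro a ha
      refine (hs a ha).trans ?_
      exact mul_le_of_le_one_right (Nat.cast_nonneg _) hτn
    have hPpos : ∀ a, 0 < (P a).card := by
      intro a
      rcases Nat.eq_zero_or_pos (P a).card with h | h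
      · have := hbig a
        rw [h] at this; norm_num at this
      · exact h
    have hC2 : ∀ a ∈ A, (2:ℝ) ≤ (C a).card := fun a ha => (hbig a).trans (hCbig a ha)
    let bad : W → Finset V := fun b =>
      (C w).filter fun x => (((C b).filter fun z => G.Adj x z).card : ℝ) < τ * (C b).card
    let Nb := (A.erase w).filter fun b => H.Adj w b
    have hbad : ∀ b ∈ Nb, ((bad b).card : ℝ) < (P w).card * ε := by
      intro b hb
      obtain ⟨hb1, hb2⟩ := Finset.mem_filter.mp hb
      have hbA := Finset.mem_of_mem_erase hb1
      have := hreg w b hb2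
      refine kot_bad G ε d τ hτ (P w) (P b) this.1 this.2 (C w) (C b) (hC w) (hC b) ?_ (hPpos w) ?_
      · have := hC2 b hbA
        have : (0:ℝ) < (C b).card := by linarith
        exact_mod_cast this
      · refine le_trans ?_ (hCbig b hbA)
        rw [mul_comm]
        exact mul_le_mul_of_nonneg_right hW (Nat.cast_nonneg _)
    have hex : ∃ x ∈ C w, x ∉ Nb.biUnion bad := by
      by_contra hcon
      push Not at hcon
      have h1 : (C w).card ≤ (Nb.biUnion bad).card := Finset.card_le_card hcon
      have h2 : (Nb.biUnion bad).card ≤ ∑ b ∈ Nb, (bad b).card := Finset.card_biUnion_le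
      have h3 : ((C w).card : ℝ) ≤ ∑ b ∈ Nb, ((bad b).card : ℝ) := by exact_mod_cast h1.trans h2
      rcases Nb.eq_empty_or_nonempty with hN | hN
      · rw [hN] at h3
        have := hC2 w hw
        simp at h3
        rw [h3] at this
        norm_num at this
      · have h4 : ∑ b ∈ Nb, ((bad b).card : ℝ) < Nb.card * ((P w).card * ε) := by
          rw [← nsmul_eq_mul, ← Finset.sum_const]
          exact Finset.sum_lt_sum_of_nonempty hN hbad
        have h5 : (Nb.card : ℝ) ≤ Fintype.card W := by exact_mod_cast Finset.card_le_univ _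
        obtain ⟨b0, hb0⟩ := hN
        have hε : 0 < ε := (hreg w b0 (Finset.mem_filter.mp hb0).2).1.pos
        have h6 : (Nb.card : ℝ) * ((P w).card * ε) ≤ Fintype.card W * ((P w).card * ε) :=
          mul_le_mul_of_nonneg_right h5 (by positivity)
        have h7 : (Fintype.card W : ℝ) * ε * (P w).card ≤ μ * (P w).card :=
          mul_le_mul_of_nonneg_right hμ (Nat.cast_nonneg _)
        have := hCbig w hw
        nlinarith
    obtain ⟨x, hxC, hxb⟩ := hex
    let C' : W → Finset V := fun b =>
      if H.Adj w b then (C b).filter fun z => G.Adj x z else (C b).erase x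
    have hC'C : ∀ b, C' b ⊆ (C b).erase x := by
      intro b z hz
      by_cases hb : H.Adj w b
      · simp only [C', hb, if_true, Finset.mem_filter] at hz
        exact Finset.mem_erase.mpr ⟨hz.2.ne', hz.1⟩
      · simpa only [C', hb, if_false] using hz
    obtain ⟨f, hf1, hf2, hf3⟩ := ih (A.erase w) C' (by rw [Finset.card_erase_of_mem hw]; omega)
      (fun b => (hC'C b).trans ((Finset.erase_subset _ _).trans (hC b)))
      (by
        intro b hb
        have hbA := Finset.mem_of_mem_erase hb
        have h1 : τ * (C b).card ≤ (C' b).card := by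
          by_cases hwb : H.Adj w b
          · simp only [C', hwb, if_true]
            by_contra hlt
            push Not at hlt
            exact hxb (Finset.mem_biUnion.mpr ⟨b, Finset.mem_filter.mpr ⟨hb, hwb⟩,
              Finset.mem_filter.mpr ⟨hxC, hlt⟩⟩)
          · simp only [C', hwb, if_false]
            have h2 : (C b).card ≤ ((C b).erase x).card + 1 := by
              have := Finset.pred_card_le_card_erase (s := C b) (a := x)
              omega
            have h3 : ((C b).card : ℝ) ≤ ((C b).erase x).card + 1 := by exact_mod_cast h2
            have h4 := hC2 b hbA
            nlinarith
        refine (hs b hbA).trans ?_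
        rw [pow_succ', ← mul_assoc]
        apply mul_le_mul_of_nonneg_right _ (by positivity)
        linarith)
    refine ⟨Function.update f w x, ?_, ?_, ?_⟩
    · intro a ha
      by_cases haw : a = w
      · subst haw; simpa using hxC
      · rw [Function.update_of_ne haw]
        exact Finset.mem_of_mem_erase (hC'C a (hf1 a (Finset.mem_erase.mpr ⟨haw, ha⟩)))
    · intro a ha b hb hab
      by_cases haw : a = w <;> by_cases hbw : b = w
      · rw [haw, hbw]
      · exfalso
        subst haw
        rw [Function.update_self, Function.update_of_ne hbw] at hab
        exact (Finset.ne_of_mem_erase (hC'C b (hf1 b (Finset.mem_erase.mpr ⟨hbw, hb⟩)))) hab.symm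
      · exfalso
        subst hbw
        rw [Function.update_self, Function.update_of_ne haw] at hab
        exact (Finset.ne_of_mem_erase (hC'C a (hf1 a (Finset.mem_erase.mpr ⟨haw, ha⟩)))) hab
      · rw [Function.update_of_ne haw, Function.update_of_ne hbw] at hab
        exact hf2 (Finset.mem_erase.mpr ⟨haw, ha⟩) (Finset.mem_erase.mpr ⟨hbw, hb⟩) hab
    · have key : ∀ b ∈ A, H.Adj w b → G.Adj x (f b) := by
        intro b hb hwb
        have := hf1 b (Finset.mem_erase.mpr ⟨hwb.ne', hb⟩)
        simp only [C', hwb, if_true, Finset.mem_filter] at this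
        exact this.2
      intro a ha b hb hab
      by_cases haw : a = w
      · subst haw
        rw [Function.update_self, Function.update_of_ne hab.ne']
        exact key b hb hab
      · by_cases hbw : b = w
        · subst hbw
          rw [Function.update_self, Function.update_of_ne haw]
          exact (key a ha hab.symm).symm
        · rw [Function.update_of_ne haw, Function.update_of_ne hbw]
          exact hf3 a (Finset.mem_erase.mpr ⟨haw, ha⟩) b (Finset.mem_erase.mpr ⟨hbw, hb⟩) hab

/-- Realising a multiset of homomorphisms into the reduced graph as a tiling. -/
lemma kot_realise {V W ι : Type*} [DecidableEq V] [Fintype W] [DecidableEq ι] [Nonempty W]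
    (G : SimpleGraph V) (H : SimpleGraph W) (R : SimpleGraph ι) (P : ι → Finset V)
    (hP : ∀ i j, i ≠ j → Disjoint (P i) (P j)) (ε' : ℝ)
    (hemb : ∀ (ψ : H →g R) (A : ι → Finset V), (∀ i, A i ⊆ P i) →
      (∀ i, ε' * (P i).card ≤ (A i).card) →
      ∃ f : W → V, (∀ w, f w ∈ A (ψ w)) ∧ Function.Injective f ∧
        ∀ a b, H.Adj a b → G.Adj (f a) (f b)) (s : Multiset (H →g R)) :
    (∀ i, (((s.map fun ψ => (Finset.univ.filter fun w => ψ w = i).card).sum : ℕ) : ℝ)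
      ≤ (1 - ε') * (P i).card) →
    ∃ (𝒯 : Finset (W → V)) (Cov : Finset V), IsTiling H G 𝒯 ∧ untiled 𝒯 = (Cov : Set V)ᶜ ∧
      Cov.card = Fintype.card W * s.card ∧
      ∀ i, (Cov ∩ P i).card ≤ (s.map fun ψ => (Finset.univ.filter fun w => ψ w = i).card).sum := by
  classical
  induction s using Multiset.induction_on with
  | empty =>
    intro _
    refine ⟨∅, ∅, ⟨by simp, by simp⟩, ?_, by simp, by simp⟩
    ext x; simp [untiled]
  | cons ψ s ih =>
    intro hs
    have hs' : ∀ i, (((s.map fun ψ => (Finset.univ.filter fun w => ψ w = i).card).sum : ℕ) : ℝ)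
      ≤ (1 - ε') * (P i).card := by
      intro i
      refine le_trans ?_ (hs i)
      rw [Multiset.map_cons, Multiset.sum_cons]
      push_cast
      linarith [Nat.cast_nonneg (α := ℝ) (Finset.univ.filter fun w => ψ w = i).card]
    obtain ⟨𝒯, Cov, ⟨hT1, hT2⟩, hun, hcard, hcov⟩ := ih hs'
    obtain ⟨f, hf1, hf2, hf3⟩ := hemb ψ (fun i => P i \ Cov) (fun i => Finset.sdiff_subset) (by
      intro i
      have h1 : (P i \ Cov).card + (Cov ∩ P i).card = (P i).card := by
        rw [Finset.inter_comm]; exact Finset.card_sdiff_add_card_inter _ _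
      have h2 : ((P i \ Cov).card : ℝ) + (Cov ∩ P i).card = (P i).card := by exact_mod_cast h1
      have h3 : ((Cov ∩ P i).card : ℝ) ≤
          (((s.map fun ψ => (Finset.univ.filter fun w => ψ w = i).card).sum : ℕ) : ℝ) := by
        exact_mod_cast hcov i
      have := hs' i
      linarith)
    have hfCov : ∀ w, f w ∉ Cov := fun w => (Finset.mem_sdiff.mp (hf1 w)).2
    have hfP : ∀ w, f w ∈ P (ψ w) := fun w => (Finset.mem_sdiff.mp (hf1 w)).1
    have hrange : ∀ g ∈ 𝒯, ∀ w, g w ∈ Cov := by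
      intro g hg w
      by_contra hcon
      have : g w ∈ untiled 𝒯 := by rw [hun]; exact hcon
      exact this g hg ⟨w, rfl⟩
    have hdisj : ∀ g ∈ 𝒯, Disjoint (Set.range f) (Set.range g) := by
      intro g hg
      rw [Set.disjoint_left]
      rintro _ ⟨w, rfl⟩ ⟨w', hw'⟩
      exact hfCov w (hw' ▸ hrange g hg w')
    refine ⟨insert f 𝒯, Cov ∪ Finset.univ.image f, ⟨?_, ?_⟩, ?_, ?_, ?_⟩
    · intro g hg
      rcases Finset.mem_insert.mp hg with rfl | hg
      · exact ⟨hf2, hf3⟩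
      · exact hT1 g hg
    · rw [Finset.coe_insert]
      exact hT2.insert fun g hg _ => ⟨hdisj g hg, (hdisj g hg).symm⟩
    · ext v
      have hv : v ∈ untiled 𝒯 ↔ v ∉ Cov := by rw [hun]; simp
      have : v ∈ untiled (insert f 𝒯) ↔ v ∉ Set.range f ∧ v ∈ untiled 𝒯 := by
        constructor
        · intro h
          exact ⟨h f (Finset.mem_insert_self _ _), fun g hg => h g (Finset.mem_insert_of_mem hg)⟩
        · rintro ⟨h1, h2⟩ g hg
          rcases Finset.mem_insert.mp hg with rfl | hg
          · exact h1
          · exact h2 g hg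
      rw [this, hv]
      simp
      tauto
    · rw [Finset.card_union_of_disjoint, hcard, Finset.card_image_of_injective _ hf2,
        Multiset.card_cons, Finset.card_univ]
      · ring
      · rw [Finset.disjoint_right]
        intro v hv
        obtain ⟨w, -, rfl⟩ := Finset.mem_image.mp hv
        exact hfCov w
    · intro i
      rw [Multiset.map_cons, Multiset.sum_cons, Finset.union_inter_distrib_right]
      refine (Finset.card_union_le _ _).trans ?_
      rw [add_comm]
      refine Nat.add_le_add ?_ (hcov i)
      have : Finset.univ.image f ∩ P i ⊆ (Finset.univ.filter fun w => ψ w = i).image f := by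
        intro v hv
        obtain ⟨hv1, hv2⟩ := Finset.mem_inter.mp hv
        obtain ⟨w, -, rfl⟩ := Finset.mem_image.mp hv1
        refine Finset.mem_image.mpr ⟨w, Finset.mem_filter.mpr ⟨Finset.mem_univ _, ?_⟩, rfl⟩
        by_contra hne
        exact (Finset.disjoint_left.mp (hP _ _ hne)) (hfP w) hv2
      exact (Finset.card_le_card this).trans Finset.card_image_le

/-- The reduced graph of a partition. -/
def kotR {V : Type*} [Fintype V] [DecidableEq V] (G : SimpleGraph V) [DecidableRel G.Adj]
    (P : Finpartition (Finset.univ : Finset V)) (ε d : ℝ) : SimpleGraph P.parts where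
  Adj x z := x ≠ z ∧ G.IsUniform ε x.1 z.1 ∧ d ≤ G.edgeDensity x.1 z.1
  symm := ⟨fun x z h => ⟨h.1.symm, h.2.1.symm, by rw [G.edgeDensity_comm]; exact h.2.2⟩⟩
  loopless := ⟨fun x h => h.1 rfl⟩

set_option maxHeartbeats 1000000 in
lemma kot_reduced {V : Type*} [Fintype V] [DecidableEq V] (G : SimpleGraph V) [DecidableRel G.Adj]
    (P : Finpartition (Finset.univ : Finset V)) (hP : P.IsEquipartition) (ε d θ : ℝ)
    (hu : P.IsUniform G ε) (hd : 0 < d) (hd1 : d ≤ 1 / 2) (hεd : ε ≤ d ^ 2) (hε : 0 < ε)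
    (hm : 1 ≤ d * P.parts.card) (hmn : (P.parts.card : ℝ) ≤ d * Fintype.card V)
    (hθ0 : 0 ≤ θ) (hθ1 : θ ≤ 1)
    (hOre : ∀ x y : V, x ≠ y → ¬ G.Adj x y →
      2 * θ * Fintype.card V ≤ (G.degree x : ℝ) + G.degree y)
    [DecidableRel (kotR G P ε d).Adj] :
    ∃ S L : Finset P.parts, (1 - d) * P.parts.card ≤ S.card ∧
      (∀ x ∈ S, x ∉ L → ((S.filter fun z => ¬ (kotR G P ε d).Adj x z).card : ℝ) ≤
        (1 - θ) * P.parts.card + 6 * d * P.parts.card) ∧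
      (∀ x ∈ S, x ∈ L → ((S.filter fun z => z ∈ L ∧ ¬ (kotR G P ε d).Adj x z).card : ℝ) ≤
        2 * d * P.parts.card) := by
  classical
  set m := P.parts.card with hmdef
  set n := Fintype.card V with hndef
  have hmpos : (0 : ℝ) < m := by
    by_contra h
    have : (m : ℝ) = 0 := le_antisymm (not_lt.mp h) (Nat.cast_nonneg _)
    rw [this] at hm; norm_num at hm
  have hmpos' : 0 < m := by exact_mod_cast hmpos
  have hnpos : (0 : ℝ) < n := by
    by_contra h
    have : (n : ℝ) = 0 := le_antisymm (not_lt.mp h) (Nat.cast_nonneg _)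
    rw [this] at hmn; linarith
  have hcardι : Fintype.card P.parts = m := by simp [hmdef]
  let irr : P.parts → Finset P.parts := fun x =>
    Finset.univ.filter fun z => x ≠ z ∧ ¬ G.IsUniform ε x.1 z.1
  have hirr : (∑ x, ((irr x).card : ℝ)) ≤ d ^ 2 * m ^ 2 := by
    have h1 : ∑ x, (irr x).card ≤ (P.nonUniforms G ε).card := by
      have : ∑ x, (irr x).card = ((Finset.univ : Finset (P.parts × P.parts)).filter
          fun p => p.1 ≠ p.2 ∧ ¬ G.IsUniform ε p.1.1 p.2.1).card := by
        rw [Finset.card_filter, Fintype.sum_prod_type]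
        exact Finset.sum_congr rfl fun x _ => Finset.card_filter _ _
      rw [this]
      refine Finset.card_le_card_of_injOn (fun p => (p.1.1, p.2.1)) ?_ ?_
      · intro p hp
        have hp := (Finset.mem_filter.mp hp).2
        refine Finset.mem_coe.mpr ((P.mk_mem_nonUniforms G).mpr ⟨p.1.2, p.2.2, ?_, hp.2⟩)
        exact fun h => hp.1 (Subtype.ext h)
      · intro p _ q _ h
        simp only [Prod.mk.injEq] at h
        exact Prod.ext (Subtype.ext h.1) (Subtype.ext h.2)
    have h2 : ((P.nonUniforms G ε).card : ℝ) ≤ (m * (m - 1) : ℕ) * ε := hu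
    have h3 : ((m * (m - 1) : ℕ) : ℝ) ≤ m ^ 2 := by
      have : m * (m - 1) ≤ m ^ 2 := by
        rw [sq]; exact Nat.mul_le_mul_left _ (Nat.sub_le _ _)
      exact_mod_cast this
    have h4 : (∑ x, ((irr x).card : ℝ)) ≤ ((P.nonUniforms G ε).card : ℝ) := by exact_mod_cast h1
    have h5 : ((m * (m - 1) : ℕ) : ℝ) * ε ≤ m ^ 2 * d ^ 2 :=
      mul_le_mul h3 hεd hε.le (by positivity)
    linarith
  let S : Finset P.parts := Finset.univ.filter fun x => ((irr x).card : ℝ) ≤ d * m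
  let L : Finset P.parts := Finset.univ.filter fun x =>
    ∑ v ∈ x.1, (G.degree v : ℝ) < (θ - d) * n * x.1.card
  have hxpos : ∀ x : P.parts, (0 : ℝ) < x.1.card := fun x => by
    exact_mod_cast Finset.card_pos.mpr (P.nonempty_of_mem_parts x.2)
  have hins : ∀ x ∈ S, ((insert x (irr x)).card : ℝ) ≤ 2 * d * m := by
    intro x hx
    have h1 : ((insert x (irr x)).card : ℝ) ≤ (irr x).card + 1 := by
      exact_mod_cast Finset.card_insert_le _ _
    have h2 : ((irr x).card : ℝ) ≤ d * m := (Finset.mem_filter.mp hx).2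
    linarith
  have he : ∀ x z : P.parts, ((G.interedges x.1 z.1).card : ℝ) =
      G.edgeDensity x.1 z.1 * (x.1.card * z.1.card) := by
    intro x z
    rw [SimpleGraph.edgeDensity_def]
    push_cast
    have := hxpos x
    have := hxpos z
    field_simp
  have hlow : ∀ x z : P.parts, z ∉ insert x (irr x) → ¬ (kotR G P ε d).Adj x z →
      (G.edgeDensity x.1 z.1 : ℝ) < d := by
    intro x z hz hna
    by_contra hge
    push Not at hge
    simp only [Finset.mem_insert, irr, Finset.mem_filter, Finset.mem_univ, true_and, not_or,
      not_and, not_not] at hz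
    exact hna ⟨fun h => hz.1 h.symm, hz.2 fun h => hz.1 h.symm, hge⟩
  refine ⟨S, L, ?_, ?_, ?_⟩
  · have h1 : S.card + (Finset.univ.filter fun x => ¬ ((irr x).card : ℝ) ≤ d * m).card = m := by
      rw [Finset.card_filter_add_card_filter_not, Finset.card_univ, hcardι]
    set B := Finset.univ.filter fun x => ¬ ((irr x).card : ℝ) ≤ d * m with hB
    have h1' : (S.card : ℝ) + B.card = m := by exact_mod_cast h1
    have h2 : (B.card : ℝ) * (d * m) ≤ d ^ 2 * m ^ 2 := by
      refine le_trans ?_ hirr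
      refine le_trans ?_ (Finset.sum_le_sum_of_subset_of_nonneg (Finset.subset_univ B)
        fun x _ _ => Nat.cast_nonneg _)
      rw [← nsmul_eq_mul]
      exact Finset.card_nsmul_le_sum _ _ _ fun x hx => (not_le.mp (Finset.mem_filter.mp hx).2).le
    have h3 : (B.card : ℝ) ≤ d * m := by
      have : (B.card : ℝ) * (d * m) ≤ (d * m) * (d * m) := by nlinarith
      exact le_of_mul_le_mul_right this (by positivity)
    linarith
  · intro x hx hxL
    have hA : (θ - d) * n * x.1.card ≤ ∑ v ∈ x.1, (G.degree v : ℝ) := by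
      by_contra h
      exact hxL (Finset.mem_filter.mpr ⟨Finset.mem_univ _, not_le.mp h⟩)
    have hsum : ∑ v ∈ x.1, (G.degree v : ℝ) = ∑ z : P.parts, ((G.interedges x.1 z.1).card : ℝ) := by
      have h1 : (G.interedges x.1 Finset.univ).card = ∑ z ∈ P.parts, (G.interedges x.1 z).card :=
        Rel.card_interedges_finpartition_right G.Adj x.1 P
      have h2 : (G.interedges x.1 Finset.univ).card = ∑ v ∈ x.1, G.degree v := by
        rw [SimpleGraph.interedges_def, Finset.card_filter, Finset.sum_product]
        refine Finset.sum_congr rfl fun v _ => ?_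
        rw [← SimpleGraph.card_neighborFinset_eq_degree, SimpleGraph.neighborFinset_eq_filter,
          Finset.card_filter]
      have h3 : ∑ z : P.parts, (G.interedges x.1 z.1).card = ∑ z ∈ P.parts, (G.interedges x.1 z).card :=
        Finset.sum_coe_sort P.parts (fun z => (G.interedges x.1 z).card)
      exact_mod_cast (h2.symm.trans h1).trans h3.symm
    set p : ℝ := ((n / m : ℕ) : ℝ) + 1 with hp
    have hpz : ∀ z : P.parts, (z.1.card : ℝ) ≤ p := by
      intro z
      have := hP.card_part_le_average_add_one z.2
      rw [Finset.card_univ] at this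
      rw [hp]
      exact_mod_cast this
    have hpm : p * m ≤ n + m := by
      have : (n / m) * m ≤ n := Nat.div_mul_le_self n m
      have : ((n / m : ℕ) : ℝ) * m ≤ n := by exact_mod_cast this
      rw [hp]; linarith
    have hp0 : 0 ≤ p := by positivity
    set Nx := Finset.univ.filter fun z => (kotR G P ε d).Adj x z with hNx
    have hterm : ∀ z : P.parts, ((G.interedges x.1 z.1).card : ℝ) ≤
        (if z ∈ Nx then x.1.card * p else 0) + (if z ∈ insert x (irr x) then x.1.card * p else 0)
          + d * (x.1.card * z.1.card) := by
      intro z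
      have hle : ((G.interedges x.1 z.1).card : ℝ) ≤ x.1.card * z.1.card := by
        exact_mod_cast G.card_interedges_le_mul x.1 z.1
      have hle2 : (x.1.card : ℝ) * z.1.card ≤ x.1.card * p :=
        mul_le_mul_of_nonneg_left (hpz z) (hxpos x).le
      have hnn : 0 ≤ d * ((x.1.card : ℝ) * z.1.card) := by positivity
      have hnn2 : 0 ≤ (x.1.card : ℝ) * p := by positivity
      by_cases h1 : z ∈ Nx
      · rw [if_pos h1]
        split_ifs <;> linarith
      · by_cases h2 : z ∈ insert x (irr x)
        · rw [if_neg h1, if_pos h2]; linarith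
        · rw [if_neg h1, if_neg h2, he]
          have := hlow x z h2 (fun h => h1 (Finset.mem_filter.mpr ⟨Finset.mem_univ _, h⟩))
          have hpos2 : (0:ℝ) ≤ x.1.card * z.1.card := by positivity
          have := mul_le_mul_of_nonneg_right this.le hpos2
          linarith
    have hzsum : ∑ z : P.parts, (z.1.card : ℝ) = n := by
      have h1 := P.sum_card_parts
      rw [Finset.card_univ] at h1
      have h3 : ∑ z : P.parts, z.1.card = ∑ z ∈ P.parts, z.card :=
        Finset.sum_coe_sort P.parts (fun z => z.card)
      exact_mod_cast h3.trans h1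
    have htot := Finset.sum_le_sum fun (z : P.parts) (_ : z ∈ Finset.univ) => hterm z
    rw [Finset.sum_add_distrib, Finset.sum_add_distrib, ← Finset.sum_filter, ← Finset.sum_filter,
      Finset.filter_univ_mem, Finset.filter_univ_mem, Finset.sum_const, Finset.sum_const,
      ← Finset.mul_sum, ← Finset.mul_sum, hzsum, nsmul_eq_mul, nsmul_eq_mul, ← hsum] at htot
    have hI := hins x hx
    set a : ℝ := (Nx.card : ℝ) with ha
    set b : ℝ := ((insert x (irr x)).card : ℝ) with hb
    have h1 : (θ - d) * n ≤ (a + b) * p + d * n := by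
      have : (θ - d) * n * x.1.card ≤ ((a + b) * p + d * n) * x.1.card := by linarith
      exact le_of_mul_le_mul_right this (hxpos x)
    have ha0 : 0 ≤ a := Nat.cast_nonneg _
    have hb0 : 0 ≤ b := Nat.cast_nonneg _
    have ham : a ≤ m := by
      rw [ha, ← hcardι]; exact_mod_cast Finset.card_le_univ _
    have h2 : (θ - 2 * d) * n * m ≤ (a + b) * (n * (1 + d)) := by
      have e1 : (a + b) * (p * m) ≤ (a + b) * (n * (1 + d)) :=
        mul_le_mul_of_nonneg_left (by linarith) (by linarith)
      have e2 : (θ - 2 * d) * n * m ≤ (a + b) * p * m :=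
        mul_le_mul_of_nonneg_right (by linarith) hmpos.le
      linarith
    have h3 : (θ - 2 * d) * m ≤ (a + b) * (1 + d) := by
      have : (θ - 2 * d) * m * n ≤ (a + b) * (1 + d) * n := by linarith
      exact le_of_mul_le_mul_right this hnpos
    have h4 : (θ - 6 * d) * m ≤ a := by
      have e1 : a * d ≤ m * d := mul_le_mul_of_nonneg_right ham hd.le
      have e2 : b * d ≤ 2 * d * m * (1 / 2) := mul_le_mul hI hd1 hd.le (by positivity)
      nlinarith
    have h5 : a + ((Finset.univ.filter fun z => ¬ (kotR G P ε d).Adj x z).card : ℝ) = m := by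
      have : Nx.card + (Finset.univ.filter fun z => ¬ (kotR G P ε d).Adj x z).card = m := by
        rw [hNx, Finset.card_filter_add_card_filter_not, Finset.card_univ, hcardι]
      rw [ha]
      exact_mod_cast this
    have h6 : ((S.filter fun z => ¬ (kotR G P ε d).Adj x z).card : ℝ) ≤
        ((Finset.univ.filter fun z => ¬ (kotR G P ε d).Adj x z).card : ℝ) := by
      exact_mod_cast Finset.card_le_card (Finset.filter_subset_filter _ (Finset.subset_univ _))
    linarith
  · intro x hx hxL
    refine le_trans ?_ (hins x hx)
    norm_cast
    apply Finset.card_le_card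
    intro z hz
    obtain ⟨hzS, hzL, hzA⟩ := Finset.mem_filter.mp hz
    by_contra hcon
    have hdens := hlow x z hcon hzA
    have hzx : x ≠ z := fun h => hcon (by rw [h]; exact Finset.mem_insert_self _ _)
    have hAx := (Finset.mem_filter.mp hxL).2
    have hAz := (Finset.mem_filter.mp hzL).2
    have hdisj : Disjoint x.1 z.1 :=
      P.disjoint x.2 z.2 fun h => hzx (Subtype.ext h)
    have h1 : ∑ a ∈ x.1, ∑ b ∈ z.1, ((2 * θ * n) - (if G.Adj a b then 2 * θ * n else 0)) ≤
        ∑ a ∈ x.1, ∑ b ∈ z.1, ((G.degree a : ℝ) + G.degree b) := by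
      refine Finset.sum_le_sum fun a ha => Finset.sum_le_sum fun b hb => ?_
      by_cases hab : G.Adj a b
      · rw [if_pos hab, sub_self]; positivity
      · rw [if_neg hab, sub_zero]
        exact hOre a b (fun h => (Finset.disjoint_left.mp hdisj ha) (h ▸ hb)) hab
    have h2 : ∑ a ∈ x.1, ∑ b ∈ z.1, ((2 * θ * n) - (if G.Adj a b then 2 * θ * n else 0)) =
        2 * θ * n * (x.1.card * z.1.card) - 2 * θ * n * (G.interedges x.1 z.1).card := by
      simp only [Finset.sum_sub_distrib, Finset.sum_const, nsmul_eq_mul]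
      have : ((G.interedges x.1 z.1).card : ℝ) = ∑ a ∈ x.1, ∑ b ∈ z.1, if G.Adj a b then 1 else 0 := by
        rw [SimpleGraph.interedges_def, Finset.card_filter, Finset.sum_product]
        push_cast
        rfl
      rw [this, Finset.mul_sum]
      congr 1
      · ring
      · refine Finset.sum_congr rfl fun a _ => ?_
        rw [Finset.mul_sum]
        refine Finset.sum_congr rfl fun b _ => ?_
        split_ifs <;> simp
    have h3 : ∑ a ∈ x.1, ∑ b ∈ z.1, ((G.degree a : ℝ) + G.degree b) =
        z.1.card * (∑ a ∈ x.1, (G.degree a : ℝ)) + x.1.card * ∑ b ∈ z.1, (G.degree b : ℝ) := by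
      simp only [Finset.sum_add_distrib, Finset.sum_const, nsmul_eq_mul, ← Finset.mul_sum]
    rw [h2, h3, he] at h1
    have hX := hxpos x
    have hZ := hxpos z
    set X : ℝ := (x.1.card : ℝ)
    set Z : ℝ := (z.1.card : ℝ)
    have h4 : Z * (∑ a ∈ x.1, (G.degree a : ℝ)) < Z * ((θ - d) * n * X) :=
      mul_lt_mul_of_pos_left hAx hZ
    have h5 : X * (∑ a ∈ z.1, (G.degree a : ℝ)) < X * ((θ - d) * n * Z) :=
      mul_lt_mul_of_pos_left hAz hX
    have h6 : 2 * θ * n * ((G.edgeDensity x.1 z.1 : ℝ) * (X * Z)) ≤ 2 * θ * n * (d * (X * Z)) := by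
      apply mul_le_mul_of_nonneg_left _ (by positivity)
      exact mul_le_mul_of_nonneg_right hdens.le (by positivity)
    have h7 : θ * (n * d * (X * Z)) ≤ 1 * (n * d * (X * Z)) :=
      mul_le_mul_of_nonneg_right hθ1 (by positivity)
    nlinarith

lemma kot_multiset {Ψ : Type*} (T : Finset Ψ) (b F : Ψ → ℕ) :
    ((∑ ψ ∈ T, Multiset.replicate (b ψ) ψ).map F).sum = ∑ ψ ∈ T, b ψ * F ψ := by
  classical
  induction T using Finset.induction_on with
  | empty => simp
  | insert a T ha ih =>
    rw [Finset.sum_insert ha, Finset.sum_insert ha, Multiset.map_add, Multiset.sum_add, ih]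
    simp

set_option maxHeartbeats 4000000 in
/-- Everything after the regularity partition has been chosen. -/
lemma kot_partition {W : Type} [Fintype W] [Nonempty W] (H : SimpleGraph W) (r σ : ℕ) (hr : 0 < r)
    (g : W → Option (Fin r)) (hg : ∀ a b, H.Adj a b → g a ≠ g b)
    (hσ : (Finset.univ.filter fun w => g w = none).card = σ)
    (hσh : σ < Fintype.card W) (α χ A : ℝ) (hA : 0 ≤ A)
    (hα : α = r * σ / ((Fintype.card W : ℝ) - σ)) (hχ : χ = r + α) (hα0 : 0 < α)
    (hdual : ∀ {ι : Type} [DecidableEq ι] (R : SimpleGraph ι) [DecidableRel R.Adj] (L : Finset ι)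
      (y : ι → ℝ) (_ : ∀ i, 0 ≤ y i) (D : ℕ) (E : ℝ) (_ : 0 ≤ E)
      (S : Finset ι) (e c : ℝ) (_ : 0 ≤ e) (_ : 0 ≤ c)
      (_ : ∀ x ∈ S, x ∉ L → (S.filter fun z => ¬ R.Adj x z).card ≤ D)
      (_ : ∀ x ∈ S, x ∈ L → ((S.filter fun z => z ∈ L ∧ ¬ R.Adj x z).card : ℝ) ≤ E)
      (_ : ((r : ℝ) + α) * D - e ≤ S.card)
      (_ : ∀ K ⊆ S, ∀ u ∈ S, R.IsClique (K : Set ι) → K.card = r → (∀ z ∈ K, R.Adj u z) →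
        c ≤ ∑ z ∈ K, y z + α * y u),
      c * (D - A * (e + E)) ≤ ∑ z ∈ S, y z)
    (η' d ε μ : ℝ) (hη0 : 0 < η') (hη1 : η' < 1) (hd : 0 < d) (hd1 : d ≤ 1 / 2)
    (hq : (r / ((Fintype.card W : ℝ) - σ)) * A * (7 * χ + 3) * Fintype.card W * d ≤ η')
    (hε : 0 < ε) (hεd : ε ≤ d ^ 2) (hμ : μ = (d / 2) ^ (Fintype.card W) * η')
    (hεμ : (Fintype.card W : ℝ) * ε ≤ μ)
    {V : Type} [Fintype V] [DecidableEq V] (G : SimpleGraph V) [DecidableRel G.Adj]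
    (P : Finpartition (Finset.univ : Finset V)) (hP : P.IsEquipartition) (hu : P.IsUniform G ε)
    (hm : 1 ≤ d * P.parts.card) (hmn : (P.parts.card : ℝ) ≤ d * Fintype.card V)
    (hbig : ∀ x ∈ P.parts, 2 ≤ μ * x.card)
    (herr : (P.parts.card : ℝ) + Fintype.card W * P.parts.card ^ (Fintype.card W)
      ≤ η' * Fintype.card V)
    (hOre : ∀ x y : V, x ≠ y → ¬ G.Adj x y →
      2 * (1 - 1 / χ) * Fintype.card V ≤ (G.degree x : ℝ) + G.degree y) :
    ∃ 𝒯 : Finset (W → V), IsTiling H G 𝒯 ∧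
        ((untiled 𝒯).ncard : ℝ) ≤ 3 * η' * (Fintype.card V) := by
  classical
  set m := P.parts.card with hmdef
  set n := Fintype.card V with hndef
  set h := Fintype.card W with hhdef
  have hmpos : (0 : ℝ) < m := by
    by_contra hc
    have : (m : ℝ) = 0 := le_antisymm (not_lt.mp hc) (Nat.cast_nonneg _)
    rw [this] at hm; norm_num at hm
  have hmpos' : 0 < m := by exact_mod_cast hmpos
  have hr1 : (1 : ℝ) ≤ r := by exact_mod_cast hr
  have hhσ : (0 : ℝ) < (h : ℝ) - σ := by
    have : (σ : ℝ) < h := by exact_mod_cast hσh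
    linarith
  have hhpos : (0 : ℝ) < h := by linarith [Nat.cast_nonneg (α := ℝ) σ]
  have hh1 : (1 : ℝ) ≤ h := by
    have : 0 < h := by exact_mod_cast hhpos
    exact_mod_cast this
  have hχ1 : 1 ≤ χ := by linarith
  have hχ0 : 0 < χ := by linarith
  have hχe : χ = r * h / ((h : ℝ) - σ) := by
    rw [hχ, hα]; field_simp; ring
  have hcardι : Fintype.card P.parts = m := by simp [hmdef]
  set R := kotR G P ε d with hR
  have hinv : 1 / χ ≤ 1 := by rw [div_le_one hχ0]; exact hχ1
  have hinv0 : 0 < 1 / χ := by positivity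
  obtain ⟨S, L, hS1, hS2, hS3⟩ := kot_reduced G P hP ε d (1 - 1 / χ) hu hd hd1 hεd hε hm hmn
    (by linarith) (by linarith) hOre
  -- the fractional tiling
  have : Finite (H →g R) := DFunLike.finite _
  let _ : Fintype (H →g R) := Fintype.ofFinite _
  have hΨ : (Fintype.card (H →g R) : ℝ) ≤ (m : ℝ) ^ h := by
    have h1 : Fintype.card (H →g R) ≤ Fintype.card (W → P.parts) :=
      Fintype.card_le_of_injective (fun ψ => (ψ : W → P.parts)) DFunLike.coe_injective
    rw [Fintype.card_fun, hcardι] at h1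
    exact_mod_cast h1
  obtain ⟨lam, hl0, hl1, hl2⟩ := kot_lp
    (fun (ψ : H →g R) (i : P.parts) => ((Finset.univ.filter fun w => ψ w = i).card : ℝ))
    (h / (m * (1 - η'))) (by
      have : 0 < 1 - η' := by linarith
      positivity)
    (by
      intro y c hy hc hψ
      have hψ' : ∀ ψ : H →g R, c ≤ ∑ w, y (ψ w) := by
        intro ψ
        refine (hψ ψ).trans (le_of_eq ?_)
        rw [← Finset.sum_fiberwise Finset.univ (fun w => ψ w) (fun w => y (ψ w))]
        refine Finset.sum_congr rfl fun i _ => ?_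
        rw [Finset.sum_congr rfl (g := fun _ => y i)
          (fun w hw => by rw [(Finset.mem_filter.mp hw).2])]
        rw [Finset.sum_const, nsmul_eq_mul, mul_comm]
      set D : ℕ := ⌈(1 / χ) * m + 6 * d * m⌉₊ with hD
      have hDl : (1 / χ) * m + 6 * d * m ≤ D := Nat.le_ceil _
      have hDu : (D : ℝ) ≤ (1 / χ) * m + 7 * d * m := by
        have := (Nat.ceil_lt_add_one (a := (1 / χ) * m + 6 * d * m) (by positivity)).le
        linarith
      have key := hdual R L y hy D (2 * d * m) (by positivity) S ((7 * χ + 1) * d * m)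
        (r / ((h : ℝ) - σ) * c) (by positivity) (by positivity)
        (by
          intro x hx hxL
          have h1 := hS2 x hx hxL
          have : ((S.filter fun z => ¬ R.Adj x z).card : ℝ) ≤ D := by
            refine le_trans ?_ hDl
            linarith
          exact_mod_cast this)
        hS3
        (by
          rw [← hχ]
          have h1 : χ * D ≤ χ * ((1 / χ) * m + 7 * d * m) := mul_le_mul_of_nonneg_left hDu hχ0.le
          have h2 : χ * ((1 / χ) * m + 7 * d * m) = m + 7 * χ * d * m := by field_simp
          linarith)
        (by
          intro K _ u _ hKq hKc hKu
          have h1 := kot_shift H R r hr g hg σ hσ y c hψ' K u hKq hKc hKu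
          have h2 : r / ((h : ℝ) - σ) * c = r * c / ((h : ℝ) - σ) := by ring
          rw [h2, div_le_iff₀ hhσ]
          rw [← hhdef] at h1
          refine h1.trans (le_of_eq ?_)
          rw [hα]
          field_simp
          try ring)
      have hsumS : ∑ z ∈ S, y z ≤ ∑ z, y z :=
        Finset.sum_le_sum_of_subset_of_nonneg (Finset.subset_univ _) fun i _ _ => hy i
      have h1 : r / ((h : ℝ) - σ) * c * (1 / χ * m) = c * m / h := by
        rw [hχe]; field_simp
      have h2 : r / ((h : ℝ) - σ) * c * (1 / χ * m) ≤ r / ((h : ℝ) - σ) * c * D := by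
        apply mul_le_mul_of_nonneg_left _ (by positivity)
        have : 0 ≤ 6 * d * m := by positivity
        linarith
      have h3 : r / ((h : ℝ) - σ) * c * (A * ((7 * χ + 1) * d * m + 2 * d * m)) =
          (r / ((h : ℝ) - σ) * A * (7 * χ + 3) * h * d) * (c * m / h) := by
        field_simp; ring
      have h4 : (r / ((h : ℝ) - σ) * A * (7 * χ + 3) * h * d) * (c * m / h) ≤ η' * (c * m / h) :=
        mul_le_mul_of_nonneg_right hq (by positivity)
      have h5 : (1 - η') * (c * m / h) ≤ ∑ z, y z := by
        rw [mul_sub] at key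
        linarith
      have h6 : 0 < 1 - η' := by linarith
      rw [div_mul_eq_mul_div, le_div_iff₀ (by positivity)]
      have h7 : (1 - η') * (c * m / h) * h ≤ (∑ z, y z) * h :=
        mul_le_mul_of_nonneg_right h5 hhpos.le
      have h8 : (1 - η') * (c * m / h) * h = c * (m * (1 - η')) := by field_simp
      linarith)
  have hmn' : (m : ℝ) ≤ n := by
    have : d * (n : ℝ) ≤ 1 * n := mul_le_mul_of_nonneg_right (by linarith) (Nat.cast_nonneg _)
    linarith
  set M : ℝ := (1 - η') ^ 2 * (n - m) / h with hM
  have hM0 : 0 ≤ M := div_nonneg (mul_nonneg (sq_nonneg _) (by linarith)) hhpos.le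
  have hpart : ∀ i : P.parts, (n : ℝ) - m ≤ i.1.card * m := by
    intro i
    have h1 := hP.average_le_card_part i.2
    rw [Finset.card_univ] at h1
    have h2 : n < (n / m + 1) * m := by
      have := Nat.lt_div_mul_add (a := n) hmpos'
      linarith
    have h3 : n ≤ (i.1.card + 1) * m := h2.le.trans (Nat.mul_le_mul_right _ (by
      have : n / m ≤ i.1.card := h1
      omega))
    have h4 : (n : ℝ) ≤ (i.1.card + 1) * m := by exact_mod_cast h3
    linarith
  let b : (H →g R) → ℕ := fun ψ => ⌊M * lam ψ⌋₊
  obtain ⟨𝒯, Cov, hT, hun, hcov, -⟩ := kot_realise G H R (fun i : P.parts => i.1)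
    (fun i j hij => P.disjoint i.2 j.2 fun h => hij (Subtype.ext h)) η'
    (by
      intro ψ B hB hBc
      obtain ⟨f, hf1, hf2, hf3⟩ := kot_embed_aux G H (fun w => (ψ w).1) ε d (d / 2) μ (by positivity)
        (by linarith) (by nlinarith) hεμ (by nlinarith) (fun w => hbig _ (ψ w).2)
        (fun a b' hab => (ψ.map_rel hab).2) h Finset.univ (fun w => B (ψ w)) (by simp [hhdef])
        (fun w => hB _)
        (by
          intro w _
          have := mul_le_mul_of_nonneg_right (hBc (ψ w)) (by positivity : 0 ≤ (d / 2) ^ h)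
          refine le_trans (le_of_eq ?_) this
          rw [hμ]; ring)
      exact ⟨f, fun w => hf1 w (Finset.mem_univ w),
        fun a b' hab => hf2 (by simp) (by simp) hab,
        fun a b' => hf3 a (Finset.mem_univ a) b' (Finset.mem_univ b')⟩)
    (∑ ψ, Multiset.replicate (b ψ) ψ)
    (by
      intro i
      rw [kot_multiset]
      push_cast
      have h1 : ∑ ψ, (b ψ : ℝ) * ((Finset.univ.filter fun w => ψ w = i).card : ℝ) ≤
          M * ∑ ψ, lam ψ * ((Finset.univ.filter fun w => ψ w = i).card : ℝ) := by
        rw [Finset.mul_sum]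
        refine Finset.sum_le_sum fun ψ _ => ?_
        rw [← mul_assoc]
        exact mul_le_mul_of_nonneg_right (Nat.floor_le (mul_nonneg hM0 (hl0 ψ)))
          (Nat.cast_nonneg _)
      have h2 := mul_le_mul_of_nonneg_left (hl2 i) hM0
      have h6 : 0 < 1 - η' := by linarith
      have h3 : M * (h / (m * (1 - η'))) = (1 - η') * ((n - m) / m) := by
        rw [hM]; field_simp
      have h4 : ((n : ℝ) - m) / m ≤ i.1.card := by
        rw [div_le_iff₀ hmpos]; exact hpart i
      have h5 := mul_le_mul_of_nonneg_left h4 h6.le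
      linarith)
  refine ⟨𝒯, hT, ?_⟩
  have hnc : (untiled 𝒯).ncard + Cov.card = n := by
    rw [hun, ← Set.ncard_coe_finset Cov, add_comm, Set.ncard_add_ncard_compl, Nat.card_eq_fintype_card]
  have hncR : ((untiled 𝒯).ncard : ℝ) + Cov.card = n := by exact_mod_cast hnc
  have hcard : (Cov.card : ℝ) = h * ∑ ψ, (b ψ : ℝ) := by
    rw [hcov, Multiset.card_sum]
    simp [hhdef]
  have hbsum : M - m ^ h ≤ ∑ ψ, (b ψ : ℝ) := by
    have h1 : ∑ ψ, (M * lam ψ - 1) ≤ ∑ ψ, (b ψ : ℝ) :=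
      Finset.sum_le_sum fun ψ _ => (Nat.sub_one_lt_floor _).le
    rw [Finset.sum_sub_distrib, ← Finset.mul_sum, hl1] at h1
    simp only [mul_one, Finset.sum_const, Finset.card_univ, nsmul_eq_mul] at h1
    linarith
  have h1 : h * (M - (m : ℝ) ^ h) ≤ Cov.card := by
    rw [hcard]; exact mul_le_mul_of_nonneg_left hbsum hhpos.le
  have h2 : h * M = (1 - η') ^ 2 * (n - m) := by rw [hM]; field_simp
  have h3 : (1 - 2 * η') * ((n : ℝ) - m) ≤ (1 - η') ^ 2 * (n - m) := by
    apply mul_le_mul_of_nonneg_right _ (by linarith)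
    nlinarith
  have h4 : 0 ≤ η' * (m : ℝ) := by positivity
  nlinarith


/-- **Theorem (Kühn–Osthus–Treglown).** For every graph `H` with at least one edge and
every `η > 0` there is `n₀` such that every graph `G` on `n ≥ n₀` vertices with
`d(x)+d(y) ≥ 2(1 - 1/χ_cr(H))n` for all distinct nonadjacent `x, y` has an `H`-tiling
covering all but at most `ηn` vertices. -/
theorem kuhn_osthus_treglown
    {W : Type} [Fintype W] (H : SimpleGraph W) (hedge : ∃ a b : W, H.Adj a b)
    (k σ : ℕ) (hk : H.chromaticNumber = (k : ℕ∞)) (hσ : IsMinColorClassSize H k σ)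
    (η : ℝ) (hη : 0 < η) :
    ∃ n₀ : ℕ, ∀ (V : Type) [Fintype V] (G : SimpleGraph V) [DecidableRel G.Adj],
      n₀ ≤ Fintype.card V →
      (∀ x y : V, x ≠ y → ¬ G.Adj x y →
        2 * (1 - 1 / (((k : ℝ) - 1) * (Fintype.card W) / ((Fintype.card W : ℝ) - σ))) *
          (Fintype.card V) ≤ (G.degree x : ℝ) + (G.degree y : ℝ)) →
      ∃ 𝒯 : Finset (W → V), IsTiling H G 𝒯 ∧
        ((untiled 𝒯).ncard : ℝ) ≤ η * (Fintype.card V) := by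
  classical
  obtain ⟨a, b, hab⟩ := hedge
  obtain ⟨⟨c0, i0, hc0⟩, -⟩ := hσ
  have hne : c0 a ≠ c0 b := c0.valid hab
  obtain ⟨r, rfl⟩ : ∃ r, k = r + 1 := ⟨k - 1, by have := i0.pos; omega⟩
  have hr : 0 < r := by
    have h1 := (c0 a).isLt
    have h2 := (c0 b).isLt
    have h3 : (c0 a).val ≠ (c0 b).val := fun h => hne (Fin.ext h)
    omega
  have : Nonempty W := ⟨a⟩
  set g : W → Option (Fin r) := fun w => finSuccEquiv' i0 (c0 w) with hgdef
  have hgn : ∀ w, g w = none ↔ c0 w = i0 := by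
    intro w
    rw [← finSuccEquiv'_at i0]
    exact (finSuccEquiv' i0).injective.eq_iff
  have hg : ∀ a b, H.Adj a b → g a ≠ g b := by
    intro a b hab h
    exact c0.valid hab ((finSuccEquiv' i0).injective h)
  have hσ' : (Finset.univ.filter fun w => g w = none).card = σ := by
    rw [← hc0]
    congr 1
    ext w
    simp [hgn]
  have hσ0 : 0 < σ := by
    by_contra h0
    have h0' : σ = 0 := by omega
    rw [h0', Finset.card_eq_zero, Finset.filter_eq_empty_iff] at hσ'
    have hs : ∀ w, (g w).isSome := fun w => Option.isSome_iff_ne_none.mpr (hσ' (Finset.mem_univ w))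
    have hcol : H.Colorable r := ⟨SimpleGraph.Coloring.mk (fun w => (g w).get (hs w)) (by
      intro x y hxy h
      exact hg x y hxy (Option.get_inj.mp h))⟩
    have h1 := hcol.chromaticNumber_le
    rw [hk] at h1
    have h2 : r + 1 ≤ r := by exact_mod_cast h1
    omega
  have hσh : σ < Fintype.card W := by
    rw [← hσ', ← Finset.card_univ]
    apply Finset.card_lt_card
    rw [Finset.filter_ssubset]
    by_contra hc
    push Not at hc
    exact hg a b hab ((hc a (Finset.mem_univ a)).trans (hc b (Finset.mem_univ b)).symm)
  set h := Fintype.card W with hhdef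
  have hσR : (0 : ℝ) < σ := by exact_mod_cast hσ0
  have hrR : (0 : ℝ) < r := by exact_mod_cast hr
  have hhσ : (0 : ℝ) < (h : ℝ) - σ := by
    have : (σ : ℝ) < h := by exact_mod_cast hσh
    linarith
  have hh0 : (0 : ℝ) < h := by linarith
  obtain ⟨α, hα⟩ : ∃ α : ℝ, α = r * σ / ((h : ℝ) - σ) := ⟨_, rfl⟩
  have hα0 : 0 < α := by rw [hα]; positivity
  obtain ⟨χ, hχ⟩ : ∃ χ : ℝ, χ = r + α := ⟨_, rfl⟩
  have hχ0 : 0 < χ := by rw [hχ]; positivity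
  have hχe : (((r + 1 : ℕ) : ℝ) - 1) * h / ((h : ℝ) - σ) = χ := by
    rw [hχ, hα]; push_cast; field_simp; ring
  obtain ⟨A, hA, hdual⟩ := kot_dual α hα0 r
  obtain ⟨η', hη'⟩ : ∃ η' : ℝ, η' = min η 1 / 4 := ⟨_, rfl⟩
  have hη0 : 0 < η' := by rw [hη']; have := lt_min hη one_pos; positivity
  have hη1 : η' < 1 := by rw [hη']; have := min_le_right η 1; linarith
  have hη3 : 3 * η' ≤ η := by
    have := min_le_left η 1
    linarith
  obtain ⟨q, hq⟩ : ∃ q : ℝ, q = (r / ((h : ℝ) - σ)) * A * (7 * χ + 3) * h := ⟨_, rfl⟩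
  have hq0 : 0 ≤ q := by rw [hq]; positivity
  obtain ⟨d, hd⟩ : ∃ d : ℝ, d = min (1 / 2) (η' / (q + 1)) := ⟨_, rfl⟩
  have hd0 : 0 < d := by rw [hd]; exact lt_min (by norm_num) (by positivity)
  have hd1 : d ≤ 1 / 2 := by rw [hd]; exact min_le_left _ _
  have hqd : q * d ≤ η' := by
    have h1 : d ≤ η' / (q + 1) := by rw [hd]; exact min_le_right _ _
    rw [le_div_iff₀ (by positivity)] at h1
    nlinarith
  obtain ⟨μ, hμ⟩ : ∃ μ : ℝ, μ = (d / 2) ^ h * η' := ⟨_, rfl⟩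
  have hμ0 : 0 < μ := by rw [hμ]; positivity
  obtain ⟨ε, hε⟩ : ∃ ε : ℝ, ε = min (d ^ 2) (μ / h) := ⟨_, rfl⟩
  have hε0 : 0 < ε := by rw [hε]; exact lt_min (by positivity) (by positivity)
  have hεd : ε ≤ d ^ 2 := by rw [hε]; exact min_le_left _ _
  have hεμ : (h : ℝ) * ε ≤ μ := by
    have h1 : ε ≤ μ / h := by rw [hε]; exact min_le_right _ _
    rw [le_div_iff₀ hh0] at h1
    linarith
  obtain ⟨l, hl⟩ : ∃ l : ℕ, l = ⌈1 / d⌉₊ := ⟨_, rfl⟩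
  have hld : 1 ≤ d * l := by
    have h1 : 1 / d ≤ l := by rw [hl]; exact Nat.le_ceil _
    rw [div_le_iff₀ hd0] at h1
    linarith
  obtain ⟨Bd, hBd⟩ : ∃ Bd : ℕ, Bd = SzemerediRegularity.bound ε l := ⟨_, rfl⟩
  refine ⟨l + ⌈(Bd : ℝ) / d⌉₊ + ⌈(Bd : ℝ) * (2 / μ + 1)⌉₊ +
    ⌈((Bd : ℝ) + h * (Bd : ℝ) ^ h) / η'⌉₊, ?_⟩
  intro V _ G _ hn hOre
  set n := Fintype.card V with hndef
  have e1 : l ≤ n := by omega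
  have e2 : (Bd : ℝ) / d ≤ n := (Nat.le_ceil _).trans (Nat.cast_le.mpr (by omega))
  have e3 : (Bd : ℝ) * (2 / μ + 1) ≤ n := (Nat.le_ceil _).trans (Nat.cast_le.mpr (by omega))
  have e4 : ((Bd : ℝ) + h * (Bd : ℝ) ^ h) / η' ≤ n :=
    (Nat.le_ceil _).trans (Nat.cast_le.mpr (by omega))
  rw [div_le_iff₀ hd0] at e2
  rw [div_le_iff₀ hη0] at e4
  obtain ⟨P, hP, hPl, hPB, hPu⟩ := szemeredi_regularity G hε0 e1
  rw [← hBd] at hPB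
  have hPlR : (l : ℝ) ≤ P.parts.card := by exact_mod_cast hPl
  have hPBR : (P.parts.card : ℝ) ≤ Bd := by exact_mod_cast hPB
  have hm : 1 ≤ d * P.parts.card := hld.trans (mul_le_mul_of_nonneg_left hPlR hd0.le)
  have hm0 : (0 : ℝ) < P.parts.card := by
    by_contra hc
    have : (P.parts.card : ℝ) = 0 := le_antisymm (not_lt.mp hc) (Nat.cast_nonneg _)
    rw [this] at hm; norm_num at hm
  have hm0' : 0 < P.parts.card := by exact_mod_cast hm0
  have hbig : ∀ x ∈ P.parts, 2 ≤ μ * x.card := by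
    intro x hx
    have h1 := hP.average_le_card_part hx
    rw [Finset.card_univ] at h1
    have h2 : n < (n / P.parts.card + 1) * P.parts.card := by
      have := Nat.lt_div_mul_add (a := n) hm0'
      linarith
    have h3 : n ≤ (x.card + 1) * P.parts.card := h2.le.trans (Nat.mul_le_mul_right _ (by
      have : n / P.parts.card ≤ x.card := h1
      omega))
    have h4 : (n : ℝ) ≤ (x.card + 1) * P.parts.card := by exact_mod_cast h3
    have h5 : (P.parts.card : ℝ) * (2 / μ + 1) ≤ Bd * (2 / μ + 1) :=
      mul_le_mul_of_nonneg_right hPBR (by positivity)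
    have h6 : (2 / μ + 1) * (P.parts.card : ℝ) ≤ (x.card + 1) * P.parts.card := by linarith
    have h7 := le_of_mul_le_mul_right h6 hm0
    have h8 : 2 / μ ≤ x.card := by linarith
    rw [div_le_iff₀ hμ0] at h8
    linarith
  obtain ⟨𝒯, hT, hun⟩ := kot_partition H r σ hr g hg hσ' hσh α χ A hA hα hχ hα0 hdual η' d ε μ
    hη0 hη1 hd0 hd1 (by rw [← hhdef, ← hq]; exact hqd) hε0 hεd hμ hεμ G P hP hPu hm
    (by linarith) hbig
    (by
      have h1 : (P.parts.card : ℝ) ^ h ≤ (Bd : ℝ) ^ h := pow_le_pow_left₀ hm0.le hPBR _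
      have h2 := mul_le_mul_of_nonneg_left h1 hh0.le
      linarith)
    (by
      intro x y hxy hadj
      have := hOre x y hxy hadj
      rw [hχe] at this
      exact this)
  refine ⟨𝒯, hT, hun.trans ?_⟩
  exact mul_le_mul_of_nonneg_right hη3 (Nat.cast_nonneg _)
end

section
/- (Komlós.) For every graph H containing at least one edge and every ε > 0, there exists a threshold n₀ = n₀(H, ε) such that if n ≥ n₀ and G is an n-vertex graph with minimum degree δ(G) ≥ (1 − 1/χ_cr(H))·n, then G contains an H-tiling that covers all but at most εn vertices. -/
open Finset

open scoped Classical in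
/-- Greedy choice of a clique with small weight. -/
lemma komlos_greedy {M : Type*} [Fintype M] (R : SimpleGraph M) (y : M → ℝ)
    (q : ℝ) (hq0 : 0 ≤ q)
    (hq : ∀ (v : M), ((Finset.univ.filter fun u => ¬ R.Adj v u).card : ℝ) ≤ q)
    (j : ℕ) : ∀ (S : Finset M), (j : ℝ) * q < S.card →
    ∃ v : Fin (j + 1) → M, (∀ i, v i ∈ S) ∧ (∀ a b, a ≠ b → R.Adj (v a) (v b)) ∧
      q * ∑ i, y (v i) + ((S.card : ℝ) - (j + 1) * q) * y (v (Fin.last j)) ≤ ∑ u ∈ S, y u := by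
  induction j with
  | zero =>
    intro S hS
    have hne : S.Nonempty := by
      rw [← Finset.card_pos]
      have : (0 : ℝ) < S.card := by simpa using hS
      exact_mod_cast this
    obtain ⟨v0, hv0, hmin⟩ := S.exists_min_image y hne
    refine ⟨fun _ => v0, fun _ => hv0, fun a b hab => absurd (by omega) hab, ?_⟩
    have : (S.card : ℝ) * y v0 ≤ ∑ u ∈ S, y u := by
      have := Finset.card_nsmul_le_sum S y (y v0) (fun x hx => hmin x hx)
      simpa using this
    simp
    linarith
  | succ j ih =>
    intro S hS
    push_cast at hS
    have hne : S.Nonempty := by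
      rw [← Finset.card_pos]
      have h1 : 0 ≤ ((j : ℝ) + 1) * q := by positivity
      have : (0 : ℝ) < S.card := by linarith
      exact_mod_cast this
    obtain ⟨v0, hv0, hmin⟩ := S.exists_min_image y hne
    have hsplit := Finset.sum_filter_add_sum_filter_not S (fun u => R.Adj v0 u) y
    have hcard := Finset.card_filter_add_card_filter_not (s := S) (fun u => R.Adj v0 u)
    set S' := S.filter (fun u => R.Adj v0 u) with hS'
    set S2 := S.filter (fun u => ¬ R.Adj v0 u) with hS2
    have h2 : (S2.card : ℝ) ≤ q := by
      refine le_trans ?_ (hq v0)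
      exact_mod_cast Finset.card_le_card (Finset.filter_subset_filter _ (Finset.subset_univ S))
    have hcard' : (S'.card : ℝ) + S2.card = S.card := by exact_mod_cast hcard
    obtain ⟨v, hvS, hadj, hsum⟩ := ih S' (by linarith)
    refine ⟨Fin.cons v0 v, ?_, ?_, ?_⟩
    · intro i
      refine Fin.cases ?_ (fun i => ?_) i
      · simpa using hv0
      · simpa using (Finset.mem_filter.1 (hvS i)).1
    · intro a b
      refine Fin.cases ?_ (fun a => ?_) a <;> refine Fin.cases ?_ (fun b => ?_) b
      · simp
      · intro _
        simpa using (Finset.mem_filter.1 (hvS b)).2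
      · intro _
        simpa using (Finset.mem_filter.1 (hvS a)).2.symm
      · intro hab
        simpa using hadj a b (fun h => hab (by rw [h]))
    · rw [Fin.sum_univ_succ, ← Fin.succ_last]
      simp only [Fin.cons_zero, Fin.cons_succ]
      have h3 : (S2.card : ℝ) * y v0 ≤ ∑ u ∈ S2, y u := by
        have := Finset.card_nsmul_le_sum S2 y (y v0)
          (fun x hx => hmin x (Finset.mem_filter.1 hx).1)
        simpa using this
      have h4 := hmin _ (Finset.mem_filter.1 (hvS (Fin.last j))).1
      push_cast
      rw [← hsplit, ← hcard']
      have h5 := mul_nonneg (sub_nonneg.2 h2) (sub_nonneg.2 h4)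
      generalize y (v (Fin.last j)) = L at *
      linear_combination hsum + h3 + h5

/-- Averaging over shifts of colours. -/
lemma komlos_average {W : Type*} [Fintype W] {p : ℕ} (hp : 0 < p) (c : W → Fin (p + 1))
    (t : Fin (p + 1) → ℝ) (σ : ℕ)
    (hσ : (Finset.univ.filter fun v => c v = Fin.last p).card = σ) :
    ∃ g : Fin (p + 1) → Fin (p + 1), Function.Injective g ∧
      p * ∑ w, t (g (c w)) ≤ ((Fintype.card W : ℝ) - σ) * (∑ i : Fin p, t i.castSucc)
        + p * σ * t (Fin.last p) := by
  classical
  have : NeZero p := ⟨hp.ne'⟩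
  let g : Fin p → Fin (p + 1) → Fin (p + 1) := fun r =>
    Fin.lastCases (Fin.last p) (fun i => (i + r).castSucc)
  have hgl : ∀ r, g r (Fin.last p) = Fin.last p := fun r => by simp [g]
  have hgc : ∀ r i, g r (Fin.castSucc i) = (i + r).castSucc := fun r i => by simp [g]
  have hinj : ∀ r, Function.Injective (g r) := by
    intro r a b
    refine Fin.lastCases ?_ (fun a => ?_) a <;> refine Fin.lastCases ?_ (fun b => ?_) b
    · simp
    · rw [hgl, hgc]; intro h; exact absurd h.symm (Fin.castSucc_lt_last _).ne
    · rw [hgl, hgc]; intro h; exact absurd h (Fin.castSucc_lt_last _).ne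
    · rw [hgc, hgc]; intro h
      have := Fin.castSucc_injective _ h
      rw [add_right_cancel this]
  have htot : ∑ r : Fin p, ∑ w, t (g r (c w)) =
      ((Fintype.card W : ℝ) - σ) * (∑ i : Fin p, t i.castSucc) + p * σ * t (Fin.last p) := by
    rw [Finset.sum_comm]
    have h1 : ∀ w, ∑ r : Fin p, t (g r (c w)) =
        if c w = Fin.last p then p * t (Fin.last p) else ∑ i : Fin p, t i.castSucc := by
      intro w
      generalize c w = a
      refine Fin.lastCases ?_ (fun a => ?_) a
      · simp [hgl]
      · rw [if_neg (Fin.castSucc_lt_last _).ne]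
        simp only [hgc]
        exact Fintype.sum_equiv (Equiv.addLeft a) _ _ (fun r => by simp)
    simp only [h1]
    rw [Finset.sum_ite]
    have hc := Finset.card_filter_add_card_filter_not (s := (Finset.univ : Finset W))
      (fun w => c w = Fin.last p)
    have hc' : ((Finset.univ.filter fun w => ¬ c w = Fin.last p).card : ℝ)
        = Fintype.card W - σ := by
      rw [eq_sub_iff_add_eq, ← hσ, add_comm]
      exact_mod_cast hc
    simp only [Finset.sum_const, nsmul_eq_mul, hc', hσ]
    ring
  obtain ⟨r, -, hr⟩ := Finset.exists_le_of_sum_le (s := (Finset.univ : Finset (Fin p)))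
    (f := fun r => ∑ w, t (g r (c w)))
    (g := fun _ => (∑ r : Fin p, ∑ w, t (g r (c w))) / p)
    ⟨0, Finset.mem_univ _⟩ (by
      simp only [Finset.sum_const, Finset.card_univ, Fintype.card_fin, nsmul_eq_mul]
      rw [mul_div_cancel₀]
      exact_mod_cast hp.ne')
  refine ⟨g r, hinj r, ?_⟩
  rw [← htot]
  have hp' : (0 : ℝ) < p := by exact_mod_cast hp
  rw [le_div_iff₀ hp'] at hr
  linarith

open scoped Classical in
/-- The dual form of the fractional tiling statement. -/
lemma komlos_dual {W M : Type*} [Fintype W] [Fintype M] [Nonempty M] (H : SimpleGraph W)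
    {p : ℕ} (hp : 0 < p) (c : H.Coloring (Fin (p + 1))) (σ : ℕ)
    (hσ : (Finset.univ.filter fun v => c v = Fin.last p).card = σ) (hσ0 : 0 < σ)
    (R : SimpleGraph M) (γ : ℝ) (hγ : 0 ≤ γ) (hγ1 : (p + 1) * γ * Fintype.card W < 1)
    (hR : ∀ v : M, ((Finset.univ.filter fun u => ¬ R.Adj v u).card : ℝ) ≤
      (((Fintype.card W : ℝ) - σ) / (p * Fintype.card W) + γ) * Fintype.card M)
    (y : M → ℝ) (hy : ∀ v, 0 ≤ y v) :
    ∃ ψ : W → M, (∀ a b, H.Adj a b → R.Adj (ψ a) (ψ b)) ∧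
      (1 - (p + 1) * γ * Fintype.card W) * Fintype.card M * ∑ w, y (ψ w) ≤
        Fintype.card W * ∑ u, y u := by
  have hσh : σ ≤ Fintype.card W := by rw [← hσ]; exact Finset.card_filter_le _ _
  have hp' : (0 : ℝ) < p := by exact_mod_cast hp
  have hσ0' : (1 : ℝ) ≤ σ := by exact_mod_cast hσ0
  have hσh' : (σ : ℝ) ≤ Fintype.card W := by exact_mod_cast hσh
  have hm : (0 : ℝ) < Fintype.card M := by exact_mod_cast Fintype.card_pos
  set h : ℝ := (Fintype.card W : ℝ) with hh
  set m : ℝ := (Fintype.card M : ℝ) with hmm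
  have hh0 : 0 < h := by linarith
  set q : ℝ := ((h - σ) / (p * h) + γ) * m with hqdef
  have hq0 : 0 ≤ q := by
    have : 0 ≤ h - σ := by linarith
    positivity
  have hqe : h * p * q = (h - σ) * m + γ * h * p * m := by
    rw [hqdef]; field_simp
  have hpq : (p : ℝ) * q < (Finset.univ : Finset M).card := by
    rw [Finset.card_univ, ← hmm]
    have : h * (p * q) < h * m := by
      have h1 : p * γ * h < 1 := by nlinarith [mul_nonneg hγ hh0.le]
      nlinarith
    exact lt_of_mul_lt_mul_left this hh0.le
  obtain ⟨v, -, hadj, hsum⟩ := komlos_greedy R y q hq0 hR p Finset.univ hpq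
  obtain ⟨g, hg, hgs⟩ := komlos_average hp c (fun i => y (v i)) σ hσ
  refine ⟨fun w => v (g (c w)), ?_, ?_⟩
  · intro a b hab
    exact hadj _ _ (fun h => c.valid hab (hg h))
  · rw [Fin.sum_univ_castSucc] at hsum
    simp only [Finset.card_univ, ← hmm] at hsum
    set T := ∑ i : Fin p, y (v i.castSucc)
    set L := y (v (Fin.last p))
    set Y := ∑ u, y u
    set X := ∑ w, y (v (g (c w)))
    have hT : 0 ≤ T := Finset.sum_nonneg fun _ _ => hy _
    have hL : 0 ≤ L := hy _
    have hD : p * L ≤ (h - σ) * T + p * σ * L := by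
      have h1 : 0 ≤ (h - σ) * T := mul_nonneg (by linarith) hT
      have h2 : p * L * 1 ≤ p * L * σ := by gcongr
      nlinarith
    have e1 : h * p * (q * (T + L) + (m - (p + 1) * q) * L)
        = (h * p * q) * T + h * p * m * L - p * (h * p * q) * L := by ring
    have e2 : h * p * (q * (T + L) + (m - (p + 1) * q) * L) ≤ h * p * Y := by gcongr
    rw [e1, hqe] at e2
    have e3 : 0 ≤ γ * h * p * m * T := by positivity
    have e4 : m * ((h - σ) * T + p * σ * L) - m * ((p+1) * γ * h) * (p * L) ≤ h * p * Y := by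
      have : 0 ≤ γ * h * p * m * L := by positivity
      nlinarith
    have e5 : m * ((p+1) * γ * h) * (p * L) ≤
        m * ((p+1) * γ * h) * ((h - σ) * T + p * σ * L) := by gcongr
    have e6 : p * ((1 - (p + 1) * γ * h) * m * X) ≤ p * (h * Y) := by
      calc p * ((1 - (p + 1) * γ * h) * m * X) = ((1 - (p + 1) * γ * h) * m) * (p * X) := by ring
        _ ≤ ((1 - (p + 1) * γ * h) * m) * ((h - σ) * T + p * σ * L) := by
          apply mul_le_mul_of_nonneg_left hgs
          exact mul_nonneg (by linarith) hm.le
        _ ≤ _ := by linarith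
    exact le_of_mul_le_mul_left e6 hp'

open scoped Classical in
/-- Minimax: from the dual form to fractional tilings. -/
lemma komlos_minimax {I M : Type*} [Fintype I] [Fintype M] (cnt : I → M → ℝ) (B : ℝ)
    (hdual : ∀ y : M → ℝ, (∀ v, 0 ≤ y v) → ∃ i, ∑ v, y v * cnt i v ≤ B * ∑ v, y v) :
    ∃ l : I → ℝ, (∀ i, 0 ≤ l i) ∧ ∑ i, l i = 1 ∧ ∀ v, ∑ i, l i * cnt i v ≤ B := by
  by_contra hcon
  push Not at hcon
  let φ : (I → ℝ) →ₗ[ℝ] (M → ℝ) := Fintype.linearCombination ℝ cnt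
  have hφ : ∀ l v, φ l v = ∑ i, l i * cnt i v := by
    intro l v
    simp [φ, Fintype.linearCombination_apply, Finset.sum_apply]
  have hφc : Continuous φ := φ.continuous_of_finiteDimensional
  obtain ⟨f, u, v, hs, huv, ht⟩ := geometric_hahn_banach_compact_closed
    (s := φ '' stdSimplex ℝ I) (t := Set.Iic (fun _ => B))
    ((convex_stdSimplex ℝ I).linear_image φ) ((isCompact_stdSimplex ℝ I).image hφc)
    (convex_Iic _) isClosed_Iic (by
      rw [Set.disjoint_left]
      rintro _ ⟨l, hl, rfl⟩ hb
      obtain ⟨v, hv⟩ := hcon l hl.1 hl.2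
      have := hb v
      rw [hφ] at this
      linarith)
  let e : M → (M → ℝ) := fun v => Pi.single v 1
  have hf : ∀ x : M → ℝ, f x = ∑ v, x v * f (e v) := by
    intro x
    conv_lhs => rw [pi_eq_sum_univ' x]
    simp [e, map_sum]
  have hneg : ∀ w, f (e w) ≤ 0 := by
    intro w
    by_contra hw
    push Not at hw
    obtain ⟨N, hN⟩ := exists_nat_gt ((f (fun _ => B) - v) / f (e w))
    rw [div_lt_iff₀ hw] at hN
    have := ht ((fun _ => B) - (N : ℝ) • e w) (by
      intro z
      simp only [Pi.sub_apply, Pi.smul_apply, smul_eq_mul, tsub_le_iff_right,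
        le_add_iff_nonneg_right, e]
      apply mul_nonneg (Nat.cast_nonneg _)
      by_cases h : z = w
      · subst h; simp
      · simp [h])
    rw [map_sub, map_smul, smul_eq_mul] at this
    linarith
  obtain ⟨i, hi⟩ := hdual (fun w => - f (e w)) (fun w => by have := hneg w; linarith)
  have h1 := hs (φ (Pi.single i 1)) ⟨_, single_mem_stdSimplex ℝ i, rfl⟩
  have h2 : φ (Pi.single i 1) = cnt i := by
    simp [φ, Fintype.linearCombination_apply_single]
  have h3 := ht (fun _ => B) (Set.mem_Iic.2 le_rfl)
  rw [h2, hf] at h1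
  rw [hf, ← Finset.mul_sum] at h3
  simp only [neg_mul, Finset.sum_neg_distrib, mul_neg] at hi
  simp only [mul_comm (f _)] at hi
  linarith

open scoped Classical in
/-- Embedding lemma: greedy embedding of `H` into dense regular clusters. -/
lemma komlos_embed {V W : Type*} [Fintype W] [Nonempty V] (G : SimpleGraph V) [DecidableRel G.Adj]
    (H : SimpleGraph W) (d τ X : ℝ) (hd : 0 < d) (hd1 : d ≤ 1) (hX1 : 1 ≤ X) (hτ0 : 0 < τ)
    (hX : Fintype.card W * τ ≤ X) (A : W → Finset V)
    (hA : ∀ a b, H.Adj a b → ∀ s ⊆ A a, ∀ t ⊆ A b, τ ≤ (s.card : ℝ) → τ ≤ (t.card : ℝ) →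
      d * s.card * t.card ≤ ((G.interedges s t).card : ℝ)) (S : Finset W) :
    ∀ C : W → Finset V, (∀ w, C w ⊆ A w) →
      (∀ w ∈ S, X * (2 / d) ^ S.card ≤ ((C w).card : ℝ)) →
      ∃ f : W → V, (∀ w ∈ S, f w ∈ C w) ∧ (∀ a ∈ S, ∀ b ∈ S, a ≠ b → f a ≠ f b) ∧
        (∀ a ∈ S, ∀ b ∈ S, H.Adj a b → G.Adj (f a) (f b)) := by
  have h2d : 1 ≤ 2 / d := by rw [le_div_iff₀ hd]; linarith
  induction S using Finset.induction_on with
  | empty =>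
    intro C _ _
    exact ⟨fun _ => Classical.arbitrary V, by simp⟩
  | insert w S hw ih =>
    intro C hCA hC
    rw [Finset.card_insert_of_notMem hw] at hC
    have hCX : ∀ u ∈ insert w S, X ≤ ((C u).card : ℝ) := fun u hu => by
      refine le_trans ?_ (hC u hu)
      have := one_le_pow₀ h2d (n := S.card + 1)
      nlinarith
    have hCτ : ∀ u ∈ insert w S, τ ≤ ((C u).card : ℝ) := fun u hu => by
      refine le_trans ?_ (hCX u hu)
      refine le_trans ?_ hX
      have : (1 : ℝ) ≤ Fintype.card W := by
        exact_mod_cast Fintype.card_pos_iff.2 ⟨w⟩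
      nlinarith
    let bad : W → Finset V := fun u => (C w).filter fun v =>
      (((C u).filter fun x => G.Adj v x).card : ℝ) < d * (C u).card
    have hbad : ∀ u ∈ S, H.Adj w u → ((bad u).card : ℝ) < τ := by
      intro u hu hadj
      by_contra hcon
      push Not at hcon
      have h1 := hA w u hadj (bad u) ((Finset.filter_subset _ _).trans (hCA w)) (C u) (hCA u)
        hcon (hCτ u (Finset.mem_insert_of_mem hu))
      have h2 : ((G.interedges (bad u) (C u)).card : ℝ) =
          ∑ v ∈ bad u, (((C u).filter fun x => G.Adj v x).card : ℝ) := by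
        rw [SimpleGraph.interedges, Rel.interedges]
        rw [Finset.card_filter, Finset.sum_product]
        simp only [Finset.card_filter]
        push_cast
        rfl
      have h3 : ∑ v ∈ bad u, (((C u).filter fun x => G.Adj v x).card : ℝ) <
          ∑ v ∈ bad u, d * (C u).card := by
        apply Finset.sum_lt_sum_of_nonempty
        · rw [← Finset.card_pos]
          have : (0:ℝ) < (bad u).card := by linarith
          exact_mod_cast this
        · intro v hv
          exact (Finset.mem_filter.1 hv).2
      rw [Finset.sum_const, nsmul_eq_mul] at h3
      rw [h2] at h1
      nlinarith
    have hex : ∃ v ∈ C w, ∀ u ∈ S, H.Adj w u → v ∉ bad u := by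
      by_contra hcon
      push Not at hcon
      have hsub : C w ⊆ (S.filter fun u => H.Adj w u).biUnion bad := by
        intro v hv
        obtain ⟨u, hu, h1, h2⟩ := hcon v hv
        exact Finset.mem_biUnion.2 ⟨u, Finset.mem_filter.2 ⟨hu, h1⟩, h2⟩
      have h1 : ((C w).card : ℝ) ≤ ∑ u ∈ S.filter fun u => H.Adj w u, ((bad u).card : ℝ) := by
        exact_mod_cast (Finset.card_le_card hsub).trans Finset.card_biUnion_le
      have h2 : ∑ u ∈ S.filter (fun u => H.Adj w u), ((bad u).card : ℝ) ≤
          ∑ u ∈ S.filter (fun u => H.Adj w u), τ := by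
        apply Finset.sum_le_sum
        intro u hu
        rw [Finset.mem_filter] at hu
        exact (hbad u hu.1 hu.2).le
      rw [Finset.sum_const, nsmul_eq_mul] at h2
      have h3 : ((S.filter fun u => H.Adj w u).card : ℝ) + 1 ≤ Fintype.card W := by
        have : (S.filter fun u => H.Adj w u).card < Fintype.card W := by
          rw [← Finset.card_univ]
          apply Finset.card_lt_card
          rw [Finset.ssubset_univ_iff]
          intro h
          have : w ∈ S.filter fun u => H.Adj w u := by rw [h]; exact Finset.mem_univ _
          exact hw (Finset.mem_filter.1 this).1
        exact_mod_cast this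
      have h4 := hCX w (Finset.mem_insert_self _ _)
      nlinarith
    obtain ⟨v, hv, hvgood⟩ := hex
    obtain ⟨f, hf1, hf2, hf3⟩ := ih
      (fun u => if H.Adj w u then ((C u).filter fun x => G.Adj v x).erase v else (C u).erase v)
      (by
        intro u
        split_ifs
        · exact (Finset.erase_subset _ _).trans ((Finset.filter_subset _ _).trans (hCA u))
        · exact (Finset.erase_subset _ _).trans (hCA u))
      (by
        intro u hu
        have h1 := hC u (Finset.mem_insert_of_mem hu)
        rw [pow_succ] at h1
        set P := (2 / d) ^ S.card with hP
        have hP1 : 1 ≤ P := one_le_pow₀ h2d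
        have hXP : 1 ≤ X * P := by nlinarith
        have h2 : 2 * (X * P) ≤ d * (C u).card := by
          have : d * (X * (P * (2 / d))) ≤ d * (C u).card := by gcongr
          calc 2 * (X * P) = d * (X * (P * (2 / d))) := by field_simp
            _ ≤ _ := this
        have h3 : d * (C u).card ≤ (C u).card := by
          have : (0:ℝ) ≤ (C u).card := Nat.cast_nonneg _
          nlinarith
        have key : ∀ F : Finset V, d * (C u).card ≤ (F.card : ℝ) →
            X * P ≤ ((F.erase v).card : ℝ) := by
          intro F hF
          have : F.card ≤ (F.erase v).card + 1 := by
            have := Finset.pred_card_le_card_erase (s := F) (a := v)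
            omega
          have : (F.card : ℝ) ≤ (F.erase v).card + 1 := by exact_mod_cast this
          linarith
        split_ifs with hadj
        · apply key
          have := hvgood u hu hadj
          simp only [bad, Finset.mem_filter, hv, true_and, not_lt] at this
          exact this
        · exact key _ h3)
    have hne : ∀ u ∈ S, u ≠ w := fun u hu h => hw (h ▸ hu)
    have hfv : ∀ u ∈ S, f u ∈ C u ∧ f u ≠ v ∧ (H.Adj w u → G.Adj v (f u)) := by
      intro u hu
      have := hf1 u hu
      split_ifs at this with h
      · rw [Finset.mem_erase, Finset.mem_filter] at this
        exact ⟨this.2.1, this.1, fun _ => this.2.2⟩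
      · rw [Finset.mem_erase] at this
        exact ⟨this.2, this.1, fun h' => absurd h' h⟩
    refine ⟨Function.update f w v, ?_, ?_, ?_⟩
    · intro u hu
      rcases Finset.mem_insert.1 hu with rfl | hu
      · simpa using hv
      · rw [Function.update_of_ne (hne u hu)]
        exact (hfv u hu).1
    · intro a ha b hb hab
      rcases Finset.mem_insert.1 ha with rfl | ha' <;> rcases Finset.mem_insert.1 hb with rfl | hb'
      · exact absurd rfl hab
      · rw [Function.update_self, Function.update_of_ne (hne b hb')]
        exact (hfv b hb').2.1.symm
      · rw [Function.update_self, Function.update_of_ne (hne a ha')]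
        exact (hfv a ha').2.1
      · rw [Function.update_of_ne (hne b hb'), Function.update_of_ne (hne a ha')]
        exact hf2 a ha' b hb' hab
    · intro a ha b hb hab
      rcases Finset.mem_insert.1 ha with rfl | ha' <;> rcases Finset.mem_insert.1 hb with rfl | hb'
      · exact absurd rfl hab.ne
      · rw [Function.update_self, Function.update_of_ne (hne b hb')]
        exact (hfv b hb').2.2 hab
      · rw [Function.update_self, Function.update_of_ne (hne a ha')]
        exact ((hfv a ha').2.2 hab.symm).symm
      · rw [Function.update_of_ne (hne b hb'), Function.update_of_ne (hne a ha')]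
        exact hf3 a ha' b hb' hab

lemma komlos_untiled {V W : Type*} [Fintype V] [Fintype W] [Nonempty W] {H : SimpleGraph W}
    {G : SimpleGraph V} {𝒯 : Finset (W → V)} (h : IsTiling H G 𝒯) :
    (untiled 𝒯).ncard + Fintype.card W * 𝒯.card = Fintype.card V := by
  classical
  have h1 : untiled 𝒯 = ((𝒯.biUnion fun f => Finset.univ.image f)ᶜ : Finset V) := by
    ext v
    simp [untiled]
  rw [h1, Set.ncard_coe_finset]
  have h2 : (𝒯.biUnion fun f => Finset.univ.image f).card = Fintype.card W * 𝒯.card := by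
    rw [Finset.card_biUnion, Finset.sum_congr rfl (g := fun _ => Fintype.card W)]
    · simp [mul_comm]
    · intro f hf
      rw [Finset.card_image_of_injective _ (h.1 f hf).1, Finset.card_univ]
    · intro f hf g hg hfg
      have := h.2 hf hg hfg
      rw [Function.onFun, ← Finset.disjoint_coe]
      simpa using this
  rw [← h2]
  exact Finset.card_compl_add_card _

open scoped Classical in
/-- Packing lemma: greedily embed a multiset of homomorphisms into the reduced graph. -/
lemma komlos_pack {V W M : Type*} [Fintype W] [Nonempty W] (G : SimpleGraph V)
    [DecidableRel G.Adj] (H : SimpleGraph W) (R : SimpleGraph M) (A : M → Finset V)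
    (hdisj : ∀ i j, i ≠ j → Disjoint (A i) (A j))
    (d τ X : ℝ) (hd : 0 < d) (hd1 : d ≤ 1) (hX1 : 1 ≤ X) (hτ0 : 0 < τ)
    (hX : Fintype.card W * τ ≤ X)
    (hA : ∀ i j, R.Adj i j → ∀ s ⊆ A i, ∀ t ⊆ A j, τ ≤ (s.card : ℝ) → τ ≤ (t.card : ℝ) →
      d * s.card * t.card ≤ ((G.interedges s t).card : ℝ)) (s : Multiset (W → M)) :
    (∀ ψ ∈ s, ∀ a b, H.Adj a b → R.Adj (ψ a) (ψ b)) →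
    (∀ i, ((s.map fun ψ => (Finset.univ.filter fun w => ψ w = i).card).sum : ℝ) +
      X * (2 / d) ^ Fintype.card W ≤ (A i).card) →
    ∃ 𝒯 : Finset (W → V), IsTiling H G 𝒯 ∧ 𝒯.card = s.card ∧
      ∀ i, ((A i).filter fun v => ∃ f ∈ 𝒯, v ∈ Set.range f).card ≤
        (s.map fun ψ => (Finset.univ.filter fun w => ψ w = i).card).sum := by
  induction s using Multiset.induction_on with
  | empty =>
    intro _ _
    exact ⟨∅, ⟨by simp, by simp⟩, by simp, by simp⟩
  | cons ψ s ih =>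
    intro hs hu
    have h2d : 1 ≤ 2 / d := by rw [le_div_iff₀ hd]; linarith
    have hpow : 1 ≤ (2 / d) ^ Fintype.card W := one_le_pow₀ h2d
    obtain ⟨𝒯, hT, hcard, hcov⟩ := ih (fun φ hφ => hs φ (Multiset.mem_cons_of_mem hφ))
      (fun i => by
        refine le_trans ?_ (hu i)
        simp only [Multiset.map_cons, Multiset.sum_cons]
        push_cast
        have : (0 : ℝ) ≤ (Finset.univ.filter fun w => ψ w = i).card := Nat.cast_nonneg _
        linarith)
    let U : M → Finset V := fun i => (A i).filter fun v => ¬ ∃ f ∈ 𝒯, v ∈ Set.range f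
    have hU : ∀ i, X * (2 / d) ^ Fintype.card W ≤ ((U i).card : ℝ) := by
      intro i
      have h1 := Finset.card_filter_add_card_filter_not (s := A i)
        (fun v => ∃ f ∈ 𝒯, v ∈ Set.range f)
      have h2 := hcov i
      have h3 := hu i
      simp only [Multiset.map_cons, Multiset.sum_cons] at h3
      push_cast at h3
      have h0 : (0 : ℝ) ≤ (Finset.univ.filter fun w => ψ w = i).card := Nat.cast_nonneg _
      have h1' : (((A i).filter fun v => ∃ f ∈ 𝒯, v ∈ Set.range f).card : ℝ) + (U i).card
        = (A i).card := by exact_mod_cast h1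
      have h2' : (((A i).filter fun v => ∃ f ∈ 𝒯, v ∈ Set.range f).card : ℝ) ≤
        ((s.map fun ψ => (Finset.univ.filter fun w => ψ w = i).card).sum : ℕ) := by
        exact_mod_cast h2
      push_cast at h2'
      linarith
    have w0 : W := Classical.arbitrary W
    have : Nonempty V := by
      have h1 := hU (ψ w0)
      have h2 : (0 : ℝ) < (U (ψ w0)).card := by nlinarith
      have h3 : 0 < (U (ψ w0)).card := by exact_mod_cast h2
      obtain ⟨v, -⟩ := Finset.card_pos.1 h3
      exact ⟨v⟩
    obtain ⟨f, hf1, hf2, hf3⟩ := komlos_embed G H d τ X hd hd1 hX1 hτ0 hX (fun w => A (ψ w))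
      (fun a b hab => hA _ _ (hs ψ (Multiset.mem_cons_self _ _) a b hab)) Finset.univ
      (fun w => U (ψ w)) (fun w => Finset.filter_subset _ _)
      (fun w _ => by rw [Finset.card_univ]; exact hU _)
    have hfU : ∀ w, f w ∈ A (ψ w) ∧ ∀ g ∈ 𝒯, f w ∉ Set.range g := by
      intro w
      have := hf1 w (Finset.mem_univ _)
      simp only [U, Finset.mem_filter] at this
      push Not at this
      exact this
    have hfT : f ∉ 𝒯 := fun h => (hfU w0).2 f h ⟨w0, rfl⟩
    have hd' : ∀ g ∈ 𝒯, Disjoint (Set.range f) (Set.range g) := by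
      intro g hg
      rw [Set.disjoint_left]
      rintro _ ⟨w, rfl⟩ h
      exact (hfU w).2 g hg h
    refine ⟨insert f 𝒯, ⟨?_, ?_⟩, ?_, ?_⟩
    · intro g hg
      rcases Finset.mem_insert.1 hg with rfl | hg
      · refine ⟨fun a b hab => ?_, fun a b hab => hf3 a (Finset.mem_univ _) b (Finset.mem_univ _) hab⟩
        by_contra hne
        exact hf2 a (Finset.mem_univ _) b (Finset.mem_univ _) hne hab
      · exact hT.1 g hg
    · rw [Finset.coe_insert]
      apply hT.2.insert
      intro g hg _
      exact ⟨hd' g hg, (hd' g hg).symm⟩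
    · rw [Finset.card_insert_of_notMem hfT, hcard, Multiset.card_cons]
    · intro i
      simp only [Multiset.map_cons, Multiset.sum_cons]
      refine le_trans (Finset.card_le_card (t := ((Finset.univ.filter fun w => ψ w = i).image f) ∪
        ((A i).filter fun v => ∃ f ∈ 𝒯, v ∈ Set.range f)) ?_) ?_
      · intro v hv
        rw [Finset.mem_filter] at hv
        obtain ⟨hvA, g, hg, hvg⟩ := hv
        rw [Finset.mem_union]
        rcases Finset.mem_insert.1 hg with rfl | hg
        · left
          obtain ⟨w, rfl⟩ := hvg
          refine Finset.mem_image.2 ⟨w, ?_, rfl⟩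
          simp only [Finset.mem_filter, Finset.mem_univ, true_and]
          by_contra hne
          exact Finset.disjoint_left.1 (hdisj _ _ hne) (hfU w).1 hvA
        · right
          exact Finset.mem_filter.2 ⟨hvA, g, hg, hvg⟩
      · exact (Finset.card_union_le _ _).trans (Nat.add_le_add Finset.card_image_le (hcov i))

open scoped Classical in
/-- The reduced graph obtained from the regularity lemma. -/
lemma komlos_reduced (a γ e : ℝ) (ha0 : 0 ≤ a) (ha1 : a ≤ 1) (hγ : 0 < γ) (hγ1 : γ ≤ 1 / 2)
    (he : 0 < e) (heγ : e ≤ γ ^ 2) :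
    ∃ K0 : ℕ, ∀ (V : Type) [Fintype V] (G : SimpleGraph V) [DecidableRel G.Adj] (L0 : ℕ),
      K0 * L0 ≤ Fintype.card V → 1 ≤ γ * L0 → K0 ≤ Fintype.card V →
      (∀ v : V, a * Fintype.card V ≤ (G.degree v : ℝ)) →
      ∃ (K L : ℕ) (M : Finset (Finset V)) (R : SimpleGraph M),
        0 < K ∧ K ≤ K0 ∧ L0 ≤ L ∧ Fintype.card V ≤ K * L + K ∧
        (∀ i j : M, i ≠ j → Disjoint (i : Finset V) (j : Finset V)) ∧
        (∀ i : M, L ≤ (i : Finset V).card ∧ (i : Finset V).card ≤ L + 1) ∧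
        (1 - γ) * K ≤ M.card ∧ M.card ≤ K ∧
        (∀ i j : M, R.Adj i j → G.IsUniform e (i : Finset V) (j : Finset V) ∧
          γ ≤ (G.edgeDensity (i : Finset V) (j : Finset V) : ℝ)) ∧
        ∀ i : M, ((Finset.univ.filter fun j => ¬ R.Adj i j).card : ℝ) ≤
          (1 - a + 10 * γ) * M.card := by
  obtain ⟨l, hl⟩ := exists_nat_gt (1 / γ)
  refine ⟨max l (SzemerediRegularity.bound e l), ?_⟩
  intro V _ G _ L0 hL0 hγL0 hn hdeg
  set K0 := max l (SzemerediRegularity.bound e l) with hK0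
  set n := Fintype.card V with hndef
  obtain ⟨P, hPeq, hlP, hPb, hPu⟩ := szemeredi_regularity G he (l := l)
    ((le_max_left _ _).trans hn)
  set K := P.parts.card with hK
  set L := n / K with hL
  have hlpos : 0 < l := by
    have : (0 : ℝ) < l := lt_trans (by positivity) hl
    exact_mod_cast this
  have hKpos : 0 < K := lt_of_lt_of_le hlpos hlP
  have hKR : (0 : ℝ) < K := by exact_mod_cast hKpos
  have hKγ : 1 ≤ γ * K := by
    have h1 : (l : ℝ) ≤ K := by exact_mod_cast hlP
    have h2 : 1 / γ < K := by linarith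
    rw [div_lt_iff₀ hγ] at h2
    linarith
  have hKK0 : K ≤ K0 := hPb.trans (le_max_right _ _)
  have hLL0 : L0 ≤ L := by
    rw [hL, Nat.le_div_iff_mul_le hKpos]
    calc L0 * K ≤ L0 * K0 := Nat.mul_le_mul_left _ hKK0
      _ = K0 * L0 := mul_comm _ _
      _ ≤ n := hL0
  have hLγ : 1 ≤ γ * L := by
    have : (L0 : ℝ) ≤ L := by exact_mod_cast hLL0
    nlinarith
  have hLR : (0 : ℝ) < L := by
    by_contra hcon
    push Not at hcon
    nlinarith
  have hnKL : n ≤ K * L + K := by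
    have h1 := Nat.div_add_mod n K
    have h2 := Nat.mod_lt n hKpos
    rw [← hL] at h1
    omega
  have hnKL' : (n : ℝ) ≤ K * L + K := by exact_mod_cast hnKL
  have hpart : ∀ A ∈ P.parts, L ≤ A.card ∧ A.card ≤ L + 1 := by
    intro A hA
    have h1 := hPeq.average_le_card_part hA
    have h2 := hPeq.card_part_le_average_add_one hA
    rw [Finset.card_univ] at h1 h2
    exact ⟨h1, h2⟩
  let nu : Finset V → Finset (Finset V) := fun A =>
    P.parts.filter fun B => A ≠ B ∧ ¬ G.IsUniform e A B
  let M : Finset (Finset V) := P.parts.filter fun A => ((nu A).card : ℝ) ≤ γ * K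
  let R : SimpleGraph M :=
    { Adj := fun i j => (i : Finset V) ≠ j ∧ G.IsUniform e (i : Finset V) (j : Finset V) ∧
        γ ≤ (G.edgeDensity (i : Finset V) (j : Finset V) : ℝ)
      symm := ⟨fun i j h => ⟨h.1.symm, h.2.1.symm, by rw [G.edgeDensity_comm]; exact h.2.2⟩⟩
      loopless := ⟨fun i h => h.1 rfl⟩ }
  have hMP : M ⊆ P.parts := Finset.filter_subset _ _
  have hMK : M.card ≤ K := Finset.card_le_card hMP
  have hMcard : (1 - γ) * K ≤ M.card := by
    have h1 : (∑ A ∈ P.parts, ((nu A).card : ℝ)) = ((P.nonUniforms G e).card : ℝ) := by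
      have h0 : P.nonUniforms G e =
          (P.parts ×ˢ P.parts).filter fun x => x.1 ≠ x.2 ∧ ¬ G.IsUniform e x.1 x.2 := by
        ext ⟨A, B⟩
        simp only [Finpartition.mk_mem_nonUniforms, Finset.mem_filter, Finset.mem_product]
        tauto
      rw [h0, Finset.card_filter, Finset.sum_product]
      push_cast
      refine Finset.sum_congr rfl fun A _ => ?_
      simp only [nu, Finset.card_filter]
      push_cast
      rfl
    have h2 : ((P.nonUniforms G e).card : ℝ) ≤ K * K * γ ^ 2 := by
      refine le_trans hPu ?_
      have h3 : ((K * (K - 1) : ℕ) : ℝ) ≤ K * K := by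
        exact_mod_cast Nat.mul_le_mul_left _ (Nat.sub_le _ _)
      calc _ ≤ (K * K : ℝ) * e := by gcongr
        _ ≤ _ := by gcongr
    have h3 : ∑ A ∈ P.parts.filter (fun A => ¬ ((nu A).card : ℝ) ≤ γ * K), (γ * K) ≤
        ∑ A ∈ P.parts, ((nu A).card : ℝ) := by
      refine le_trans (Finset.sum_le_sum (g := fun A => ((nu A).card : ℝ)) ?_) ?_
      · intro A hA
        exact (not_le.1 (Finset.mem_filter.1 hA).2).le
      · exact Finset.sum_le_sum_of_subset_of_nonneg (Finset.filter_subset _ _)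
          (fun _ _ _ => Nat.cast_nonneg _)
    rw [Finset.sum_const, nsmul_eq_mul, h1] at h3
    have h4 := Finset.card_filter_add_card_filter_not (s := P.parts)
      (fun A => ((nu A).card : ℝ) ≤ γ * K)
    have h5 : (M.card : ℝ) + (P.parts.filter (fun A => ¬ ((nu A).card : ℝ) ≤ γ * K)).card = K := by
      exact_mod_cast h4
    set b : ℝ := ((P.parts.filter (fun A => ¬ ((nu A).card : ℝ) ≤ γ * K)).card : ℝ)
    have h6 : b * (γ * K) ≤ (γ * K) * (γ * K) := by nlinarith
    have h7 : b ≤ γ * K := le_of_mul_le_mul_right h6 (by positivity)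
    linarith
  refine ⟨K, L, M, R, hKpos, hKK0, hLL0, hnKL, ?_, fun i => hpart i (hMP i.2), hMcard, hMK,
    fun i j h => h.2, ?_⟩
  · intro i j hij
    exact P.disjoint (hMP i.2) (hMP j.2) (fun h => hij (Subtype.ext h))
  · rintro ⟨A, hAM⟩
    have hAP := hMP hAM
    have hnuA : ((nu A).card : ℝ) ≤ γ * K := (Finset.mem_filter.1 hAM).2
    let sp : Finset (Finset V) := P.parts.filter fun B => (G.edgeDensity A B : ℝ) < γ
    have hsub : ((Finset.univ.filter fun j => ¬ R.Adj ⟨A, hAM⟩ j).card : ℝ) ≤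
        1 + (nu A).card + sp.card := by
      have h1 : ((Finset.univ.filter fun j => ¬ R.Adj ⟨A, hAM⟩ j).map
          (Function.Embedding.subtype _)) ⊆ ({A} ∪ nu A) ∪ sp := by
        intro B hB
        rw [Finset.mem_map] at hB
        obtain ⟨⟨B, hBM⟩, hB, rfl⟩ := hB
        have hB2 := (Finset.mem_filter.1 hB).2
        simp only [Function.Embedding.subtype_apply, Finset.mem_union, Finset.mem_singleton]
        by_cases c1 : B = A
        · exact Or.inl (Or.inl c1)
        by_cases c2 : G.IsUniform e A B
        · right
          refine Finset.mem_filter.2 ⟨hMP hBM, ?_⟩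
          by_contra c3
          exact hB2 ⟨fun h => c1 h.symm, c2, not_lt.1 c3⟩
        · exact Or.inl (Or.inr (Finset.mem_filter.2 ⟨hMP hBM, fun h => c1 h.symm, c2⟩))
      have h2 := Finset.card_le_card h1
      rw [Finset.card_map] at h2
      have h3 := Finset.card_union_le ({A} ∪ nu A) sp
      have h4 := Finset.card_union_le {A} (nu A)
      rw [Finset.card_singleton] at h4
      have : (Finset.univ.filter fun j => ¬ R.Adj ⟨A, hAM⟩ j).card ≤ 1 + (nu A).card + sp.card := by
        omega
      exact_mod_cast this
    have hA1 := (hpart A hAP).1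
    have hA1' : (L : ℝ) ≤ A.card := by exact_mod_cast hA1
    have hApos : (0 : ℝ) < A.card := by linarith
    have hedge : a * n * A.card ≤ ∑ B ∈ P.parts, ((G.interedges A B).card : ℝ) := by
      have h1 := Rel.card_interedges_finpartition_right G.Adj A P
      have h2 : (Rel.interedges G.Adj A Finset.univ).card = ∑ v ∈ A, G.degree v := by
        rw [Rel.interedges, Finset.card_filter, Finset.sum_product]
        refine Finset.sum_congr rfl fun v _ => ?_
        rw [← Finset.card_filter, ← SimpleGraph.card_neighborFinset_eq_degree,
          SimpleGraph.neighborFinset_eq_filter]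
      have h3 : ∑ v ∈ A, a * n ≤ ∑ v ∈ A, (G.degree v : ℝ) :=
        Finset.sum_le_sum fun v _ => hdeg v
      rw [Finset.sum_const, nsmul_eq_mul] at h3
      rw [h2] at h1
      have h1' : ∑ v ∈ A, (G.degree v : ℝ) = ∑ B ∈ P.parts, ((G.interedges A B).card : ℝ) := by
        exact_mod_cast h1
      linarith
    have hparts : ∑ B ∈ P.parts, (B.card : ℝ) = n := by
      have := P.sum_card_parts
      rw [Finset.card_univ] at this
      exact_mod_cast this
    have hsp : ∑ B ∈ sp, (1 - γ) * (A.card * L) ≤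
        ∑ B ∈ P.parts, ((A.card : ℝ) * B.card - (G.interedges A B).card) := by
      refine le_trans (Finset.sum_le_sum (g := fun B =>
        ((A.card : ℝ) * B.card - (G.interedges A B).card)) ?_) ?_
      · intro B hB
        obtain ⟨hBP, hBd⟩ := Finset.mem_filter.1 hB
        have hB1 : (L : ℝ) ≤ B.card := by exact_mod_cast (hpart B hBP).1
        rw [SimpleGraph.edgeDensity_def] at hBd
        push_cast at hBd
        have hBpos : (0 : ℝ) < B.card := by linarith
        rw [div_lt_iff₀ (by positivity)] at hBd
        have : (1 - γ) * (A.card * L) ≤ (1 - γ) * (A.card * B.card) := by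
          apply mul_le_mul_of_nonneg_left _ (by linarith)
          gcongr
        linarith
      · refine Finset.sum_le_sum_of_subset_of_nonneg (Finset.filter_subset _ _) ?_
        intro B _ _
        have := G.card_interedges_le_mul A B
        have : ((G.interedges A B).card : ℝ) ≤ A.card * B.card := by exact_mod_cast this
        linarith
    rw [Finset.sum_const, nsmul_eq_mul, Finset.sum_sub_distrib, ← Finset.mul_sum, hparts] at hsp
    have hsp2 : (A.card : ℝ) * (sp.card * (1 - γ) * L) ≤ A.card * ((1 - a) * n) := by nlinarith
    have hsp3 : sp.card * (1 - γ) * L ≤ (1 - a) * n := le_of_mul_le_mul_left hsp2 hApos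
    have hsp4 : (sp.card : ℝ) * (1 - γ) ≤ (1 - a) * K + γ * K := by
      have h1 : (1 - a) * n ≤ (1 - a) * (K * L + K) :=
        mul_le_mul_of_nonneg_left hnKL' (by linarith)
      have h2 : (1 - a) * K ≤ 1 * (K * (γ * L)) := by
        calc (1 - a) * K ≤ 1 * K := by gcongr; linarith
          _ = K * 1 := by ring
          _ ≤ K * (γ * L) := by gcongr
          _ = _ := by ring
      have h3 : (sp.card * (1 - γ)) * L ≤ ((1 - a) * K + γ * K) * L := by linarith
      exact le_of_mul_le_mul_right h3 hLR
    have hspK : (sp.card : ℝ) ≤ K := by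
      exact_mod_cast Finset.card_le_card (Finset.filter_subset _ P.parts)
    have hsp5 : (sp.card : ℝ) ≤ (1 - a + 2 * γ) * K := by
      have := mul_le_mul_of_nonneg_left hspK hγ.le
      linarith
    have htot : (1 : ℝ) + (nu A).card + sp.card ≤ (1 - a + 4 * γ) * K := by linarith
    refine le_trans (le_of_eq ?_) (hsub.trans (htot.trans ?_))
    · congr!
    have hK2 : (K : ℝ) ≤ 2 * M.card := by
      have := mul_le_mul_of_nonneg_right hγ1 hKR.le
      linarith
    have h1 : (K : ℝ) ≤ M.card + γ * (2 * M.card) := by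
      have := mul_le_mul_of_nonneg_left hK2 hγ.le
      linarith
    have h2 : (1 - a + 4 * γ) * K ≤ (1 - a + 4 * γ) * (M.card + γ * (2 * M.card)) :=
      mul_le_mul_of_nonneg_left h1 (by linarith)
    have h3 : (1 - a + 4 * γ) * (γ * (2 * M.card)) ≤ 3 * (γ * (2 * M.card)) :=
      mul_le_mul_of_nonneg_right (by linarith) (by positivity)
    linarith


open scoped Classical in
/-- Fractional tilings of the reduced graph. -/
lemma komlos_fractional {W M : Type*} [Fintype W] [Nonempty W] [Fintype M] [Nonempty M]
    (H : SimpleGraph W)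
    {p : ℕ} (hp : 0 < p) (c : H.Coloring (Fin (p + 1))) (σ : ℕ)
    (hσ : (Finset.univ.filter fun v => c v = Fin.last p).card = σ) (hσ0 : 0 < σ)
    (R : SimpleGraph M) (γ : ℝ) (hγ : 0 ≤ γ) (hγ1 : (p + 1) * γ * Fintype.card W < 1)
    (hR : ∀ v : M, ((Finset.univ.filter fun u => ¬ R.Adj v u).card : ℝ) ≤
      (((Fintype.card W : ℝ) - σ) / (p * Fintype.card W) + γ) * Fintype.card M) :
    ∃ l : {ψ : W → M // ∀ a b, H.Adj a b → R.Adj (ψ a) (ψ b)} → ℝ,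
      (∀ i, 0 ≤ l i) ∧ ∑ i, l i = 1 ∧
      ∀ v, ∑ i, l i * ((Finset.univ.filter fun w => i.1 w = v).card : ℝ) ≤
        Fintype.card W / ((1 - (p + 1) * γ * Fintype.card W) * Fintype.card M) := by
  refine komlos_minimax
    (fun (i : {ψ : W → M // ∀ a b, H.Adj a b → R.Adj (ψ a) (ψ b)}) v =>
      ((Finset.univ.filter fun w => i.1 w = v).card : ℝ)) _ ?_
  intro y hy
  obtain ⟨ψ, hψ, hle⟩ := komlos_dual H hp c σ hσ hσ0 R γ hγ hγ1 hR y hy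
  refine ⟨⟨ψ, hψ⟩, ?_⟩
  have hm : (0 : ℝ) < Fintype.card M := by exact_mod_cast Fintype.card_pos
  have hpos : 0 < (1 - (p + 1) * γ * Fintype.card W) * (Fintype.card M : ℝ) :=
    mul_pos (by linarith) hm
  have h1 : ∑ v, y v * ((Finset.univ.filter fun w => ψ w = v).card : ℝ) = ∑ w, y (ψ w) := by
    rw [← Finset.sum_fiberwise (Finset.univ) ψ (fun w => y (ψ w))]
    refine Finset.sum_congr rfl fun v _ => ?_
    rw [Finset.sum_congr rfl (g := fun _ => y v)]
    · rw [Finset.sum_const, nsmul_eq_mul, mul_comm]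
    · intro w hw
      rw [(Finset.mem_filter.1 hw).2]
  simp only [h1]
  rw [div_mul_eq_mul_div, le_div_iff₀ hpos]
  linarith

open scoped Classical in
/-- Rounding a fractional tiling. -/
lemma komlos_round {W M I : Type*} [Fintype W] [Fintype I] (g : I → W → M)
    (l : I → ℝ) (hl : ∀ i, 0 ≤ l i) (hl1 : ∑ i, l i = 1) (B N : ℝ) (hN : 0 ≤ N)
    (hB : ∀ v, ∑ i, l i * ((Finset.univ.filter fun w => g i w = v).card : ℝ) ≤ B) :
    ∃ s : Multiset (W → M), (∀ ψ ∈ s, ∃ i, ψ = g i) ∧ N - Fintype.card I ≤ (s.card : ℝ) ∧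
      ∀ v, ((s.map fun ψ => (Finset.univ.filter fun w => ψ w = v).card).sum : ℝ) ≤ N * B := by
  refine ⟨∑ i, ⌊l i * N⌋₊ • {g i}, ?_, ?_, ?_⟩
  · intro ψ hψ
    rw [Multiset.mem_sum] at hψ
    obtain ⟨i, -, hi⟩ := hψ
    exact ⟨i, by simpa using Multiset.mem_of_mem_nsmul hi⟩
  · rw [Multiset.card_sum]
    simp only [Multiset.card_nsmul, Multiset.card_singleton, mul_one]
    push_cast
    have : ∑ i, (l i * N - 1) ≤ ∑ i, ((⌊l i * N⌋₊ : ℕ) : ℝ) :=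
      Finset.sum_le_sum fun i _ => (Nat.sub_one_lt_floor _).le
    rw [Finset.sum_sub_distrib, ← Finset.sum_mul, hl1] at this
    simpa using this
  · intro v
    have h1 : ((∑ i, ⌊l i * N⌋₊ • ({g i} : Multiset (W → M))).map
        fun ψ => (Finset.univ.filter fun w => ψ w = v).card).sum =
        ∑ i, ⌊l i * N⌋₊ * (Finset.univ.filter fun w => g i w = v).card := by
      have := map_sum ((Multiset.sumAddMonoidHom (M := ℕ)).comp (Multiset.mapAddMonoidHom
        (fun ψ : W → M => (Finset.univ.filter fun w => ψ w = v).card)))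
        (fun i => ⌊l i * N⌋₊ • ({g i} : Multiset (W → M))) Finset.univ
      refine this.trans (Finset.sum_congr rfl fun i _ => ?_)
      simp [Multiset.map_nsmul, Multiset.sum_nsmul]
    rw [h1]
    push_cast
    calc _ ≤ ∑ i, (l i * N) * ((Finset.univ.filter fun w => g i w = v).card : ℝ) := by
          refine Finset.sum_le_sum fun i _ => ?_
          apply mul_le_mul_of_nonneg_right _ (Nat.cast_nonneg _)
          exact Nat.floor_le (mul_nonneg (hl i) hN)
      _ = N * ∑ i, l i * ((Finset.univ.filter fun w => g i w = v).card : ℝ) := by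
          rw [Finset.mul_sum]
          refine Finset.sum_congr rfl fun i _ => by ring
      _ ≤ N * B := mul_le_mul_of_nonneg_left (hB v) hN

lemma komlos_sigma_pos {W : Type*} [Fintype W] (H : SimpleGraph W) (p σ : ℕ)
    (hk : H.chromaticNumber = ((p + 1 : ℕ) : ℕ∞)) (c : H.Coloring (Fin (p + 1)))
    (i : Fin (p + 1)) (hσ : (Finset.univ.filter fun v => c v = i).card = σ) : 0 < σ := by
  by_contra hcon
  have h0 : σ = 0 := by omega
  rw [h0, Finset.card_eq_zero, Finset.filter_eq_empty_iff] at hσ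
  let c' : H.Coloring {j : Fin (p + 1) // j ≠ i} :=
    SimpleGraph.Coloring.mk (fun w => ⟨c w, hσ (Finset.mem_univ w)⟩)
      (fun hab h => c.valid hab (congrArg Subtype.val h))
  have h1 := c'.colorable.chromaticNumber_le
  rw [hk] at h1
  have h2 : Fintype.card {j : Fin (p + 1) // j ≠ i} = p := by
    simp
  rw [h2] at h1
  have : p + 1 ≤ p := by exact_mod_cast h1
  omega

set_option maxHeartbeats 2000000

/-- **Theorem (Komlós).** For every graph `H` with at least one edge and every `ε > 0`
there is `n₀` such that every graph `G` on `n ≥ n₀` vertices with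
`δ(G) ≥ (1 - 1/χ_cr(H))n` has an `H`-tiling covering all but at most `εn` vertices. -/
theorem komlos_tiling
    {W : Type} [Fintype W] (H : SimpleGraph W) (hedge : ∃ a b : W, H.Adj a b)
    (k σ : ℕ) (hk : H.chromaticNumber = (k : ℕ∞)) (hσ : IsMinColorClassSize H k σ)
    (ε : ℝ) (hε : 0 < ε) :
    ∃ n₀ : ℕ, ∀ (V : Type) [Fintype V] (G : SimpleGraph V) [DecidableRel G.Adj],
      n₀ ≤ Fintype.card V →
      (∀ v : V, (1 - 1 / (((k : ℝ) - 1) * (Fintype.card W) /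
          ((Fintype.card W : ℝ) - σ))) * (Fintype.card V) ≤ (G.degree v : ℝ)) →
      ∃ 𝒯 : Finset (W → V), IsTiling H G 𝒯 ∧
        ((untiled 𝒯).ncard : ℝ) ≤ ε * (Fintype.card V) := by
  classical
  obtain ⟨⟨c0, i0, hc0⟩, -⟩ := hσ
  obtain ⟨p, rfl, hp⟩ : ∃ p, k = p + 1 ∧ 0 < p := by
    obtain ⟨a, b, hab⟩ := hedge
    have h1 := c0.valid hab
    have h2 : (c0 a : ℕ) ≠ c0 b := fun h => h1 (Fin.ext h)
    have h3 := (c0 a).2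
    have h4 := (c0 b).2
    exact ⟨k - 1, by omega, by omega⟩
  have : Nonempty W := ⟨hedge.choose⟩
  have hσ0 : 0 < σ := komlos_sigma_pos H p σ hk c0 i0 (by convert hc0)
  let c : H.Coloring (Fin (p + 1)) :=
    SimpleGraph.Coloring.mk (fun w => Equiv.swap i0 (Fin.last p) (c0 w))
      (fun hab h => c0.valid hab ((Equiv.swap i0 (Fin.last p)).injective h))
  have hc : (Finset.univ.filter fun v => c v = Fin.last p).card = σ := by
    rw [← hc0]
    congr 1
    ext w
    simp only [Finset.mem_filter, Finset.mem_univ, true_and]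
    change Equiv.swap i0 (Fin.last p) (c0 w) = Fin.last p ↔ _
    rw [Equiv.swap_apply_eq_iff, Equiv.swap_apply_right]
  have hσh : σ ≤ Fintype.card W := by rw [← hc]; exact Finset.card_filter_le _ _
  have hσh' : (σ : ℝ) ≤ Fintype.card W := by exact_mod_cast hσh
  have hh1 : (1 : ℝ) ≤ Fintype.card W := by exact_mod_cast Fintype.card_pos (α := W)
  have hp1 : (1 : ℝ) ≤ p := by exact_mod_cast hp
  have hσ0' : (0 : ℝ) ≤ σ := Nat.cast_nonneg _
  set h : ℝ := (Fintype.card W : ℝ) with hh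
  obtain ⟨r, hr0, hr1, hrε⟩ : ∃ r : ℝ, 0 < r ∧ r ≤ 1 / 8 ∧ 8 * r ≤ ε := by
    refine ⟨min ε 1 / 8, by positivity, ?_, ?_⟩
    · have := min_le_right ε 1; linarith
    · have := min_le_left ε 1; linarith
  set γ : ℝ := r / (10 * (p + 1) * h) with hγdef
  have hγ : 0 < γ := by positivity
  have hγr : (p + 1) * (10 * γ) * h = r := by rw [hγdef]; field_simp
  have hγler : γ ≤ r := by
    have : 1 * (10 * γ) * 1 ≤ (p + 1) * (10 * γ) * h := by gcongr; linarith
    linarith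
  set d : ℝ := γ / 2 with hd
  have hd0 : 0 < d := by positivity
  obtain ⟨e, he0, he1, he2, he3⟩ : ∃ e : ℝ, 0 < e ∧ e ≤ γ ^ 2 ∧ e ≤ γ / 2 ∧
      2 * h * e * (2 / d) ^ Fintype.card W ≤ r := by
    refine ⟨min (γ ^ 2) (min (γ / 2) (r / (2 * h * (2 / d) ^ Fintype.card W))),
      by positivity, min_le_left _ _, (min_le_right _ _).trans (min_le_left _ _), ?_⟩
    have h1 : min (γ ^ 2) (min (γ / 2) (r / (2 * h * (2 / d) ^ Fintype.card W))) ≤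
      r / (2 * h * (2 / d) ^ Fintype.card W) := (min_le_right _ _).trans (min_le_right _ _)
    rw [le_div_iff₀ (by positivity)] at h1
    linarith
  set a : ℝ := 1 - (h - σ) / (p * h) with ha
  have haeq : 1 - 1 / ((((p + 1 : ℕ) : ℝ) - 1) * h / (h - σ)) = a := by
    rw [ha, one_div_div]
    push_cast
    ring_nf
  have hq0 : 0 ≤ (h - σ) / (p * h) := div_nonneg (by linarith) (by positivity)
  have hq1 : (h - σ) / (p * h) ≤ 1 := by
    rw [div_le_one (by positivity)]
    nlinarith
  obtain ⟨K0, hK0⟩ := komlos_reduced a γ e (by linarith) (by linarith) hγ (by linarith) he0 he1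
  obtain ⟨L0, hL0⟩ := exists_nat_gt (1 / e)
  have hL0e : 1 ≤ e * L0 := by
    rw [div_lt_iff₀ he0] at hL0
    linarith
  obtain ⟨n1, hn1⟩ := exists_nat_gt ((K0 + h * (K0 : ℝ) ^ Fintype.card W) / r)
  refine ⟨K0 * L0 + K0 + n1, ?_⟩
  intro V _ G _ hn hdeg
  have hL0nn : (0 : ℝ) ≤ L0 := Nat.cast_nonneg _
  obtain ⟨K, L, M, R, hKpos, hKK0, hLL0, hnKL, hdisj, hsize, hMlow, hMup, hadj, hnon⟩ :=
    hK0 V G L0 (by omega) (by nlinarith) (by omega) (fun v => by rw [← haeq]; exact hdeg v)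
  set n : ℝ := (Fintype.card V : ℝ) with hndef
  have hKR : (0 : ℝ) < K := by exact_mod_cast hKpos
  have hKK0' : (K : ℝ) ≤ K0 := by exact_mod_cast hKK0
  have hLL0' : (L0 : ℝ) ≤ L := by exact_mod_cast hLL0
  have hL1 : 1 ≤ e * L := hL0e.trans (by gcongr)
  have hLpos : 1 ≤ L := by
    by_contra hcon
    have : L = 0 := by omega
    rw [this] at hL1
    norm_num at hL1
  have hLR : (1 : ℝ) ≤ L := by exact_mod_cast hLpos
  have hnKL' : n ≤ K * L + K := by rw [hndef]; exact_mod_cast hnKL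
  have hMpos : (0 : ℝ) < M.card := lt_of_lt_of_le (mul_pos (by linarith) hKR) hMlow
  have hMup' : (M.card : ℝ) ≤ K0 := by
    have : M.card ≤ K0 := hMup.trans hKK0
    exact_mod_cast this
  have hMne : Nonempty M := by
    have : 0 < M.card := by exact_mod_cast hMpos
    obtain ⟨A, hA⟩ := Finset.card_pos.1 this
    exact ⟨⟨A, hA⟩⟩
  have hMcard : Fintype.card M = M.card := Fintype.card_coe M
  obtain ⟨l, hl0, hl1, hlB⟩ := komlos_fractional H hp c σ (by convert hc) hσ0 R (10 * γ)
    (by positivity) (by rw [hγr]; linarith) (by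
      intro v
      have h1 := hnon v
      rw [hMcard]
      have h2 : 1 - a + 10 * γ = (h - σ) / (p * h) + 10 * γ := by rw [ha]; ring
      rw [h2] at h1
      convert h1)
  rw [← hh, hγr, hMcard] at hlB
  have hr1' : 0 < 1 - r := by linarith
  obtain ⟨s, hs1, hs2, hs3⟩ := komlos_round (fun i => i.1) l hl0 hl1 _
    ((1 - r) * (1 - r) * L * M.card / h) (by positivity) hlB
  have hNB : (1 - r) * (1 - r) * L * M.card / h * (h / ((1 - r) * M.card)) = (1 - r) * L := by
    field_simp
  rw [hNB] at hs3
  obtain ⟨𝒯, hT, hTcard, -⟩ := komlos_pack G H R (fun i => (i : Finset V)) hdisj d (e * (L + 1))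
    (h * (e * (L + 1))) hd0 (by linarith)
    (by
      have : 1 * (e * L) ≤ h * (e * (L + 1)) := by gcongr; linarith
      linarith)
    (by positivity) le_rfl
    (by
      intro i j hij S hS T hT hSc hTc
      obtain ⟨hu, hden⟩ := hadj i j hij
      have hi : ((i : Finset V).card : ℝ) ≤ L + 1 := by exact_mod_cast (hsize i).2
      have hj : ((j : Finset V).card : ℝ) ≤ L + 1 := by exact_mod_cast (hsize j).2
      have h1 := hu hS hT (le_trans (by rw [mul_comm]; gcongr) hSc)
        (le_trans (by rw [mul_comm]; gcongr) hTc)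
      have h2 := (abs_lt.1 h1).1
      have h3 : d ≤ (G.edgeDensity S T : ℝ) := by linarith
      rw [SimpleGraph.edgeDensity_def] at h3
      push_cast at h3
      have hS0 : (0 : ℝ) < S.card := lt_of_lt_of_le (by positivity) hSc
      have hT0 : (0 : ℝ) < T.card := lt_of_lt_of_le (by positivity) hTc
      rw [le_div_iff₀ (by positivity)] at h3
      linarith)
    s
    (by
      intro ψ hψ
      obtain ⟨i, rfl⟩ := hs1 ψ hψ
      exact i.2)
    (by
      intro i
      have h1 := hs3 i
      have hi : (L : ℝ) ≤ ((i : Finset V).card : ℝ) := by exact_mod_cast (hsize i).1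
      have h2 : h * (e * (L + 1)) * (2 / d) ^ Fintype.card W ≤ r * L := by
        calc h * (e * (L + 1)) * (2 / d) ^ Fintype.card W
            ≤ h * (e * (L + L)) * (2 / d) ^ Fintype.card W := by gcongr
          _ = (2 * h * e * (2 / d) ^ Fintype.card W) * L := by ring
          _ ≤ r * L := by gcongr
      have h3 : (1 - r) * (L : ℝ) + r * L ≤ ((i : Finset V).card : ℝ) := by
        linarith
      refine le_trans (add_le_add (b := (1 - r) * (L : ℝ)) ?_ h2) h3
      convert h1)
  refine ⟨𝒯, hT, ?_⟩
  have hcov : ((untiled 𝒯).ncard : ℝ) + h * 𝒯.card = n := by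
    rw [hndef, hh]; exact_mod_cast komlos_untiled hT
  have hI : (Fintype.card {ψ : W → M // ∀ a b, H.Adj a b → R.Adj (ψ a) (ψ b)} : ℝ) ≤
      (K0 : ℝ) ^ Fintype.card W := by
    have h1 := Fintype.card_subtype_le (fun ψ : W → M => ∀ a b, H.Adj a b → R.Adj (ψ a) (ψ b))
    rw [Fintype.card_fun, hMcard] at h1
    have h2 : (Fintype.card {ψ : W → M // ∀ a b, H.Adj a b → R.Adj (ψ a) (ψ b)} : ℝ) ≤
      (M.card : ℝ) ^ Fintype.card W := by
      refine le_trans (le_of_eq ?_) (Nat.cast_le.2 h1) |>.trans (by push_cast; exact le_rfl)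
      congr!
    exact h2.trans (by gcongr)
  have hnn1 : (K0 + h * (K0 : ℝ) ^ Fintype.card W) ≤ r * n := by
    have h1 : (n1 : ℝ) ≤ n := by
      have : n1 ≤ Fintype.card V := by omega
      rw [hndef]; exact_mod_cast this
    have h2 := hn1.le.trans h1
    rw [div_le_iff₀ hr0] at h2
    linarith
  have hn0 : 0 ≤ n := Nat.cast_nonneg _
  have hTc : (1 - r) * (1 - r) * L * M.card - h * (K0 : ℝ) ^ Fintype.card W ≤ h * 𝒯.card := by
    rw [hTcard]
    have h1 : (1 - r) * (1 - r) * L * M.card / h - (K0 : ℝ) ^ Fintype.card W ≤ (s.card : ℝ) := by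
      refine le_trans ?_ hs2
      linarith
    have h2 : h * ((1 - r) * (1 - r) * L * M.card / h - (K0 : ℝ) ^ Fintype.card W) ≤
      h * (s.card : ℝ) := by gcongr
    refine le_trans (le_of_eq ?_) h2
    field_simp
  have hM2 : (1 - r) * K ≤ M.card := by
    refine le_trans ?_ hMlow
    gcongr
  have h5 : (1 - r) * (1 - r) * L * ((1 - r) * K) ≤ (1 - r) * (1 - r) * L * M.card := by
    gcongr
  have h6 : (1 - r) * (1 - r) * (1 - r) * (n - K) ≤ (1 - r) * (1 - r) * (1 - r) * (K * L) := by
    have : n - K ≤ K * L := by linarith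
    gcongr
  have h7 : (1 - r) * (1 - r) * (1 - r) * K ≤ 1 * 1 * 1 * K := by
    gcongr <;> linarith
  have h8 : (1 - 3 * r) * n ≤ (1 - r) * (1 - r) * (1 - r) * n := by
    apply mul_le_mul_of_nonneg_right _ hn0
    nlinarith [mul_nonneg hr0.le hr0.le]
  have h9 : 8 * r * n ≤ ε * n := by gcongr
  have h10 : 0 ≤ r * n := by positivity
  linarith
end

section
/- (Hajnal–Szemerédi.) Let r ≥ 1 and let G be a graph on n vertices with r dividing n. If the minimum degree satisfies δ(G) ≥ (1 − 1/r)·n, then G has a K_r-factor, i.e., a collection of pairwise vertex-disjoint complete subgraphs on r vertices covering every vertex of G. -/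
section HS

open Classical Finset Relation

variable {V κ : Type*}

/-- number of neighbours of `x` in `S` -/
noncomputable def hsDeg (G : SimpleGraph V) (x : V) (S : Finset V) : ℕ :=
  (S.filter (fun y => G.Adj x y)).card

/-- size of a colour class -/
noncomputable def hsSize (U : Finset V) (f : V → κ) (c : κ) : ℕ :=
  (U.filter (fun v => f v = c)).card

/-- `f` is a proper colouring of `G[U]` with colours in `C` -/
def HsCol (G : SimpleGraph V) (U : Finset V) (C : Finset κ) (f : V → κ) : Prop :=
  (∀ v ∈ U, f v ∈ C) ∧ ∀ u ∈ U, ∀ v ∈ U, G.Adj u v → f u ≠ f v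

/-- `x` has no neighbour in the class `c` -/
def HsMv (G : SimpleGraph V) (U : Finset V) (f : V → κ) (x : V) (c : κ) : Prop :=
  ∀ y ∈ U, f y = c → ¬ G.Adj x y

/-- the auxiliary digraph on the colours in `C` -/
def HsArc (G : SimpleGraph V) (U : Finset V) (C : Finset κ) (f : V → κ) (a b : κ) : Prop :=
  a ∈ C ∧ b ∈ C ∧ ∃ x ∈ U, f x = a ∧ HsMv G U f x b

/-- deletion of a vertex of a digraph -/
def HsAv (Q : κ → κ → Prop) (W a b : κ) : Prop := Q a b ∧ a ≠ W ∧ b ≠ W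

lemma hs_last_visit (Q : κ → κ → Prop) (c d : κ) (hcd : c ≠ d) (x : κ)
    (h : ReflTransGen Q x d) :
    (x ≠ c ∧ ReflTransGen (HsAv Q c) x d) ∨
      ∃ e, e ≠ c ∧ Q c e ∧ ReflTransGen (HsAv Q c) e d := by
  induction h using ReflTransGen.head_induction_on with
  | refl => exact Or.inl ⟨hcd.symm, ReflTransGen.refl⟩
  | head hxy htl ih =>
    rename_i x y
    rcases ih with ⟨hy, hp⟩ | h
    · by_cases hx : x = c
      · subst hx
        exact Or.inr ⟨y, hy, hxy, hp⟩
      · exact Or.inl ⟨hx, ReflTransGen.head ⟨hxy, hx, hy⟩ hp⟩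
    · exact Or.inr h

lemma hs_first_step (Q : κ → κ → Prop) (c d : κ) (hcd : c ≠ d)
    (h : ReflTransGen Q c d) :
    ∃ e, e ≠ c ∧ Q c e ∧ ReflTransGen (HsAv Q c) e d := by
  rcases hs_last_visit Q c d hcd c h with h | h
  · exact absurd rfl h.1
  · exact h

lemma hs_size_update (U : Finset V) (f : V → κ) (x : V) (hx : x ∈ U) (e c : κ) :
    hsSize U (Function.update f x e) c + (if c = f x then 1 else 0)
      = hsSize U f c + (if c = e then 1 else 0) := by
  have key : ∀ g : V → κ, hsSize U g c = (if g x = c then 1 else 0)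
      + ∑ v ∈ U.erase x, (if g v = c then 1 else 0) := by
    intro g
    rw [hsSize, card_filter, ← add_sum_erase U _ hx]
  rw [key f, key]
  have : ∑ v ∈ U.erase x, (if Function.update f x e v = c then 1 else 0)
      = ∑ v ∈ U.erase x, (if f v = c then 1 else 0) := by
    apply sum_congr rfl
    intro v hv
    rw [Function.update_of_ne (ne_of_mem_erase hv)]
  rw [this, Function.update_self]
  simp only [eq_comm (a := c)]
  ring

/-- shifting along a path -/
lemma hs_core (G : SimpleGraph V) (U : Finset V) (n : ℕ) :
    ∀ (D : Finset κ), D.card = n → ∀ (f : V → κ) (c e d : κ) (x : V),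
      (∀ u ∈ U, ∀ v ∈ U, G.Adj u v → f u ≠ f v) → c ∉ D → x ∈ U → f x = c → e ∈ D →
      HsMv G U f x e →
      ReflTransGen (HsArc G U D f) e d →
      ∃ f' : V → κ, (∀ u ∈ U, ∀ v ∈ U, G.Adj u v → f' u ≠ f' v) ∧
        (∀ v ∈ U, f v ∉ D → v ≠ x → f' v = f v) ∧
        (∀ v ∈ U, (f v ∈ D ∨ v = x) → f' v ∈ D) ∧
        ∀ k, hsSize U f' k + (if k = c then 1 else 0)
          = hsSize U f k + (if k = d then 1 else 0) := by
  induction n with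
  | zero =>
    intro D hD f c e d x _ _ _ _ he
    rw [card_eq_zero] at hD
    simp [hD] at he
  | succ n ih =>
    intro D hD f c e d x hf hc hx hfx he hm hp
    by_cases hed : e = d
    · subst hed
      refine ⟨Function.update f x e, ?_, ?_, ?_, ?_⟩
      · intro u hu v hv huv
        by_cases h1 : u = x
        · subst h1
          have h2 : v ≠ u := huv.ne'
          rw [Function.update_self, Function.update_of_ne h2]
          intro h3
          exact hm v hv h3.symm huv
        · rw [Function.update_of_ne h1]
          by_cases h2 : v = x
          · subst h2
            rw [Function.update_self]
            intro h3
            exact hm u hu h3 huv.symm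
          · rw [Function.update_of_ne h2]
            exact hf u hu v hv huv
      · intro v hv _ hvx
        rw [Function.update_of_ne hvx]
      · intro v hv h
        by_cases h1 : v = x
        · subst h1; rw [Function.update_self]; exact he
        · rw [Function.update_of_ne h1]
          exact h.resolve_right h1
      · intro k
        rw [← hfx]
        exact hs_size_update U f x hx e k
    · obtain ⟨e', he', ⟨-, he'D, y, hyU, hfy, hmy⟩, hp'⟩ := hs_first_step _ e d hed hp
      have hp'' : ReflTransGen (HsArc G U (D.erase e) f) e' d := by
        refine ReflTransGen.mono ?_ _ _ hp'
        rintro a b ⟨⟨ha, hb, h⟩, hae, hbe⟩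
        exact ⟨mem_erase.2 ⟨hae, ha⟩, mem_erase.2 ⟨hbe, hb⟩, h⟩
      obtain ⟨f', h1, h2, h3, h4⟩ := ih (D.erase e) (by rw [card_erase_of_mem he, hD]; rfl) f e e' d y
        hf (by simp) hyU hfy (mem_erase.2 ⟨he', he'D⟩) hmy hp''
      have hxy : x ≠ y := by
        rintro rfl
        exact hc (hfx ▸ hfy ▸ he)
      have hf'x : f' x = c := by
        rw [h2 x hx (by rw [hfx]; exact fun h => hc (mem_of_mem_erase h)) hxy, hfx]
      -- class e of f' is inside class e of f
      have hcl : ∀ v ∈ U, f' v = e → f v = e := by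
        intro v hv hve
        by_contra hne
        by_cases hvD : f v ∈ D.erase e ∨ v = y
        · have := h3 v hv hvD
          rw [hve] at this
          simp at this
        · push Not at hvD
          exact hne ((h2 v hv hvD.1 hvD.2).symm.trans hve)
      have hm' : ∀ v ∈ U, f' v = e → ¬ G.Adj x v := fun v hv h => hm v hv (hcl v hv h)
      refine ⟨Function.update f' x e, ?_, ?_, ?_, ?_⟩
      · intro u hu v hv huv
        by_cases h1' : u = x
        · subst h1'
          have h2 : v ≠ u := huv.ne'
          rw [Function.update_self, Function.update_of_ne h2]
          intro h3
          exact hm' v hv h3.symm huv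
        · rw [Function.update_of_ne h1']
          by_cases h2 : v = x
          · subst h2
            rw [Function.update_self]
            intro h3
            exact hm' u hu h3 huv.symm
          · rw [Function.update_of_ne h2]
            exact h1 u hu v hv huv
      · intro v hv hvD hvx
        rw [Function.update_of_ne hvx]
        refine h2 v hv (fun h => hvD (mem_of_mem_erase h)) ?_
        rintro rfl
        exact hvD (hfy ▸ he)
      · intro v hv h
        by_cases hvx : v = x
        · subst hvx; rw [Function.update_self]; exact he
        · rw [Function.update_of_ne hvx]
          have hvD := h.resolve_right hvx
          by_cases hve : f v ∈ D.erase e ∨ v = y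
          · exact mem_of_mem_erase (h3 v hv hve)
          · push Not at hve
            rw [h2 v hv hve.1 hve.2]; exact hvD
      · intro k
        have := hs_size_update U f' x hx e k
        rw [hf'x] at this
        have := h4 k
        omega

/-- accessible large class: equitable colouring -/
lemma hs_shift (G : SimpleGraph V) (U : Finset V) (C : Finset κ) (f : V → κ) (c d : κ)
    (hf : HsCol G U C f) (hp : ReflTransGen (HsArc G U C f) c d) :
    ∃ f', HsCol G U C f' ∧ ∀ k, hsSize U f' k + (if k = c then 1 else 0)
          = hsSize U f k + (if k = d then 1 else 0) := by
  by_cases hcd : c = d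
  · subst hcd
    exact ⟨f, hf, fun k => rfl⟩
  · obtain ⟨e, hec, ⟨hcC, heC, x, hxU, hfx, hm⟩, hp'⟩ := hs_first_step _ c d hcd hp
    have hp'' : ReflTransGen (HsArc G U (C.erase c) f) e d := by
      refine ReflTransGen.mono ?_ _ _ hp'
      rintro a b ⟨⟨ha, hb, h⟩, hae, hbe⟩
      exact ⟨mem_erase.2 ⟨hae, ha⟩, mem_erase.2 ⟨hbe, hb⟩, h⟩
    obtain ⟨f', h1, h2, h3, h4⟩ := hs_core G U _ (C.erase c) rfl f c e d x hf.2 (by simp) hxU hfx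
      (mem_erase.2 ⟨hec, heC⟩) hm hp''
    refine ⟨f', ⟨?_, h1⟩, h4⟩
    intro v hv
    by_cases hve : f v ∈ C.erase c ∨ v = x
    · exact mem_of_mem_erase (h3 v hv hve)
    · push Not at hve
      rw [h2 v hv hve.1 hve.2]; exact hf.1 v hv

/-- choice of the terminal classes -/
lemma hs_digraph (Q : κ → κ → Prop) (A : Finset κ) (v0 : κ) (hv0 : v0 ∈ A)
    (hQ : ∀ a b, Q a b → a ∈ A ∧ b ∈ A)
    (hreach : ∀ c ∈ A, ReflTransGen Q c v0) (hne : ∃ c ∈ A, c ≠ v0) :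
    ∃ U0 ∈ A, ∃ T ⊆ A, T.Nonempty ∧ U0 ∉ T ∧ v0 ∉ T ∧
      (∀ W ∈ T, ∀ X ∈ A, X ≠ W → ReflTransGen (HsAv Q W) X v0) ∧
      (∀ W ∈ T, ∀ X ∈ A, X ≠ U0 → X ∉ T → ¬ Q W X) := by
  let T : κ → Finset κ := fun W => A.filter (fun X => X ≠ W ∧ ¬ ReflTransGen (HsAv Q W) X v0)
  have hT : ∀ W X, X ∈ T W ↔ X ∈ A ∧ X ≠ W ∧ ¬ ReflTransGen (HsAv Q W) X v0 := by
    intro W X; simp [T]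
  have hex : ((A.filter (fun W => (T W).Nonempty))).Nonempty := by
    obtain ⟨c, hc, hcv⟩ := hne
    refine ⟨v0, mem_filter.2 ⟨hv0, c, (hT _ _).2 ⟨hc, hcv, ?_⟩⟩⟩
    intro h
    rcases ReflTransGen.cases_tail h with h | ⟨b, _, h⟩
    · exact hcv h.symm
    · exact h.2.2 rfl
  obtain ⟨U0, hU0, hmin⟩ := exists_min_image _ (fun W => (T W).card) hex
  rw [mem_filter] at hU0
  have hS : ∀ W ∈ T U0, ∀ X, X ∈ A → X ≠ U0 → ReflTransGen (HsAv Q U0) X v0 →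
      ReflTransGen (HsAv Q W) X v0 := by
    intro W hW X _ _ hp
    rw [hT] at hW
    induction hp using ReflTransGen.head_induction_on with
    | refl => exact ReflTransGen.refl
    | head hxy hyv ih =>
      rename_i x y
      refine ReflTransGen.head ⟨hxy.1, ?_, ?_⟩ (ih (hQ _ _ hxy.1).2 hxy.2.2)
      · rintro rfl
        exact hW.2.2 (ReflTransGen.head hxy hyv)
      · rintro rfl
        exact hW.2.2 hyv
  refine ⟨U0, hU0.1, T U0, filter_subset _ _, hU0.2, ?_, ?_, ?_, ?_⟩
  · simp [hT]
  · rw [hT]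
    exact fun h => h.2.2 ReflTransGen.refl
  · intro W hW X hX hXW
    by_contra hcon
    have hWA : W ∈ A := ((hT _ _).1 hW).1
    have hWU : W ≠ U0 := ((hT _ _).1 hW).2.1
    have hle := hmin W (mem_filter.2 ⟨hWA, X, (hT _ _).2 ⟨hX, hXW, hcon⟩⟩)
    have hlt : (T W).card < (T U0).card := by
      apply card_lt_card
      refine ⟨?_, fun h => ?_⟩
      · intro Y hY
        rw [hT] at hY
        by_contra hYU
        rw [hT] at hYU
        push Not at hYU
        by_cases hYU0 : Y = U0
        · subst hYU0
          by_cases hYv : Y = v0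
          · subst hYv
            exact hY.2.2 ReflTransGen.refl
          · obtain ⟨e, he, hYe, hp⟩ := hs_first_step _ _ _ hYv (hreach Y hY.1)
            have heW : e ≠ W := by
              rintro rfl
              exact ((hT _ _).1 hW).2.2 hp
            exact hY.2.2 (ReflTransGen.head ⟨hYe, hY.2.1, heW⟩
              (hS W hW e (hQ _ _ hYe).2 he hp))
        · exact hY.2.2 (hS W hW Y hY.1 hYU0 (hYU hY.1 hYU0))
      · have := h hW
        rw [hT] at this
        exact this.2.1 rfl
    exact absurd hle (not_le.2 hlt)
  · intro W hW X hX hXU hXT hWX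
    rw [hT] at hXT hW
    push Not at hXT
    exact hW.2.2 (ReflTransGen.head ⟨hWX, hW.2.1, hXU⟩ (hXT hX hXU))

lemma hs_pick (G : SimpleGraph V) (y : V) (S : Finset V) (K : Finset κ) (f : V → κ)
    (h : ∀ c ∈ K, ∃ x ∈ S, f x = c ∧ G.Adj y x) : K.card ≤ hsDeg G y S := by
  refine le_trans (card_le_card (t := (S.filter (fun x => G.Adj y x)).image f) ?_) card_image_le
  intro c hc
  obtain ⟨x, hx, hfx, hyx⟩ := h c hc
  exact mem_image.2 ⟨x, mem_filter.2 ⟨hx, hyx⟩, hfx⟩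

lemma hs_pick' (G : SimpleGraph V) (y : V) (S : Finset V) (K : Finset κ) (f : V → κ)
    (h : hsDeg G y S < K.card) : ∃ c ∈ K, ∀ x ∈ S, f x = c → ¬ G.Adj y x := by
  by_contra hcon
  push Not at hcon
  exact absurd (hs_pick G y S K f hcon) (not_le.2 h)

lemma hs_double (G : SimpleGraph V) (S B : Finset V) :
    ∑ y ∈ B, hsDeg G y S = ∑ x ∈ S, hsDeg G x B := by
  simp only [hsDeg, card_filter]
  rw [sum_comm]
  simp only [G.adj_comm]

lemma hs_deg_mono (G : SimpleGraph V) (x : V) {S T : Finset V} (h : S ⊆ T) :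
    hsDeg G x S ≤ hsDeg G x T := card_le_card (filter_subset_filter _ h)

/-- solo edges -/
def HsSolo (G : SimpleGraph V) (A B : Finset V) (T : Finset κ) (f : V → κ) (z y : V) : Prop :=
  z ∈ A ∧ f z ∈ T ∧ y ∈ B ∧ G.Adj z y ∧ ∀ w ∈ A, f w = f z → G.Adj w y → w = z

/-- inequality (3) -/
lemma hs_three (G : SimpleGraph V) (A B : Finset V) (f : V → κ) (𝒜 T : Finset κ)
    (b : ℕ) (hA : ∀ x ∈ A, f x ∈ 𝒜) (hT : T ⊆ 𝒜)
    (y : V) (hy : y ∈ B) (hadj : ∀ c ∈ 𝒜, ∃ x ∈ A, f x = c ∧ G.Adj y x)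
    (hdeg : hsDeg G y A + hsDeg G y B < 𝒜.card + b) :
    T.card + 1 + hsDeg G y B ≤ (A.filter (fun z => HsSolo G A B T f z y)).card + b := by
  have h1 : hsDeg G y A = ∑ c ∈ 𝒜, ((A.filter (fun x => G.Adj y x)).filter (fun x => f x = c)).card := by
    rw [hsDeg]
    apply card_eq_sum_card_fiberwise
    intro x hx
    exact hA x (mem_filter.1 hx).1
  have h2 : (A.filter (fun z => HsSolo G A B T f z y)).card = ∑ c ∈ 𝒜,
      ((A.filter (fun z => HsSolo G A B T f z y)).filter (fun x => f x = c)).card := by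
    apply card_eq_sum_card_fiberwise
    intro x hx
    exact hA x (mem_filter.1 hx).1
  have h3 : ∑ c ∈ 𝒜, (1 + if c ∈ T then 1 else 0) = 𝒜.card + T.card := by
    rw [sum_add_distrib, sum_ite_mem, inter_eq_right.2 hT]
    simp
  have h4 : 𝒜.card + T.card ≤ hsDeg G y A + (A.filter (fun z => HsSolo G A B T f z y)).card := by
    rw [h1, h2, ← h3, ← sum_add_distrib]
    apply sum_le_sum
    intro c hc
    obtain ⟨x, hx, hfx, hyx⟩ := hadj c hc
    have hxm : x ∈ (A.filter (fun x => G.Adj y x)).filter (fun x => f x = c) := by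
      simp [hx, hfx, hyx]
    have hpos : 0 < ((A.filter (fun x => G.Adj y x)).filter (fun x => f x = c)).card :=
      card_pos.2 ⟨x, hxm⟩
    split_ifs with hcT
    · by_cases h : 1 < ((A.filter (fun x => G.Adj y x)).filter (fun x => f x = c)).card
      · omega
      · have hle : ((A.filter (fun x => G.Adj y x)).filter (fun x => f x = c)).card ≤ 1 := by omega
        have hsolo : HsSolo G A B T f x y := by
          refine ⟨hx, hfx ▸ hcT, hy, hyx.symm, ?_⟩
          intro w hw hfw hwy
          apply card_le_one.1 hle w _ x hxm
          simp [hw, hfw, hfx, hwy.symm]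
        have : 0 < ((A.filter (fun z => HsSolo G A B T f z y)).filter (fun x => f x = c)).card :=
          card_pos.2 ⟨x, by simp [hx, hfx, hsolo]⟩
        omega
    · omega
  omega

/-- Lemma 2 -/
lemma hs_two (G : SimpleGraph V) (A B : Finset V) (f : V → κ) (𝒜 T : Finset κ)
    (b s : ℕ) (hT : T ⊆ 𝒜) (W : κ) (hW : W ∈ T)
    (hs : (A.filter (fun x => f x = W)).card = s) (hB : B.card = b * s + 1)
    (hadj : ∀ y ∈ B, ∀ c ∈ 𝒜, ∃ x ∈ A, f x = c ∧ G.Adj y x)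
    (hd1 : ∀ x ∈ A, f x = W → hsDeg G x B ≤ b + T.card)
    (hd2 : ∀ x ∈ A, f x = W → ∀ y, HsSolo G A B T f x y → hsDeg G x B ≤ b) :
    b < T.card := by
  set X := A.filter (fun x => f x = W) with hX
  set S := X.filter (fun x => ∃ y, HsSolo G A B T f x y) with hS
  set D := X.filter (fun x => ¬ ∃ y, HsSolo G A B T f x y) with hD
  have hSD : S.card + D.card = s := by
    rw [← hs]; exact card_filter_add_card_filter_not _
  set N := B.filter (fun y => ∃ z ∈ S, G.Adj z y) with hN
  have hNc : N.card ≤ b * S.card := by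
    have : N ⊆ S.biUnion (fun z => B.filter (fun y => G.Adj z y)) := by
      intro y hy
      rw [hN, mem_filter] at hy
      obtain ⟨hyB, z, hz, hzy⟩ := hy
      exact mem_biUnion.2 ⟨z, hz, mem_filter.2 ⟨hyB, hzy⟩⟩
    refine (card_le_card this).trans ?_
    rw [mul_comm]
    apply card_biUnion_le_card_mul
    intro z hz
    rw [hS, mem_filter, hX, mem_filter] at hz
    obtain ⟨⟨hzA, hzW⟩, y, hy⟩ := hz
    exact hd2 z hzA hzW y hy
  have h1 : ∀ y ∈ B \ N, 2 ≤ hsDeg G y D := by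
    intro y hy
    rw [mem_sdiff] at hy
    obtain ⟨hyB, hyN⟩ := hy
    have hyN' : ∀ z ∈ S, ¬ G.Adj z y := by
      intro z hz hzy
      exact hyN (mem_filter.2 ⟨hyB, z, hz, hzy⟩)
    obtain ⟨x, hx, hfx, hyx⟩ := hadj y hyB W (hT hW)
    have hxX : x ∈ X := mem_filter.2 ⟨hx, hfx⟩
    have hin : ∀ w ∈ X, G.Adj y w → w ∈ D.filter (fun w => G.Adj y w) := by
      intro w hw hyw
      refine mem_filter.2 ⟨?_, hyw⟩
      rw [hD, mem_filter]
      refine ⟨hw, fun h => ?_⟩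
      exact hyN' w (mem_filter.2 ⟨hw, h⟩) hyw.symm
    by_contra hlt
    have hle : (D.filter (fun w => G.Adj y w)).card ≤ 1 := by
      rw [hsDeg] at hlt; omega
    refine hyN' x (mem_filter.2 ⟨hxX, y, hx, hfx ▸ hW, hyB, hyx.symm, ?_⟩) hyx.symm
    intro w hw hfw hwy
    exact card_le_one.1 hle w (hin w (mem_filter.2 ⟨hw, hfw.trans hfx⟩) hwy.symm) x (hin x hxX hyx)
  have h2 : (B \ N).card * 2 ≤ ∑ y ∈ B \ N, hsDeg G y D := by
    rw [← smul_eq_mul]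
    exact card_nsmul_le_sum _ _ _ h1
  have h3 : ∑ x ∈ D, hsDeg G x (B \ N) ≤ D.card * (b + T.card) := by
    rw [← smul_eq_mul]
    apply sum_le_card_nsmul
    intro x hx
    rw [hD, mem_filter, hX, mem_filter] at hx
    exact (hs_deg_mono G x sdiff_subset).trans (hd1 x hx.1.1 hx.1.2)
  rw [hs_double] at h2
  have h4 : (B \ N).card + N.card = B.card := card_sdiff_add_card_eq_card (filter_subset _ _)
  have h5 := h2.trans h3
  by_contra hcon
  push Not at hcon
  have h6 : D.card * (b + T.card) ≤ D.card * (2 * b) := Nat.mul_le_mul_left _ (by omega)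
  have h7 : b * s = b * S.card + b * D.card := by rw [← hSD, mul_add]
  have h8 : D.card * (2 * b) = 2 * (b * D.card) := by ring
  omega

/-- Lemma 3 -/
lemma hs_lemma3 (G : SimpleGraph V) (A B : Finset V) (f : V → κ) (𝒜 T : Finset κ)
    (b s : ℕ) (U0 : κ) (hA : ∀ x ∈ A, f x ∈ 𝒜) (hT : T ⊆ 𝒜) (hTne : T.Nonempty)
    (hU0 : U0 ∈ 𝒜) (hU0T : U0 ∉ T)
    (hs : ∀ c ∈ T, (A.filter (fun x => f x = c)).card = s) (hB : B.card = b * s + 1)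
    (hadj : ∀ y ∈ B, ∀ c ∈ 𝒜, ∃ x ∈ A, f x = c ∧ G.Adj y x)
    (hdA : ∀ v ∈ A, hsDeg G v A + hsDeg G v B < 𝒜.card + b)
    (hdB : ∀ v ∈ B, hsDeg G v A + hsDeg G v B < 𝒜.card + b)
    (h2 : ∀ x ∈ A, f x ∈ T → ∀ c ∈ 𝒜, c ≠ U0 → c ∉ T → ∃ w ∈ A, f w = c ∧ G.Adj x w) :
    ∃ z y1, HsSolo G A B T f z y1 ∧
      ((∃ X ∈ 𝒜, X ≠ f z ∧ ∀ w ∈ A, f w = X → ¬ G.Adj z w) ∨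
      ((∀ X ∈ 𝒜, X ≠ f z → ∃ w ∈ A, f w = X ∧ G.Adj z w) ∧
        ∃ y2, HsSolo G A B T f z y2 ∧ y2 ≠ y1 ∧ ¬ G.Adj y1 y2)) := by
  by_contra hcon
  have hc1 : ∀ z y, HsSolo G A B T f z y → ∀ X ∈ 𝒜, X ≠ f z → ∃ w ∈ A, f w = X ∧ G.Adj z w := by
    intro z y hzy X hX hXz
    by_contra h
    push Not at h
    exact hcon ⟨z, y, hzy, Or.inl ⟨X, hX, hXz, h⟩⟩
  have hc2 : ∀ z y1 y2, HsSolo G A B T f z y1 → HsSolo G A B T f z y2 → y2 ≠ y1 → G.Adj y1 y2 := by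
    intro z y1 y2 h1 h2 h12
    by_contra h
    exact hcon ⟨z, y1, h1, Or.inr ⟨hc1 z y1 h1, y2, h2, h12, h⟩⟩
  have hbt : b < T.card := by
    obtain ⟨W, hW⟩ := hTne
    refine hs_two G A B f 𝒜 T b s hT W hW (hs W hW) hB hadj ?_ ?_
    · intro x hx hfx
      have := hs_pick G x A ((𝒜.erase U0) \ T) f (by
        intro c hc
        rw [mem_sdiff, mem_erase] at hc
        exact h2 x hx (hfx ▸ hW) c hc.1.2 hc.1.1 hc.2)
      have hc : ((𝒜.erase U0) \ T).card + T.card = (𝒜.erase U0).card :=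
        card_sdiff_add_card_eq_card (fun c hc => mem_erase.2 ⟨fun h => hU0T (h ▸ hc), hT hc⟩)
      rw [card_erase_of_mem hU0] at hc
      have := hdA x hx
      omega
    · intro x hx hfx y hxy
      have := hs_pick G x A (𝒜.erase (f x)) f (by
        intro c hc
        rw [mem_erase] at hc
        exact hc1 x y hxy c hc.2 hc.1)
      rw [card_erase_of_mem (hA x hx)] at this
      have := hdA x hx
      omega
  have hdBb : ∀ y ∈ B, hsDeg G y B < b := by
    intro y hy
    have := hs_pick G y A 𝒜 f (hadj y hy)
    have := hdB y hy
    omega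
  -- weights
  let A' := A.filter (fun z => f z ∈ T)
  let Sz : V → Finset V := fun z => B.filter (fun y => HsSolo G A B T f z y)
  have hA' : A'.card = T.card * s := by
    have : A'.card = ∑ c ∈ T, (A'.filter (fun x => f x = c)).card := by
      apply card_eq_sum_card_fiberwise
      intro x hx
      exact (mem_filter.1 hx).2
    rw [this, sum_const_nat (m := s)]
    intro c hc
    rw [← hs c hc]
    congr 1
    ext x
    simp only [A', mem_filter]
    constructor
    · rintro ⟨⟨h1, _⟩, h3⟩; exact ⟨h1, h3⟩
    · rintro ⟨h1, h3⟩; exact ⟨⟨h1, h3 ▸ hc⟩, h3⟩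
  let μ : V → V → ℚ := fun z y => if HsSolo G A B T f z y then (b : ℚ) / (Sz z).card else 0
  have hup : ∑ z ∈ A', ∑ y ∈ B, μ z y ≤ A'.card * (b : ℚ) := by
    rw [← nsmul_eq_mul]
    apply sum_le_card_nsmul
    intro z hz
    simp only [μ]
    rw [← sum_filter, sum_const, nsmul_eq_mul]
    change ((Sz z).card : ℚ) * _ ≤ _
    by_cases h : ((Sz z).card : ℚ) = 0
    · rw [h]; simp
    · rw [mul_div_cancel₀ _ h]
  have hlow : (B.card : ℚ) * T.card ≤ ∑ y ∈ B, ∑ z ∈ A', μ z y := by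
    rw [← nsmul_eq_mul]
    apply card_nsmul_le_sum
    intro y hy
    simp only [μ]
    rw [← sum_filter]
    have h3 := hs_three G A B f 𝒜 T b hA hT y hy (hadj y hy) (hdB y hy)
    have hfe : A'.filter (fun z => HsSolo G A B T f z y) = A.filter (fun z => HsSolo G A B T f z y) := by
      ext z
      simp only [A', mem_filter]
      constructor
      · rintro ⟨⟨h1, _⟩, h3⟩; exact ⟨h1, h3⟩
      · rintro ⟨h1, h3⟩; exact ⟨⟨h1, h3.2.1⟩, h3⟩
    rw [hfe]
    set d := hsDeg G y B with hd
    have hdb := hdBb y hy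
    have hbound : ∀ z ∈ A.filter (fun z => HsSolo G A B T f z y),
        (b : ℚ) / (d + 1) ≤ (b : ℚ) / (Sz z).card := by
      intro z hz
      rw [mem_filter] at hz
      have hyS : y ∈ Sz z := mem_filter.2 ⟨hy, hz.2⟩
      have hpos : 0 < (Sz z).card := card_pos.2 ⟨y, hyS⟩
      have hle : (Sz z).card ≤ d + 1 := by
        have : (Sz z).erase y ⊆ B.filter (fun w => G.Adj y w) := by
          intro w hw
          rw [mem_erase, mem_filter] at hw
          exact mem_filter.2 ⟨hw.2.1, hc2 z y w hz.2 hw.2.2 hw.1⟩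
        have := card_le_card this
        rw [card_erase_of_mem hyS] at this
        change _ ≤ d at this
        omega
      have hle' : ((Sz z).card : ℚ) ≤ d + 1 := by exact_mod_cast hle
      have hpos' : (0 : ℚ) < (Sz z).card := by exact_mod_cast hpos
      gcongr
    have h4 := card_nsmul_le_sum _ _ _ hbound
    refine le_trans ?_ h4
    rw [nsmul_eq_mul, ← mul_div_assoc, le_div_iff₀ (by positivity)]
    have h3' : (T.card : ℚ) + 1 + d ≤ (A.filter (fun z => HsSolo G A B T f z y)).card + b := by
      exact_mod_cast h3
    have hdb' : (d : ℚ) + 1 ≤ b := by exact_mod_cast hdb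
    have hbt' : (b : ℚ) ≤ T.card := by exact_mod_cast hbt.le
    have hb0 : (0 : ℚ) ≤ b := by positivity
    have h5 : ((T.card : ℚ) + 1 + d - b) * b ≤ (A.filter (fun z => HsSolo G A B T f z y)).card * b :=
      mul_le_mul_of_nonneg_right (by linarith) hb0
    refine le_trans ?_ h5
    nlinarith [mul_nonneg (sub_nonneg.2 hbt') (sub_nonneg.2 hdb')]
  rw [sum_comm] at hlow
  have h6 := hlow.trans hup
  rw [hA', hB] at h6
  have h7 : (b * s + 1) * T.card ≤ T.card * s * b := by exact_mod_cast h6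
  have h8 : 0 < T.card := by omega
  nlinarith

lemma hs_deg_split (G : SimpleGraph V) (x : V) (U : Finset V) (p : V → Prop) :
    hsDeg G x (U.filter p) + hsDeg G x (U.filter (fun v => ¬ p v)) = hsDeg G x U := by
  simp only [hsDeg]
  rw [filter_comm, filter_comm (p := fun v => ¬ p v)]
  exact card_filter_add_card_filter_not _

/-- equitable colourability of `G[U]` with colour set `C` and classes of size `s` -/
def HsEq (G : SimpleGraph V) (U : Finset V) (C : Finset κ) (s : ℕ) : Prop :=
  ∃ f : V → κ, HsCol G U C f ∧ ∀ e ∈ C, hsSize U f e = s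

lemma hs_size_sum (U : Finset V) (f : V → κ) (K : Finset κ) :
    (U.filter (fun v => f v ∈ K)).card = ∑ c ∈ K, hsSize U f c := by
  have : (U.filter (fun v => f v ∈ K)).card
      = ∑ c ∈ K, ((U.filter (fun v => f v ∈ K)).filter (fun x => f x = c)).card := by
    apply card_eq_sum_card_fiberwise
    intro x hx
    exact (mem_filter.1 hx).2
  rw [this]
  apply sum_congr rfl
  intro c hc
  rw [hsSize]
  congr 1
  ext x
  simp only [mem_filter]
  constructor
  · rintro ⟨⟨h1, _⟩, h3⟩; exact ⟨h1, h3⟩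
  · rintro ⟨h1, h3⟩; exact ⟨⟨h1, h3 ▸ hc⟩, h3⟩

/-- Case 1: the solo vertex `z` is movable -/
lemma hs_case1 (G : SimpleGraph V) (U : Finset V) (C 𝒜 : Finset κ) (s : ℕ) (f g : V → κ)
    (v0 X : κ) (z y1 : V) (h𝒜 : 𝒜 ⊆ C) (hf : HsCol G U C f)
    (hsz : ∀ e ∈ 𝒜, hsSize U f e + (if e = v0 then 1 else 0) = s)
    (hz : z ∈ U) (hz𝒜 : f z ∈ 𝒜) (hzv : f z ≠ v0) (hy1 : y1 ∈ U) (hy1𝒜 : f y1 ∉ 𝒜)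
    (hsolo : ∀ w ∈ U, f w = f z → G.Adj w y1 → w = z)
    (hX : X ∈ 𝒜) (hXz : X ≠ f z) (hm : HsMv G U f z X)
    (hp : ReflTransGen (HsArc G U (𝒜.erase (f z)) f) X v0)
    (hg : HsCol G ((U.filter (fun v => f v ∉ 𝒜)).erase y1) (C \ 𝒜) g)
    (hgs : ∀ e ∈ C \ 𝒜, hsSize ((U.filter (fun v => f v ∉ 𝒜)).erase y1) g e = s) :
    HsEq G U C s := by
  obtain ⟨f', h1, h2, h3, h4⟩ := hs_core G U _ (𝒜.erase (f z)) rfl f (f z) X v0 z hf.2 (by simp)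
    hz rfl (mem_erase.2 ⟨hXz, hX⟩) hm hp
  have hzy : y1 ≠ z := by rintro rfl; exact hy1𝒜 hz𝒜
  have hA : ∀ v ∈ U, f v ∈ 𝒜 → f' v ∈ 𝒜 := by
    intro v hv hvA
    by_cases h : f v ∈ 𝒜.erase (f z) ∨ v = z
    · exact mem_of_mem_erase (h3 v hv h)
    · push Not at h
      rw [h2 v hv h.1 h.2]; exact hvA
  have hB : ∀ v ∈ U, f v ∉ 𝒜 → f' v = f v := by
    intro v hv hvA
    refine h2 v hv (fun h => hvA (mem_of_mem_erase h)) ?_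
    rintro rfl; exact hvA hz𝒜
  have hW : ∀ v ∈ U, f' v = f z → f v = f z ∧ v ≠ z := by
    intro v hv hvW
    by_cases h : f v ∈ 𝒜.erase (f z) ∨ v = z
    · have := h3 v hv h
      rw [hvW] at this
      simp at this
    · push Not at h
      exact ⟨(h2 v hv h.1 h.2).symm.trans hvW, h.2⟩
  have hW' : ∀ v ∈ U, f' v = f z → ¬ G.Adj v y1 := fun v hv h hadj =>
    (hW v hv h).2 (hsolo v hv (hW v hv h).1 hadj)
  let h : V → κ := fun v => if v = y1 then f z else if f v ∈ 𝒜 then f' v else g v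
  have hh1 : h y1 = f z := by simp [h]
  have hh2 : ∀ v, v ≠ y1 → f v ∈ 𝒜 → h v = f' v := by
    intro v hv hvA; simp [h, hv, hvA]
  have hh3 : ∀ v, v ≠ y1 → f v ∉ 𝒜 → h v = g v := by
    intro v hv hvA; simp [h, hv, hvA]
  have hmem : ∀ v ∈ U, v ≠ y1 → f v ∉ 𝒜 → v ∈ (U.filter (fun v => f v ∉ 𝒜)).erase y1 := by
    intro v hv hvy hvA
    exact mem_erase.2 ⟨hvy, mem_filter.2 ⟨hv, hvA⟩⟩
  have hgm : ∀ v ∈ U, v ≠ y1 → f v ∉ 𝒜 → g v ∈ C ∧ g v ∉ 𝒜 := by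
    intro v hv hvy hvA
    exact mem_sdiff.1 (hg.1 v (hmem v hv hvy hvA))
  refine ⟨h, ⟨?_, ?_⟩, ?_⟩
  · intro v hv
    by_cases hvy : v = y1
    · subst hvy; rw [hh1]; exact h𝒜 hz𝒜
    · by_cases hvA : f v ∈ 𝒜
      · rw [hh2 v hvy hvA]; exact h𝒜 (hA v hv hvA)
      · rw [hh3 v hvy hvA]; exact (hgm v hv hvy hvA).1
  · -- it is enough to consider some orders
    have hy : ∀ v ∈ U, v ≠ y1 → G.Adj v y1 → h v ≠ f z := by
      intro v hv hvy hadj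
      by_cases hvA : f v ∈ 𝒜
      · rw [hh2 v hvy hvA]
        exact fun h => hW' v hv h hadj
      · rw [hh3 v hvy hvA]
        intro h
        exact (hgm v hv hvy hvA).2 (h ▸ hz𝒜)
    intro u hu v hv huv
    by_cases huy : u = y1
    · subst huy
      rw [hh1]
      exact (hy v hv huv.ne' huv.symm).symm
    by_cases hvy : v = y1
    · subst hvy
      rw [hh1]
      exact hy u hu huy huv
    by_cases huA : f u ∈ 𝒜 <;> by_cases hvA : f v ∈ 𝒜
    · rw [hh2 u huy huA, hh2 v hvy hvA]; exact h1 u hu v hv huv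
    · rw [hh2 u huy huA, hh3 v hvy hvA]
      intro h; exact (hgm v hv hvy hvA).2 (h ▸ hA u hu huA)
    · rw [hh3 u huy huA, hh2 v hvy hvA]
      intro h; exact (hgm u hu huy huA).2 (h ▸ hA v hv hvA)
    · rw [hh3 u huy huA, hh3 v hvy hvA]
      exact hg.2 u (hmem u hu huy huA) v (hmem v hv hvy hvA) huv
  · intro e he
    by_cases heA : e ∈ 𝒜
    · have hs1 := hsz e heA
      have hs2 := h4 e
      by_cases heW : e = f z
      · subst heW
        have : U.filter (fun v => h v = f z) = insert y1 (U.filter (fun v => f' v = f z)) := by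
          ext v
          rw [mem_insert, mem_filter, mem_filter]
          by_cases hvy : v = y1
          · subst hvy; simp [hh1, hy1]
          · by_cases hvA : f v ∈ 𝒜
            · simp [hvy, hh2 v hvy hvA]
            · rw [hh3 v hvy hvA]
              constructor
              · rintro ⟨hv, h⟩
                exact absurd (h ▸ hz𝒜) (hgm v hv hvy hvA).2
              · rintro (h | ⟨hv, h⟩)
                · exact absurd h hvy
                · rw [hB v hv hvA] at h
                  exact absurd (h ▸ hz𝒜) hvA
        rw [hsSize, this, card_insert_of_notMem]
        · change hsSize U f' (f z) + 1 = s
          simp only [if_pos, if_neg hzv] at hs1 hs2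
          omega
        · rw [mem_filter]
          rintro ⟨-, h⟩
          rw [hB y1 hy1 hy1𝒜] at h
          exact hy1𝒜 (h ▸ hz𝒜)
      · have : U.filter (fun v => h v = e) = U.filter (fun v => f' v = e) := by
          apply filter_congr
          intro v hv
          by_cases hvy : v = y1
          · subst hvy
            rw [hh1, hB v hv hy1𝒜]
            exact ⟨fun h => absurd h.symm heW, fun h => absurd (h ▸ heA) hy1𝒜⟩
          · by_cases hvA : f v ∈ 𝒜
            · rw [hh2 v hvy hvA]
            · rw [hh3 v hvy hvA, hB v hv hvA]
              exact ⟨fun h => absurd (h ▸ heA) (hgm v hv hvy hvA).2, fun h => absurd (h ▸ heA) hvA⟩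
        rw [hsSize, this]
        change hsSize U f' e = s
        rw [if_neg heW] at hs2
        omega
    · rw [← hgs e (mem_sdiff.2 ⟨he, heA⟩), hsSize, hsSize]
      congr 1
      ext v
      rw [mem_filter, mem_filter, mem_erase, mem_filter]
      by_cases hvy : v = y1
      · subst hvy
        rw [hh1]
        constructor
        · rintro ⟨_, h⟩; exact absurd (h ▸ hz𝒜) heA
        · rintro ⟨⟨h, _⟩, _⟩; exact absurd rfl h
      · by_cases hvA : f v ∈ 𝒜
        · rw [hh2 v hvy hvA]
          constructor
          · rintro ⟨hv, h⟩; exact absurd (h ▸ hA v hv hvA) heA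
          · rintro ⟨⟨_, _, h⟩, _⟩; exact absurd hvA h
        · rw [hh3 v hvy hvA]
          tauto

/-- Case 2: the solo vertex `z` is not movable; we get a better nearly equitable colouring -/
lemma hs_case2 (G : SimpleGraph V) (U : Finset V) (C 𝒜 : Finset κ) (s : ℕ) (f g : V → κ)
    (v0 Y : κ) (z y1 y2 : V) (h𝒜 : 𝒜 ⊆ C) (hf : HsCol G U C f)
    (hsz : ∀ e ∈ 𝒜, hsSize U f e + (if e = v0 then 1 else 0) = s)
    (hz : z ∈ U) (hz𝒜 : f z ∈ 𝒜) (hzv : f z ≠ v0) (hv0 : v0 ∈ 𝒜)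
    (hy1 : y1 ∈ U) (hy1𝒜 : f y1 ∉ 𝒜)
    (hy2 : y2 ∈ U) (hy2𝒜 : f y2 ∉ 𝒜) (hy12 : y2 ≠ y1) (hnadj : ¬ G.Adj y1 y2)
    (hsolo1 : ∀ w ∈ U, f w = f z → G.Adj w y1 → w = z)
    (hsolo2 : ∀ w ∈ U, f w = f z → G.Adj w y2 → w = z)
    (hnm : ∀ X ∈ 𝒜, X ≠ f z → ¬ HsMv G U f z X)
    (hz0 : ReflTransGen (HsArc G U 𝒜 f) (f z) v0)
    (hp : ∀ X ∈ 𝒜, X ≠ f z → ReflTransGen (HsArc G U (𝒜.erase (f z)) f) X v0)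
    (hg : HsCol G ((U.filter (fun v => f v ∉ 𝒜)).erase y1) (C \ 𝒜) g)
    (hgs : ∀ e ∈ C \ 𝒜, hsSize ((U.filter (fun v => f v ∉ 𝒜)).erase y1) g e = s)
    (hY : Y ∈ C \ 𝒜)
    (hzY : ∀ v ∈ (U.filter (fun v => f v ∉ 𝒜)).erase y1, g v = Y → ¬ G.Adj z v) :
    ∃ h : V → κ, HsCol G U C h ∧
      (∀ e ∈ C, hsSize U h e + (if e = v0 then 1 else 0) = s + (if e = Y then 1 else 0)) ∧
      (∀ X ∈ 𝒜, ReflTransGen (HsArc G U C h) X v0) ∧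
      ∃ X ∈ C \ 𝒜, ReflTransGen (HsArc G U C h) X v0 := by
  have hzy : y1 ≠ z := by rintro rfl; exact hy1𝒜 hz𝒜
  have hzy2 : y2 ≠ z := by rintro rfl; exact hy2𝒜 hz𝒜
  rw [mem_sdiff] at hY
  let h : V → κ := fun v => if v = y1 then f z else if v = z then Y else
    if f v ∈ 𝒜 then f v else g v
  have hh1 : h y1 = f z := by simp [h]
  have hhz : h z = Y := by simp [h, hzy.symm]
  have hh2 : ∀ v, v ≠ y1 → v ≠ z → f v ∈ 𝒜 → h v = f v := by
    intro v hv hvz hvA; simp [h, hv, hvz, hvA]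
  have hh3 : ∀ v, v ≠ y1 → f v ∉ 𝒜 → h v = g v := by
    intro v hv hvA
    have : v ≠ z := by rintro rfl; exact hvA hz𝒜
    simp [h, hv, hvA, this]
  have hmem : ∀ v ∈ U, v ≠ y1 → f v ∉ 𝒜 → v ∈ (U.filter (fun v => f v ∉ 𝒜)).erase y1 := by
    intro v hv hvy hvA
    exact mem_erase.2 ⟨hvy, mem_filter.2 ⟨hv, hvA⟩⟩
  have hgm : ∀ v ∈ U, v ≠ y1 → f v ∉ 𝒜 → g v ∈ C ∧ g v ∉ 𝒜 := by
    intro v hv hvy hvA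
    exact mem_sdiff.1 (hg.1 v (hmem v hv hvy hvA))
  -- classes of `h` in `𝒜`
  have hcl : ∀ v ∈ U, ∀ e ∈ 𝒜, h v = e → (v = y1 ∧ e = f z) ∨ (v ≠ y1 ∧ v ≠ z ∧ f v = e) := by
    intro v hv e he hve
    by_cases hvy : v = y1
    · subst hvy; left; exact ⟨rfl, hve.symm.trans hh1⟩
    · right
      by_cases hvz : v = z
      · subst hvz; rw [hhz] at hve; exact absurd (hve ▸ he) hY.2
      · by_cases hvA : f v ∈ 𝒜
        · rw [hh2 v hvy hvz hvA] at hve; exact ⟨hvy, hvz, hve⟩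
        · rw [hh3 v hvy hvA] at hve
          exact absurd (hve ▸ he) (hgm v hv hvy hvA).2
  have hcl' : ∀ v ∈ U, v ≠ z → f v ∈ 𝒜 → h v = f v := by
    intro v hv hvz hvA
    refine hh2 v ?_ hvz hvA
    rintro rfl; exact hy1𝒜 hvA
  have hmv : ∀ x e, e ∈ 𝒜 → e ≠ f z → HsMv G U f x e → HsMv G U h x e := by
    intro x e he hez hx v hv hve
    rcases hcl v hv e he hve with h | h
    · exact absurd h.2 hez
    · exact hx v hv h.2.2
  have hreach : ∀ X ∈ 𝒜, X ≠ f z → ReflTransGen (HsArc G U C h) X v0 := by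
    intro X hX hXz
    refine ReflTransGen.mono ?_ _ _ (hp X hX hXz)
    rintro a b ⟨ha, hb, x, hx, hfx, hm⟩
    rw [mem_erase] at ha hb
    refine ⟨h𝒜 ha.2, h𝒜 hb.2, x, hx, ?_, hmv x b hb.2 hb.1 hm⟩
    rw [hcl' x hx ?_ (hfx ▸ ha.2), hfx]
    rintro rfl; exact ha.1 hfx.symm
  have hreachz : ReflTransGen (HsArc G U C h) (f z) v0 := by
    obtain ⟨e, hez, ⟨_, he, x, hx, hfx, hm⟩, _⟩ := hs_first_step _ _ _ hzv hz0
    refine ReflTransGen.head ⟨h𝒜 hz𝒜, h𝒜 he, x, hx, ?_, hmv x e he hez hm⟩ (hreach e he hez)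
    rw [hcl' x hx ?_ (hfx ▸ hz𝒜), hfx]
    rintro rfl; exact hnm e he hez hm
  refine ⟨h, ⟨?_, ?_⟩, ?_, ?_, g y2, mem_sdiff.2 (hgm y2 hy2 hy12 hy2𝒜), ?_⟩
  · intro v hv
    by_cases hvy : v = y1
    · subst hvy; rw [hh1]; exact h𝒜 hz𝒜
    · by_cases hvA : f v ∈ 𝒜
      · by_cases hvz : v = z
        · subst hvz; rw [hhz]; exact hY.1
        · rw [hh2 v hvy hvz hvA]; exact h𝒜 hvA
      · rw [hh3 v hvy hvA]; exact (hgm v hv hvy hvA).1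
  · have hy : ∀ v ∈ U, v ≠ y1 → G.Adj v y1 → h v ≠ f z := by
      intro v hv hvy hadj hve
      rcases hcl v hv _ hz𝒜 hve with h | h
      · exact hvy h.1
      · exact h.2.1 (hsolo1 v hv h.2.2 hadj)
    have hzz : ∀ v ∈ U, v ≠ y1 → v ≠ z → G.Adj z v → h v ≠ Y := by
      intro v hv hvy hvz hadj hve
      by_cases hvA : f v ∈ 𝒜
      · rw [hh2 v hvy hvz hvA] at hve
        exact hY.2 (hve ▸ hvA)
      · rw [hh3 v hvy hvA] at hve
        exact hzY v (hmem v hv hvy hvA) hve hadj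
    intro u hu v hv huv
    by_cases huy : u = y1
    · subst huy
      rw [hh1]
      exact (hy v hv huv.ne' huv.symm).symm
    by_cases hvy : v = y1
    · subst hvy
      rw [hh1]
      exact hy u hu huy huv
    by_cases huz : u = z
    · subst huz
      rw [hhz]
      exact (hzz v hv hvy huv.ne' huv).symm
    by_cases hvz : v = z
    · subst hvz
      rw [hhz]
      exact hzz u hu huy huz huv.symm
    by_cases huA : f u ∈ 𝒜 <;> by_cases hvA : f v ∈ 𝒜
    · rw [hh2 u huy huz huA, hh2 v hvy hvz hvA]; exact hf.2 u hu v hv huv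
    · rw [hh2 u huy huz huA, hh3 v hvy hvA]
      intro h; exact (hgm v hv hvy hvA).2 (h ▸ huA)
    · rw [hh3 u huy huA, hh2 v hvy hvz hvA]
      intro h; exact (hgm u hu huy huA).2 (h ▸ hvA)
    · rw [hh3 u huy huA, hh3 v hvy hvA]
      exact hg.2 u (hmem u hu huy huA) v (hmem v hv hvy hvA) huv
  · intro e he
    by_cases heA : e ∈ 𝒜
    · have heY : e ≠ Y := by rintro rfl; exact hY.2 heA
      rw [if_neg heY, ← hsz e heA, add_zero]
      congr 1
      by_cases hez : e = f z
      · subst hez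
        have : U.filter (fun v => h v = f z)
            = insert y1 ((U.filter (fun v => f v = f z)).erase z) := by
          ext v
          rw [mem_insert, mem_erase, mem_filter, mem_filter]
          constructor
          · rintro ⟨hv, hve⟩
            rcases hcl v hv _ hz𝒜 hve with h | h
            · exact Or.inl h.1
            · exact Or.inr ⟨h.2.1, hv, h.2.2⟩
          · rintro (h | ⟨h1, hv, h2⟩)
            · subst h; exact ⟨hy1, hh1⟩
            · exact ⟨hv, by rw [hcl' v hv h1 (h2 ▸ hz𝒜), h2]⟩
        have hzm : z ∈ U.filter (fun v => f v = f z) := mem_filter.2 ⟨hz, rfl⟩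
        rw [hsSize, hsSize, this, card_insert_of_notMem, card_erase_add_one hzm]
        rw [mem_erase, mem_filter]
        rintro ⟨_, _, h⟩
        exact hy1𝒜 (h ▸ hz𝒜)
      · rw [hsSize, hsSize]
        congr 1
        apply filter_congr
        intro v hv
        constructor
        · intro hve
          rcases hcl v hv e heA hve with h | h
          · exact absurd h.2 hez
          · exact h.2.2
        · intro hve
          rw [hcl' v hv ?_ (hve ▸ heA), hve]
          rintro rfl; exact hez hve.symm
    · have hev : e ≠ v0 := by rintro rfl; exact heA hv0
      rw [if_neg hev, add_zero, ← hgs e (mem_sdiff.2 ⟨he, heA⟩)]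
      have hbase : ∀ v, v ≠ z → ((v ∈ U ∧ h v = e) ↔
          v ∈ ((U.filter (fun v => f v ∉ 𝒜)).erase y1).filter (fun v => g v = e)) := by
        intro v hvz
        rw [mem_filter, mem_erase, mem_filter]
        by_cases hvy : v = y1
        · subst hvy
          rw [hh1]
          constructor
          · rintro ⟨_, h⟩; exact absurd (h ▸ hz𝒜) heA
          · rintro ⟨⟨h, _⟩, _⟩; exact absurd rfl h
        · by_cases hvA : f v ∈ 𝒜
          · rw [hh2 v hvy hvz hvA]
            constructor
            · rintro ⟨hv, h⟩; exact absurd (h ▸ hvA) heA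
            · rintro ⟨⟨_, _, h⟩, _⟩; exact absurd hvA h
          · rw [hh3 v hvy hvA]
            tauto
      have hznot : z ∉ ((U.filter (fun v => f v ∉ 𝒜)).erase y1).filter (fun v => g v = e) := by
        rw [mem_filter, mem_erase, mem_filter]
        rintro ⟨⟨_, _, h⟩, _⟩; exact h hz𝒜
      split_ifs with heY
      · subst heY
        rw [hsSize, hsSize, ← card_insert_of_notMem hznot]
        congr 1
        ext v
        rw [mem_insert, mem_filter]
        by_cases hvz : v = z
        · subst hvz; simp [hz, hhz]
        · rw [hbase v hvz]; simp [hvz]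
      · rw [add_zero, hsSize, hsSize]
        congr 1
        ext v
        rw [mem_filter]
        by_cases hvz : v = z
        · subst hvz
          rw [hhz]
          exact ⟨fun h => absurd h.2.symm heY, fun h => absurd h hznot⟩
        · rw [hbase v hvz]
  · intro X hX
    by_cases hXz : X = f z
    · rw [hXz]; exact hreachz
    · exact hreach X hX hXz
  · refine ReflTransGen.head ⟨(hgm y2 hy2 hy12 hy2𝒜).1, h𝒜 hz𝒜, y2, hy2, hh3 y2 hy12 hy2𝒜, ?_⟩ hreachz
    intro v hv hve hadj
    rcases hcl v hv _ hz𝒜 hve with h | h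
    · rw [h.1] at hadj; exact hnadj hadj.symm
    · exact h.2.1 (hsolo2 v hv h.2.2 hadj.symm)

/-- a nearly equitable colouring can be turned into an equitable one -/
lemma hs_near (G : SimpleGraph V) (U : Finset V) (C : Finset κ) (s : ℕ)
    (hdeg : ∀ v ∈ U, hsDeg G v U < C.card)
    (IH : ∀ (U' : Finset V) (C' : Finset κ), U'.card < U.card → U'.card = C'.card * s →
      (∀ v ∈ U', hsDeg G v U' < C'.card) → HsEq G U' C' s) (n : ℕ) :
    ∀ (f : V → κ) (v0 p : κ), HsCol G U C f → v0 ∈ C → p ∈ C →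
      (∀ e ∈ C, hsSize U f e + (if e = v0 then 1 else 0) = s + (if e = p then 1 else 0)) →
      (C.filter (fun c => ¬ ReflTransGen (HsArc G U C f) c v0)).card = n → HsEq G U C s := by
  induction n using Nat.strong_induction_on with
  | _ n ihn =>
  intro f v0 p hf hv0 hp hsz hn
  by_cases hpacc : ReflTransGen (HsArc G U C f) p v0
  · obtain ⟨f', hf', hs'⟩ := hs_shift G U C f p v0 hf hpacc
    refine ⟨f', hf', fun e he => ?_⟩
    have := hs' e
    have := hsz e he
    omega
  set 𝒜 := C.filter (fun c => ReflTransGen (HsArc G U C f) c v0) with h𝒜def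
  have h𝒜 : 𝒜 ⊆ C := filter_subset _ _
  have hmem𝒜 : ∀ c, c ∈ 𝒜 ↔ c ∈ C ∧ ReflTransGen (HsArc G U C f) c v0 := by
    intro c; rw [h𝒜def, mem_filter]
  have hv0𝒜 : v0 ∈ 𝒜 := (hmem𝒜 _).2 ⟨hv0, ReflTransGen.refl⟩
  have hp𝒜 : p ∉ 𝒜 := fun h => hpacc ((hmem𝒜 _).1 h).2
  have hsdiff : C.filter (fun c => ¬ ReflTransGen (HsArc G U C f) c v0) = C \ 𝒜 := by
    ext c; rw [mem_filter, mem_sdiff, hmem𝒜]; tauto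
  rw [hsdiff] at hn
  have hab : 𝒜.card + n = C.card := by
    rw [← hn, add_comm]; exact card_sdiff_add_card_eq_card h𝒜
  have hszA : ∀ e ∈ 𝒜, hsSize U f e + (if e = v0 then 1 else 0) = s := by
    intro e he
    have := hsz e (h𝒜 he)
    rwa [if_neg (show e ≠ p from fun h => hp𝒜 (h ▸ he)), add_zero] at this
  set A := U.filter (fun v => f v ∈ 𝒜) with hAdef
  set B := U.filter (fun v => f v ∉ 𝒜) with hBdef
  have hAm : ∀ v, v ∈ A ↔ v ∈ U ∧ f v ∈ 𝒜 := fun v => mem_filter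
  have hBm : ∀ v, v ∈ B ↔ v ∈ U ∧ f v ∉ 𝒜 := fun v => mem_filter
  have hBcard : B.card = n * s + 1 := by
    have h1 : B = U.filter (fun v => f v ∈ C \ 𝒜) := by
      apply filter_congr
      intro v hv
      rw [mem_sdiff]
      exact ⟨fun h => ⟨hf.1 v hv, h⟩, fun h => h.2⟩
    rw [h1, hs_size_sum, ← hn]
    have h2 : ∀ c ∈ C \ 𝒜, hsSize U f c = s + (if c = p then 1 else 0) := by
      intro c hc
      rw [mem_sdiff] at hc
      rw [← hsz c hc.1, if_neg (show c ≠ v0 from fun h => hc.2 (h ▸ hv0𝒜)), add_zero]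
    rw [sum_congr rfl h2, sum_add_distrib, sum_const, smul_eq_mul, sum_ite_eq',
      if_pos (mem_sdiff.2 ⟨hp, hp𝒜⟩)]
  have hsplit : ∀ v ∈ U, hsDeg G v A + hsDeg G v B < 𝒜.card + n := by
    intro v hv
    have h1 : hsDeg G v A + hsDeg G v B = hsDeg G v U := by
      rw [← hs_deg_split G v U (fun v => f v ∈ 𝒜), hAdef, hBdef]
      congr!
    rw [hab, h1]
    exact hdeg v hv
  -- vertices of B see every accessible class
  have hadj : ∀ y ∈ B, ∀ c ∈ 𝒜, ∃ x ∈ A, f x = c ∧ G.Adj y x := by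
    intro y hy c hc
    by_contra hcon
    push Not at hcon
    rw [hBm] at hy
    apply hy.2
    rw [hmem𝒜]
    refine ⟨hf.1 y hy.1, ReflTransGen.head ⟨hf.1 y hy.1, h𝒜 hc, y, hy.1, rfl, ?_⟩ ((hmem𝒜 c).1 hc).2⟩
    intro w hw hwc
    exact hcon w ((hAm w).2 ⟨hw, hwc ▸ hc⟩) hwc
  have hdBB : ∀ y ∈ B, hsDeg G y B < n := by
    intro y hy
    have := hs_pick G y A 𝒜 f (hadj y hy)
    have := hsplit y ((hBm y).1 hy).1
    omega
  have hcls : ∀ c ∈ 𝒜, A.filter (fun v => f v = c) = U.filter (fun v => f v = c) := by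
    intro c hc
    ext v
    rw [mem_filter, hAm]
    simp only [mem_filter]
    constructor
    · rintro ⟨⟨h, _⟩, hh⟩; exact ⟨h, hh⟩
    · rintro ⟨h, hh⟩; exact ⟨⟨h, hh ▸ hc⟩, hh⟩
  -- there is another accessible class
  have hne : ∃ c ∈ 𝒜, c ≠ v0 := by
    by_contra hcon
    push Not at hcon
    have h1 : 𝒜 = {v0} := eq_singleton_iff_unique_mem.2 ⟨hv0𝒜, hcon⟩
    have hAc : A.card + 1 = s := by
      have h2 := hszA v0 hv0𝒜
      rw [if_pos rfl] at h2
      rw [← h2, hAdef, hs_size_sum, h1, sum_singleton]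
    have h3 : B.card * 1 ≤ ∑ y ∈ B, hsDeg G y A := by
      rw [← smul_eq_mul]
      apply card_nsmul_le_sum
      intro y hy
      have := hs_pick G y A 𝒜 f (hadj y hy)
      rw [h1, card_singleton] at this
      exact this
    rw [hs_double] at h3
    have h4 : ∑ x ∈ A, hsDeg G x B ≤ A.card * n := by
      rw [← smul_eq_mul]
      apply sum_le_card_nsmul
      intro x hx
      have := hsplit x ((hAm x).1 hx).1
      rw [h1, card_singleton] at this
      omega
    rw [hBcard] at h3
    rw [← hAc] at h3
    nlinarith
  -- the digraph on accessible classes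
  have hreach : ∀ c ∈ 𝒜, ReflTransGen (HsArc G U 𝒜 f) c v0 := by
    intro c hc
    have := ((hmem𝒜 c).1 hc).2
    clear hc
    induction this using ReflTransGen.head_induction_on with
    | refl => exact ReflTransGen.refl
    | head hxy hyv ih =>
      refine ReflTransGen.head ⟨(hmem𝒜 _).2 ⟨hxy.1, ReflTransGen.head hxy hyv⟩,
        (hmem𝒜 _).2 ⟨hxy.2.1, hyv⟩, hxy.2.2⟩ ih
  obtain ⟨U0, hU0, T, hT, hTne, hU0T, hv0T, hterm, hnoarc⟩ :=
    hs_digraph (HsArc G U 𝒜 f) 𝒜 v0 hv0𝒜 (fun a b h => ⟨h.1, h.2.1⟩) hreach hne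
  have hterm' : ∀ W ∈ T, ∀ X ∈ 𝒜, X ≠ W → ReflTransGen (HsArc G U (𝒜.erase W) f) X v0 := by
    intro W hW X hX hXW
    refine ReflTransGen.mono ?_ _ _ (hterm W hW X hX hXW)
    rintro a b ⟨⟨ha, hb, h⟩, hae, hbe⟩
    exact ⟨mem_erase.2 ⟨hae, ha⟩, mem_erase.2 ⟨hbe, hb⟩, h⟩
  obtain ⟨z, y1, hsolo, hcase⟩ := hs_lemma3 G A B f 𝒜 T n s U0
    (fun x hx => ((hAm x).1 hx).2) hT hTne hU0 hU0T
    (by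
      intro c hc
      rw [hcls c (hT hc)]
      have := hszA c (hT hc)
      rwa [if_neg (show c ≠ v0 from fun h => hv0T (h ▸ hc))] at this)
    hBcard hadj (fun v hv => hsplit v ((hAm v).1 hv).1) (fun v hv => hsplit v ((hBm v).1 hv).1)
    (by
      intro x hx hxT c hc hcU hcT
      by_contra hcon
      push Not at hcon
      refine hnoarc (f x) hxT c hc hcU hcT ⟨hT hxT, hc, x, ((hAm x).1 hx).1, rfl, ?_⟩
      intro w hw hwc
      exact hcon w ((hAm w).2 ⟨hw, hwc ▸ hc⟩) hwc)
  have hy1B := hsolo.2.2.1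
  have hy1 := (hBm y1).1 hy1B
  have hzA := hsolo.1
  have hz := (hAm z).1 hzA
  have hzv : f z ≠ v0 := fun h => hv0T (h ▸ hsolo.2.1)
  have hsoloU : ∀ y, HsSolo G A B T f z y → ∀ w ∈ U, f w = f z → G.Adj w y → w = z := by
    intro y hy w hw hfw hwy
    exact hy.2.2.2.2 w ((hAm w).2 ⟨hw, hfw ▸ hz.2⟩) hfw hwy
  -- colouring of B - y1
  have hBsub : B ⊆ U := filter_subset _ _
  obtain ⟨g, hg, hgs⟩ : HsEq G (B.erase y1) (C \ 𝒜) s := by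
    apply IH
    · exact card_lt_card ⟨(erase_subset _ _).trans hBsub, fun h => by
        have := h hy1.1
        simp at this⟩
    · rw [card_erase_of_mem hy1B, hBcard, hn]; rfl
    · intro v hv
      rw [hn]
      exact lt_of_le_of_lt (hs_deg_mono G v (erase_subset _ _)) (hdBB v (mem_of_mem_erase hv))
  rcases hcase with ⟨X, hX, hXz, hXm⟩ | ⟨hnm, y2, hsolo2, hy12, hnadj⟩
  · refine hs_case1 G U C 𝒜 s f g v0 X z y1 h𝒜 hf hszA hz.1 hz.2 hzv hy1.1 hy1.2
      (hsoloU y1 hsolo) hX hXz ?_ (hterm' (f z) hsolo.2.1 X hX hXz) hg hgs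
    intro w hw hwX
    exact hXm w ((hAm w).2 ⟨hw, hwX ▸ hX⟩) hwX
  · have hy2 := (hBm y2).1 hsolo2.2.2.1
    have hzdeg : hsDeg G z (B.erase y1) < (C \ 𝒜).card := by
      have h1 := hs_pick G z A (𝒜.erase (f z)) f (by
        intro c hc
        rw [mem_erase] at hc
        exact hnm c hc.2 hc.1)
      rw [card_erase_of_mem hz.2] at h1
      have h2 := hsplit z hz.1
      have h3 : hsDeg G z (B.erase y1) + 1 = hsDeg G z B := by
        rw [hsDeg, hsDeg, filter_erase, card_erase_add_one]
        exact mem_filter.2 ⟨hy1B, hsolo.2.2.2.1⟩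
      have h4 : 0 < 𝒜.card := card_pos.2 ⟨_, hz.2⟩
      omega
    obtain ⟨Y, hY, hzY⟩ := hs_pick' G z (B.erase y1) (C \ 𝒜) g hzdeg
    obtain ⟨h, hh, hhs, hh1, X, hX, hhX⟩ := hs_case2 G U C 𝒜 s f g v0 Y z y1 y2 h𝒜 hf hszA hz.1 hz.2 hzv
      hv0𝒜 hy1.1 hy1.2 hy2.1 hy2.2 hy12 hnadj (hsoloU y1 hsolo) (hsoloU y2 hsolo2)
      (by
        intro X hX hXz hm
        obtain ⟨w, hw, hwX, hzw⟩ := hnm X hX hXz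
        exact hm w ((hAm w).1 hw).1 hwX hzw)
      (hreach _ hz.2) (hterm' (f z) hsolo.2.1) hg hgs hY hzY
    refine ihn _ ?_ h v0 Y hh hv0 (mem_sdiff.1 hY).1 hhs rfl
    rw [← hn]
    apply card_lt_card
    refine ⟨?_, fun hsub => ?_⟩
    · intro c hc
      rw [mem_filter] at hc
      rw [mem_sdiff]
      exact ⟨hc.1, fun h => hc.2 (hh1 c h)⟩
    · have := hsub hX
      rw [mem_filter] at this
      exact this.2 hhX

lemma hs_base (s : ℕ) (C : Finset κ) : ∀ U : Finset V, U.card = C.card * s → [Nonempty κ] →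
    ∃ f : V → κ, (∀ v ∈ U, f v ∈ C) ∧ ∀ e ∈ C, hsSize U f e = s := by
  induction C using Finset.induction_on with
  | empty =>
    intro U hU _
    have : U = ∅ := by simpa using hU
    subst this
    exact ⟨fun _ => Classical.arbitrary κ, by simp, by simp⟩
  | insert c C hc ih =>
    intro U hU _
    rw [card_insert_of_notMem hc, add_mul, one_mul] at hU
    obtain ⟨S, hS, hSc⟩ := exists_subset_card_eq (show s ≤ U.card by omega)
    obtain ⟨f, hf, hfs⟩ := ih (U \ S) (by rw [card_sdiff_of_subset hS]; omega)
    refine ⟨fun v => if v ∈ S then c else f v, ?_, ?_⟩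
    · intro v hv
      by_cases hvS : v ∈ S
      · simp [hvS]
      · simp only [hvS, if_false]
        exact mem_insert_of_mem (hf v (mem_sdiff.2 ⟨hv, hvS⟩))
    · intro e he
      by_cases hec : e = c
      · subst hec
        rw [← hSc, hsSize]
        congr 1
        ext v
        rw [mem_filter]
        by_cases hvS : v ∈ S
        · simp [hvS, hS hvS]
        · simp only [hvS, if_false, iff_false]
          rintro ⟨hv, h⟩
          exact hc (h ▸ hf v (mem_sdiff.2 ⟨hv, hvS⟩))
      · rw [← hfs e ((mem_insert.1 he).resolve_left hec), hsSize, hsSize]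
        congr 1
        ext v
        rw [mem_filter, mem_filter, mem_sdiff]
        by_cases hvS : v ∈ S
        · simp [hvS, Ne.symm hec]
        · simp [hvS]

/-- keep only the edges inside `T` -/
def hsRes (G : SimpleGraph V) (T : Finset V) : SimpleGraph V where
  Adj u v := G.Adj u v ∧ u ∈ T ∧ v ∈ T
  symm := ⟨fun _ _ h => ⟨h.1.symm, h.2.2, h.2.1⟩⟩
  loopless := ⟨fun _ h => h.1.ne rfl⟩

theorem hs_main [Nonempty κ] (s n : ℕ) : ∀ (G : SimpleGraph V) (U : Finset V) (C : Finset κ), U.card = n →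
    U.card = C.card * s → (∀ v ∈ U, hsDeg G v U < C.card) → HsEq G U C s := by
  induction n using Nat.strong_induction_on with
  | _ n ihn =>
  intro G U C hn hU hdeg
  have key : ∀ T : Finset V, T ⊆ U → HsEq (hsRes G T) U C s := by
    intro T
    induction T using Finset.induction_on with
    | empty =>
      intro _
      obtain ⟨f, hf, hfs⟩ := hs_base s C U hU
      refine ⟨f, ⟨hf, ?_⟩, hfs⟩
      intro u _ v _ h
      exact absurd h.2.1 (notMem_empty _)
    | insert u T hu ihT =>
      intro hsub
      obtain ⟨f, hf, hfs⟩ := ihT ((subset_insert _ _).trans hsub)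
      have huU : u ∈ U := hsub (mem_insert_self _ _)
      have hdeg' : ∀ v ∈ U, hsDeg (hsRes G (insert u T)) v U < C.card := by
        intro v hv
        refine lt_of_le_of_lt (card_le_card ?_) (hdeg v hv)
        intro w hw
        rw [mem_filter] at hw ⊢
        exact ⟨hw.1, hw.2.1⟩
      obtain ⟨d, hd, hdm⟩ := hs_pick' _ u U C f (hdeg' u huU)
      refine hs_near (hsRes G (insert u T)) U C s hdeg' ?_ _ (Function.update f u d) (f u) d
        ?_ (hf.1 u huU) hd ?_ rfl
      · intro U' C' h1 h2 h3
        exact ihn _ (hn ▸ h1) _ U' C' rfl h2 h3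
      · refine ⟨?_, ?_⟩
        · intro v hv
          by_cases hvu : v = u
          · subst hvu; rw [Function.update_self]; exact hd
          · rw [Function.update_of_ne hvu]; exact hf.1 v hv
        · intro v hv w hw hvw
          by_cases hvu : v = u
          · subst hvu
            rw [Function.update_self, Function.update_of_ne hvw.ne']
            exact fun h => hdm w hw h.symm hvw
          · rw [Function.update_of_ne hvu]
            by_cases hwu : w = u
            · subst hwu
              rw [Function.update_self]
              exact fun h => hdm v hv h hvw.symm
            · rw [Function.update_of_ne hwu]
              exact hf.2 v hv w hw ⟨hvw.1, (mem_insert.1 hvw.2.1).resolve_left hvu,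
                (mem_insert.1 hvw.2.2).resolve_left hwu⟩
      · intro e he
        rw [hs_size_update U f u huU d e, hfs e he]
  obtain ⟨f, hf, hfs⟩ := key U subset_rfl
  exact ⟨f, ⟨hf.1, fun u hu v hv h => hf.2 u hu v hv ⟨h, hu, hv⟩⟩, hfs⟩

end HS

/-- **Theorem (Hajnal–Szemerédi).** If `r ∣ n` and `δ(G) ≥ (1 - 1/r)n` for an
`n`-vertex graph `G`, then `G` has a `K_r`-factor: pairwise vertex-disjoint complete
subgraphs on `r` vertices covering every vertex. -/
theorem hajnal_szemeredi {V : Type*} [Fintype V]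
    (G : SimpleGraph V) [DecidableRel G.Adj]
    (r : ℕ) (hr : 1 ≤ r) (hdvd : r ∣ Fintype.card V)
    (hmin : ∀ v : V, (1 - 1 / (r : ℝ)) * (Fintype.card V) ≤ (G.degree v : ℝ)) :
    ∃ 𝒯 : Finset (Finset V),
      (∀ S ∈ 𝒯, S.card = r ∧ G.IsClique (S : Set V)) ∧
      ((𝒯 : Set (Finset V)).Pairwise fun S T => Disjoint S T) ∧
      ∀ v : V, ∃ S ∈ 𝒯, v ∈ S := by
  classical
  obtain ⟨k, hk⟩ := hdvd
  have hdeg : ∀ v ∈ (Finset.univ : Finset V),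
      hsDeg Gᶜ v Finset.univ < (Finset.range k).card := by
    intro v _
    have h1 : hsDeg Gᶜ v Finset.univ = Gᶜ.degree v := by
      rw [hsDeg, ← SimpleGraph.card_neighborFinset_eq_degree]
      congr 1
      ext w
      simp
    rw [h1, SimpleGraph.degree_compl, Finset.card_range, hk]
    have hr0 : (r : ℝ) ≠ 0 := by
      have : r ≠ 0 := by omega
      exact_mod_cast this
    have h2 := hmin v
    rw [hk] at h2
    push_cast at h2
    have h3 : (1 - 1 / (r : ℝ)) * (r * k) = r * k - k := by field_simp
    rw [h3] at h2
    have h4 : ((r * k : ℕ) : ℝ) ≤ ((G.degree v + k : ℕ) : ℝ) := by push_cast; linarith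
    have h5 : r * k ≤ G.degree v + k := by exact_mod_cast h4
    have h6 : 0 < k := by
      rcases Nat.eq_zero_or_pos k with h | h
      · subst h
        have := Fintype.card_pos_iff.2 ⟨v⟩
        omega
      · exact h
    omega
  obtain ⟨f, ⟨hf1, hf2⟩, hfs⟩ := hs_main (κ := ℕ) r _ Gᶜ Finset.univ (Finset.range k) rfl
    (by rw [Finset.card_univ, hk, Finset.card_range, mul_comm]) hdeg
  refine ⟨(Finset.range k).image (fun c => Finset.univ.filter (fun v => f v = c)), ?_, ?_, ?_⟩
  · intro S hS
    obtain ⟨c, hc, rfl⟩ := Finset.mem_image.1 hS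
    refine ⟨?_, ?_⟩
    · rw [← hfs c hc, hsSize]
      congr 1
      ext v
      simp
    · intro u hu v hv huv
      simp only [Finset.coe_filter, Finset.mem_univ, true_and, Set.mem_ofPred_eq] at hu hv
      by_contra h
      exact hf2 u (Finset.mem_univ _) v (Finset.mem_univ _)
        ((SimpleGraph.compl_adj G u v).2 ⟨huv, h⟩) (hu.trans hv.symm)
  · intro S hS T hT hST
    obtain ⟨c, hc, rfl⟩ := Finset.mem_image.1 (Finset.mem_coe.1 hS)
    obtain ⟨d, hd, rfl⟩ := Finset.mem_image.1 (Finset.mem_coe.1 hT)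
    rw [Finset.disjoint_left]
    intro v hv hv'
    simp only [Finset.mem_filter, Finset.mem_univ, true_and] at hv hv'
    apply hST
    rw [← hv, ← hv']
  · intro v
    exact ⟨Finset.univ.filter (fun w => f w = f v),
      Finset.mem_image.2 ⟨f v, hf1 v (Finset.mem_univ _), rfl⟩, by simp⟩
end
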